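/- Gromov's polynomial growth theorem: let G be a group generated by a finite symmetric set S containing the identity. If the growth function is polynomially bounded, i.e., there exist constants C > 0 and d such that the cardinality of the n-fold product set S^n = {s_1 s_2 ⋯ s_n : s_i ∈ S} is at most C·n^d for all n ≥ 1, then G has a nilpotent subgroup of finite index. -/

import Mathlib

/-!
The proof follows Kleiner's approach through harmonic functions. It rests on the claim
(`PolyGrowth.exists_virtual_surjection`) that an infinite finitely generated group `G` of
polynomial growth has a finite-index subgroup with a surjection onto `ℤ`.

*From the claim to the theorem.* Let `H → ℤ` be such a surjection. Its kernel is finitely generated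
and has growth of smaller degree, so by induction on the degree it is finite or contains an element
of infinite order with finite-index centralizer. A lift `t` of `1 ∈ ℤ` acts on the abelian groups
arising from the conjugates of that element; polynomial growth forces all eigenvalues of the action
into the unit disc, so Kronecker's theorem provides a nonzero vector fixed by a power of `t`.
Hence `G` itself contains an element `z` of infinite order with finite-index centralizer `C`
(`exists_centralizer_of_virtual_surjection`). The growth of `C / ⟨z⟩` has smaller degree, and a
central extension of a nilpotent group is nilpotent, so a second induction on the degree
(`virtually_nilpotent_of_centralizer`) finishes the proof.

*The claim.* Fix a finite symmetric generating set `S` containing `1`.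
* There is a nonconstant Lipschitz harmonic function on `G` (`exists_harmonic`). Run the discrete
  heat flow on `ℓ²(G)` from the point mass at `1`. If the Laplacian stayed comparable with the energy
  forever, the energy would decay exponentially, contradicting a polynomial lower bound. So at some
  times the flow is almost harmonic relative to its energy, and normalised matrix coefficients of the
  regular representation have a harmonic limit.
* Lipschitz harmonic functions vanishing at `1` form a finite-dimensional space
  (`exists_dim_bound`). A harmonic function with zero mean on all balls of a net decays strongly
  from a large ball to a smaller one, by the Poincaré and Caccioppoli inequalities. In a space of
  large dimension this makes the determinant of the `ℓ²` Gram form grow too fast with the radius.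
* `G` acts on this space by translations, isometrically for the Lipschitz seminorm. If the image of
  `G` is infinite, then elements close to `1` generate a nilpotent subgroup of finite index, because
  commutators of small isometries are much smaller and a long nontrivial commutator would produce
  too many group elements; an infinite finitely generated nilpotent group surjects onto `ℤ`
  (`PolyGrowth.exists_surjective_of_isometric`). If the image is finite, a nonconstant harmonic
  function restricts to a homomorphism to `ℝ` on the kernel, which is nontrivial by the maximum
  principle.
-/

open Pointwise
open scoped commutatorElement

/-! ### Polynomial growth -/

/-- `G` has growth of degree at most `d`: every finite subset `F` satisfies `|F ^ n| = O(n ^ d)`.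
Quantifying over all finite subsets makes the notion meaningful for groups that are not finitely
generated, and makes it pass to subgroups at once. -/
def PolyGrowth (d : ℕ) (G : Type*) [Group G] : Prop :=
  ∀ F : Set G, F.Finite → ∃ C : ℕ, ∀ n : ℕ, 1 ≤ n → (F ^ n).ncard ≤ C * n ^ d

lemma finite_set_pow {G : Type*} [Monoid G] {F : Set G} (hF : F.Finite) (n : ℕ) :
    (F ^ n).Finite := by
  induction n with
  | zero => simp
  | succ n ih => rw [pow_succ]; exact ih.mul hF

lemma PolyGrowth.of_injective {d : ℕ} {G K : Type*} [Group G] [Group K] (hG : PolyGrowth d G)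
    (f : K →* G) (hf : Function.Injective f) : PolyGrowth d K := by
  intro F hF
  obtain ⟨C, hC⟩ := hG (f '' F) (hF.image f)
  refine ⟨C, fun n hn => ?_⟩
  rw [← Set.ncard_image_of_injective (F ^ n) hf, Set.image_pow]
  exact hC n hn

lemma PolyGrowth.subgroup {d : ℕ} {G : Type*} [Group G] (hG : PolyGrowth d G)
    (H : Subgroup G) : PolyGrowth d H :=
  hG.of_injective H.subtype H.subtype_injective

lemma PolyGrowth.of_surjective {d : ℕ} {G Q : Type*} [Group G] [Group Q] (hG : PolyGrowth d G)
    (f : G →* Q) (hf : Function.Surjective f) : PolyGrowth d Q := by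
  intro F hF
  have hs : f '' (Function.surjInv hf '' F) = F := by
    rw [Set.image_image]
    simp [Function.surjInv_eq hf]
  obtain ⟨C, hC⟩ := hG (Function.surjInv hf '' F) (hF.image _)
  refine ⟨C, fun n hn => ?_⟩
  have h1 : F ^ n = f '' ((Function.surjInv hf '' F) ^ n) := by
    rw [Set.image_pow, hs]
  rw [h1]
  exact (Set.ncard_image_le (finite_set_pow (hF.image _) n)).trans (hC n hn)

/-- Any finite subset lies in some power of a symmetric generating set containing `1`. -/
lemma exists_subset_pow {G : Type*} [Group G] {S : Set G}
    (hgen : Subgroup.closure S = ⊤) (hsymm : ∀ s ∈ S, s⁻¹ ∈ S) (hone : (1 : G) ∈ S)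
    {F : Set G} (hF : F.Finite) : ∃ k : ℕ, F ⊆ S ^ k := by
  have hx : ∀ x : G, ∃ k : ℕ, x ∈ S ^ k := by
    intro x
    have hx : x ∈ Subgroup.closure S := by rw [hgen]; trivial
    induction hx using Subgroup.closure_induction with
    | mem x hx => exact ⟨1, by simpa using hx⟩
    | one => exact ⟨0, by simp⟩
    | mul x y _ _ hx hy =>
      obtain ⟨k, hk⟩ := hx
      obtain ⟨l, hl⟩ := hy
      exact ⟨k + l, by rw [pow_add]; exact Set.mul_mem_mul hk hl⟩
    | inv x _ hx =>
      obtain ⟨k, hk⟩ := hx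
      refine ⟨k, ?_⟩
      have hS : S⁻¹ = S := by
        ext s
        exact ⟨fun h => by simpa using hsymm _ (Set.mem_inv.1 h), fun h => Set.mem_inv.2 (hsymm _ h)⟩
      rw [← hS, inv_pow]
      exact Set.inv_mem_inv.2 hk
  induction F, hF using Set.Finite.induction_on with
  | empty => exact ⟨0, by simp⟩
  | @insert a F _ _ ih =>
    obtain ⟨k, hk⟩ := ih
    obtain ⟨l, hl⟩ := hx a
    refine ⟨max k l, ?_⟩
    rw [Set.insert_subset_iff]
    exact ⟨Set.pow_subset_pow_right hone (le_max_right _ _) hl,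
      hk.trans (Set.pow_subset_pow_right hone (le_max_left _ _))⟩

/-- The common core of the two degree reductions: if right multiplication by powers of `t` moves
`X ⊆ Y ^ n` to pairwise disjoint sets, then `n` disjoint copies of `X` fit into a ball of radius
`2n`. -/
lemma PolyGrowth.core {d : ℕ} {G : Type*} [Group G] (hG : PolyGrowth (d + 1) G)
    {Y : Set G} (hY : Y.Finite) (t : G) : ∃ C : ℕ, ∀ n : ℕ, 1 ≤ n → ∀ X ⊆ Y ^ n,
      (∀ x ∈ X, ∀ y ∈ X, ∀ i j : ℕ, x * t ^ i = y * t ^ j → x = y ∧ i = j) →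
        X.ncard ≤ C * n ^ d := by
  set F : Set G := Y ∪ {1, t} with hFdef
  have hF : F.Finite := hY.union (by simp)
  obtain ⟨C, hC⟩ := hG F hF
  refine ⟨C * 2 ^ (d + 1), fun n hn X hX hinj => ?_⟩
  have hXf : X.Finite := (finite_set_pow hY n).subset hX
  have htn : ∀ i ≤ n, t ^ i ∈ F ^ n := by
    intro i hi
    have h1 : (1 : G) ∈ F := by simp [hFdef]
    have h2 : t ∈ F := by simp [hFdef]
    exact Set.pow_subset_pow_right h1 hi (Set.pow_mem_pow h2)
  have hsub : (fun p : G × ℕ => p.1 * t ^ p.2) '' (X ×ˢ Set.Iio n) ⊆ F ^ (2 * n) := by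
    rintro _ ⟨⟨x, i⟩, ⟨hx, hi⟩, rfl⟩
    rw [two_mul, pow_add]
    exact Set.mul_mem_mul (Set.pow_subset_pow_left Set.subset_union_left (hX hx))
      (htn i (le_of_lt hi))
  have hcard := Set.ncard_le_ncard hsub (finite_set_pow hF _)
  rw [Set.InjOn.ncard_image, Set.ncard_prod] at hcard
  · have h2 : (Set.Iio n).ncard = n := by
      rw [Set.ncard_eq_toFinset_card']; simp
    rw [h2] at hcard
    have h3 := hcard.trans (hC (2 * n) (by omega))
    have h4 : X.ncard * n ≤ (C * 2 ^ (d + 1) * n ^ d) * n := by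
      calc X.ncard * n ≤ C * (2 * n) ^ (d + 1) := h3
        _ = _ := by ring
    exact Nat.le_of_mul_le_mul_right h4 (by omega)
  · rintro ⟨x, i⟩ ⟨hx, hi⟩ ⟨y, j⟩ ⟨hy, hj⟩ h
    obtain ⟨h1, h2⟩ := hinj x hx y hy i j h
    simp [h1, h2]

lemma PolyGrowth.ker {d : ℕ} {G : Type*} [Group G] (hG : PolyGrowth (d + 1) G)
    (φ : G →* Multiplicative ℤ) {t : G} (ht : φ t = Multiplicative.ofAdd 1) :
    PolyGrowth d φ.ker := by
  intro F hF
  obtain ⟨C, hC⟩ := hG.core (hF.image φ.ker.subtype) t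
  refine ⟨C, fun n hn => ?_⟩
  rw [← Set.ncard_image_of_injective (F ^ n) φ.ker.subtype_injective]
  refine hC n hn _ (by rw [Set.image_pow]) ?_
  rintro _ ⟨x, _, rfl⟩ _ ⟨y, _, rfl⟩ i j h
  have hx : φ x = 1 := x.2
  have hy : φ y = 1 := y.2
  have h1 := congrArg φ h
  simp only [map_mul, map_pow, ht, Subgroup.coe_subtype, hx, hy, one_mul] at h1
  have h2 : i = j := by
    have h3 := congrArg Multiplicative.toAdd h1
    simpa using h3
  subst h2
  exact ⟨mul_right_cancel h, rfl⟩

lemma PolyGrowth.quotient {d : ℕ} {G : Type*} [Group G] (hG : PolyGrowth (d + 1) G)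
    (z : G) (hz : ¬ IsOfFinOrder z) [(Subgroup.zpowers z).Normal] :
    PolyGrowth d (G ⧸ Subgroup.zpowers z) := by
  intro F hF
  set π := QuotientGroup.mk' (Subgroup.zpowers z)
  have hπ : Function.Surjective π := QuotientGroup.mk'_surjective _
  set Y := Function.surjInv hπ '' F with hY
  have hYF : π '' Y = F := by
    rw [hY, Set.image_image]
    simp [Function.surjInv_eq hπ]
  obtain ⟨C, hC⟩ := hG.core (hF.image (Function.surjInv hπ)) z
  refine ⟨C, fun n hn => ?_⟩
  have h1 : F ^ n = π '' (Y ^ n) := by rw [Set.image_pow, hYF]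
  obtain ⟨X, hXY, hX⟩ := Set.exists_subset_bijOn (Y ^ n) π
  rw [h1, ← hX.image_eq, hX.injOn.ncard_image]
  refine hC n hn X hXY ?_
  intro x hx y hy i j h
  have hz1 : π z = 1 := by
    simp [π]
  have h2 : x = y := by
    apply hX.injOn hx hy
    have := congrArg π h
    simpa [hz1] using this
  subst h2
  exact ⟨rfl, injective_pow_iff_not_isOfFinOrder.2 hz (mul_left_cancel h)⟩

lemma PolyGrowth.finite_of_zero {G : Type*} [Group G] [hfg : Group.FG G]
    (hG : PolyGrowth 0 G) : Finite G := by
  obtain ⟨S, hS⟩ := Group.fg_def.1 hfg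
  set F : Set G := (S : Set G) ∪ (S : Set G)⁻¹ ∪ {1} with hF
  have hFfin : F.Finite := (S.finite_toSet.union S.finite_toSet.inv).union (by simp)
  have hgen : Subgroup.closure F = ⊤ := by
    rw [eq_top_iff, ← hS]
    exact Subgroup.closure_mono (fun x hx => Or.inl (Or.inl hx))
  have hsymm : ∀ s ∈ F, s⁻¹ ∈ F := by
    rintro s ((h | h) | h)
    · exact Or.inl (Or.inr (by simpa using h))
    · exact Or.inl (Or.inl h)
    · right; simp only [Set.mem_singleton_iff] at h; simp [h]
  obtain ⟨C, hC⟩ := hG F hFfin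
  by_contra hinf
  rw [not_finite_iff_infinite] at hinf
  obtain ⟨T, hT⟩ := Infinite.exists_subset_card_eq G (C + 1)
  obtain ⟨k, hk⟩ := exists_subset_pow hgen hsymm (by simp [hF]) T.finite_toSet
  have h1 : (1 : G) ∈ F := by simp [hF]
  have h2 := Set.ncard_le_ncard (hk.trans (Set.pow_subset_pow_right h1 (Nat.le_succ k)))
    (finite_set_pow hFfin _)
  have h3 := hC (k + 1) (by omega)
  rw [Set.ncard_coe_finset, hT] at h2
  simp at h3
  change C + 1 ≤ (F ^ (k + 1)).ncard at h2
  omega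

/-- Polynomial growth of one symmetric generating set containing `1` gives it for all finite sets. -/
lemma polyGrowth_of_generators {G : Type*} [Group G] {S : Set G} (hSfin : S.Finite)
    (hgen : Subgroup.closure S = ⊤) (hsymm : ∀ s ∈ S, s⁻¹ ∈ S) (hone : (1 : G) ∈ S)
    (C : ℝ) (d : ℕ) (hgrowth : ∀ n : ℕ, 1 ≤ n → ((S ^ n).ncard : ℝ) ≤ C * (n : ℝ) ^ d) :
    PolyGrowth d G := by
  intro F hF
  obtain ⟨k, hk⟩ := exists_subset_pow hgen hsymm hone hF
  have hk' : F ⊆ S ^ (k + 1) := hk.trans (Set.pow_subset_pow_right hone (Nat.le_succ k))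
  refine ⟨⌈C⌉₊ * (k + 1) ^ d, fun n hn => ?_⟩
  have h1 : F ^ n ⊆ S ^ ((k + 1) * n) := by
    rw [pow_mul]; exact Set.pow_subset_pow_left hk'
  have h2 := Set.ncard_le_ncard h1 (finite_set_pow hSfin _)
  have h3 := hgrowth ((k + 1) * n) (Nat.mul_pos (Nat.succ_pos k) hn)
  have h4 : (((S ^ ((k + 1) * n)).ncard : ℕ) : ℝ) ≤ ((⌈C⌉₊ * (k + 1) ^ d * n ^ d : ℕ) : ℝ) := by
    refine h3.trans ?_
    push_cast
    rw [mul_pow, mul_assoc]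
    have := Nat.le_ceil C
    gcongr
  exact h2.trans (by exact_mod_cast h4)

/-- The products `x₀^ε₀ ⋯ x_{m-1}^ε_{m-1}` with `ε_j ∈ {0, 1}`, where `x_j = t ^ j * k * t ^ (-j)`. -/
def subProducts {G : Type*} [Group G] (t k : G) : ℕ → Set G
  | 0 => {1}
  | m + 1 => subProducts t k m ∪ (fun p => p * (t ^ m * k * (t ^ m)⁻¹)) '' subProducts t k m

/-- Subexponential growth forces a coincidence among the `2 ^ m` formal products
`x₀^ε₀ ⋯ x_{m-1}^ε_{m-1}`, as each becomes a word of length `m` in `t`, `k * t` after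
multiplication by `t ^ m`. -/
lemma PolyGrowth.exists_subProducts {d : ℕ} {G : Type*} [Group G] (hG : PolyGrowth d G)
    (t k : G) : ∃ m : ℕ, ∃ p ∈ subProducts t k m, ∃ q ∈ subProducts t k m,
      p = q * (t ^ m * k * (t ^ m)⁻¹) := by
  by_contra! hcon
  have hfin : ∀ m, (subProducts t k m).Finite := by
    intro m
    induction m with
    | zero => simp [subProducts]
    | succ m ih => exact ih.union (ih.image _)
  have hcard : ∀ m, (subProducts t k m).ncard = 2 ^ m := by
    intro m
    induction m with
    | zero => simp [subProducts]
    | succ m ih =>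
      rw [subProducts, Set.ncard_union_eq ?_ (hfin m) ((hfin m).image _),
        Set.ncard_image_of_injective _ (mul_left_injective _), ih, pow_succ]
      · ring
      · rw [Set.disjoint_left]
        rintro p hp ⟨q, hq, hqp⟩
        exact hcon m p hp q hq hqp.symm
  have hsub : ∀ m, (fun p => p * t ^ m) '' subProducts t k m ⊆ ({t, k * t} : Set G) ^ m := by
    intro m
    induction m with
    | zero => simp [subProducts]
    | succ m ih =>
      rintro _ ⟨p, hp | ⟨q, hq, rfl⟩, rfl⟩
      · have := Set.mul_mem_mul (ih ⟨p, hp, rfl⟩) (show t ∈ ({t, k * t} : Set G) by simp)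
        rw [← pow_succ] at this
        simpa [pow_succ, mul_assoc] using this
      · have := Set.mul_mem_mul (ih ⟨q, hq, rfl⟩) (show k * t ∈ ({t, k * t} : Set G) by simp)
        rw [← pow_succ] at this
        simpa [pow_succ, mul_assoc] using this
  have hF : ({t, k * t} : Set G).Finite := by simp
  obtain ⟨C, hC⟩ := hG _ hF
  have hle : ∀ m : ℕ, 1 ≤ m → 2 ^ m ≤ C * m ^ d := by
    intro m hm
    have h1 := Set.ncard_le_ncard (hsub m) (finite_set_pow hF m)
    rw [Set.ncard_image_of_injective _ (mul_left_injective _), hcard] at h1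
    exact h1.trans (hC m hm)
  have htend := tendsto_pow_const_div_const_pow_of_one_lt d (one_lt_two (α := ℝ))
  have hev := (htend.eventually (gt_mem_nhds (show (0 : ℝ) < 1 / (C + 1) by positivity)))
  obtain ⟨m, hm1, hm2⟩ := (hev.and (Filter.eventually_ge_atTop 1)).exists
  have h3 : (2 : ℝ) ^ m ≤ C * (m : ℝ) ^ d := by exact_mod_cast hle m hm2
  rw [div_lt_div_iff₀ (by positivity) (by positivity)] at hm1
  have : (0 : ℝ) ≤ (m : ℝ) ^ d := by positivity
  nlinarith

lemma subProducts_subset {G : Type*} [Group G] (t k : G) (m : ℕ) :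
    subProducts t k m ⊆
      Subgroup.closure ((fun j : ℕ => t ^ j * k * (t ^ j)⁻¹) '' Set.Iio m) := by
  induction m with
  | zero => simp [subProducts]
  | succ m ih =>
    have hmono : Subgroup.closure ((fun j : ℕ => t ^ j * k * (t ^ j)⁻¹) '' Set.Iio m) ≤
        Subgroup.closure ((fun j : ℕ => t ^ j * k * (t ^ j)⁻¹) '' Set.Iio (m + 1)) :=
      Subgroup.closure_mono (Set.image_mono (Set.Iio_subset_Iio (Nat.le_succ m)))
    rintro _ (hp | ⟨q, hq, rfl⟩)
    · exact hmono (ih hp)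
    · exact mul_mem (hmono (ih hq)) (Subgroup.subset_closure ⟨m, Nat.lt_succ_self m, rfl⟩)

lemma PolyGrowth.conj_mem_closure {d : ℕ} {G : Type*} [Group G] (hG : PolyGrowth d G)
    (t k : G) : ∃ m : ℕ, ∀ j : ℕ, t ^ j * k * (t ^ j)⁻¹ ∈
      Subgroup.closure ((fun j : ℕ => t ^ j * k * (t ^ j)⁻¹) '' Set.Iio m) := by
  obtain ⟨m, p, hp, q, hq, hpq⟩ := hG.exists_subProducts t k
  set Y := Subgroup.closure ((fun j : ℕ => t ^ j * k * (t ^ j)⁻¹) '' Set.Iio m) with hY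
  have hm : t ^ m * k * (t ^ m)⁻¹ ∈ Y := by
    have : t ^ m * k * (t ^ m)⁻¹ = q⁻¹ * p := by rw [hpq]; group
    rw [this]
    exact mul_mem (inv_mem (subProducts_subset t k m hq)) (subProducts_subset t k m hp)
  have hstep : ∀ y ∈ Y, t * y * t⁻¹ ∈ Y := by
    intro y hy
    have : Y ≤ Y.comap (MulAut.conj t).toMonoidHom := by
      rw [hY, Subgroup.closure_le, ← hY]
      rintro _ ⟨j, hj, rfl⟩
      have h1 : t * (t ^ j * k * (t ^ j)⁻¹) * t⁻¹ = t ^ (j + 1) * k * (t ^ (j + 1))⁻¹ := by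
        rw [pow_succ']; group
      change t * (t ^ j * k * (t ^ j)⁻¹) * t⁻¹ ∈ Y
      rw [h1]
      rcases Nat.lt_or_ge (j + 1) m with h | h
      · exact Subgroup.subset_closure ⟨j + 1, h, rfl⟩
      · have : j + 1 = m := le_antisymm hj h
        rw [this]; exact hm
    exact this hy
  refine ⟨m, fun j => ?_⟩
  induction j with
  | zero =>
    rcases Nat.eq_zero_or_pos m with h | h
    · rw [h] at hm; exact hm
    · exact Subgroup.subset_closure ⟨0, h, rfl⟩
  | succ j ih =>
    have h1 : t * (t ^ j * k * (t ^ j)⁻¹) * t⁻¹ = t ^ (j + 1) * k * (t ^ (j + 1))⁻¹ := by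
      rw [pow_succ']; group
    rw [← h1]; exact hstep _ ih

/-- In a group of polynomial growth, the conjugates of `k` under all powers of `t` generate a
finitely generated group. -/
lemma PolyGrowth.exists_conj_finite {d : ℕ} {G : Type*} [Group G] (hG : PolyGrowth d G)
    (t k : G) : ∃ J : Finset ℤ, ∀ j : ℤ, t ^ j * k * (t ^ j)⁻¹ ∈
      Subgroup.closure ((fun j : ℤ => t ^ j * k * (t ^ j)⁻¹) '' (J : Set ℤ)) := by
  obtain ⟨m, hm⟩ := hG.conj_mem_closure t k
  obtain ⟨n, hn⟩ := hG.conj_mem_closure t⁻¹ k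
  refine ⟨Finset.Icc (-(n : ℤ)) m, fun j => ?_⟩
  obtain ⟨i, rfl | rfl⟩ := j.eq_nat_or_neg
  · have h := hm i
    rw [zpow_natCast]
    refine Subgroup.closure_mono ?_ h
    rintro _ ⟨l, hl, rfl⟩
    refine ⟨l, ?_, by simp⟩
    have : l < m := hl
    simp; omega
  · have h := hn i
    rw [zpow_neg, zpow_natCast, ← inv_pow]
    refine Subgroup.closure_mono ?_ h
    rintro _ ⟨l, hl, rfl⟩
    refine ⟨-l, ?_, by simp⟩
    have : l < n := hl
    simp; omega

/-- The kernel of a homomorphism from a finitely generated group of polynomial growth onto `ℤ` is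
finitely generated. -/
lemma PolyGrowth.fg_ker {d : ℕ} {G : Type*} [Group G] [hfg : Group.FG G] (hG : PolyGrowth d G)
    (φ : G →* Multiplicative ℤ) {t : G} (ht : φ t = Multiplicative.ofAdd 1) :
    Group.FG φ.ker := by
  obtain ⟨S, hS⟩ := Group.fg_def.1 hfg
  choose J hJ using fun k => hG.exists_conj_finite t k
  set a : G → ℤ := fun g => Multiplicative.toAdd (φ g) with ha
  have haφ : ∀ g, φ (t ^ a g) = φ g := by
    intro g
    rw [map_zpow, ht, ← ofAdd_zsmul]
    simp [ha]
  -- the kernel is generated by the conjugates under `t` of the `s * t ^ (-a s)`, `s ∈ S`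
  set Z : Set G := ⋃ s ∈ S, (fun j : ℤ => t ^ j * (s * (t ^ a s)⁻¹) * (t ^ j)⁻¹) ''
    (J (s * (t ^ a s)⁻¹) : Set ℤ) with hZ
  have hZfin : Z.Finite := by
    refine S.finite_toSet.biUnion fun s _ => (Finset.finite_toSet _).image _
  set Y := Subgroup.closure Z with hY
  have hgens : ∀ s ∈ S, ∀ j : ℤ, t ^ j * (s * (t ^ a s)⁻¹) * (t ^ j)⁻¹ ∈ Y := by
    intro s hs j
    refine Subgroup.closure_mono ?_ (hJ (s * (t ^ a s)⁻¹) j)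
    exact Set.subset_biUnion_of_mem (u := fun s => (fun j : ℤ => t ^ j * (s * (t ^ a s)⁻¹) *
      (t ^ j)⁻¹) '' (J (s * (t ^ a s)⁻¹) : Set ℤ)) hs
  have hconj : ∀ i : ℤ, ∀ y ∈ Y, t ^ i * y * (t ^ i)⁻¹ ∈ Y := by
    intro i y hy
    have : Y ≤ Y.comap (MulAut.conj (t ^ i)).toMonoidHom := by
      rw [hY, Subgroup.closure_le, ← hY]
      intro x hx
      rw [hZ] at hx
      simp only [Set.mem_iUnion] at hx
      obtain ⟨s, hs, j, _, rfl⟩ := hx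
      change t ^ i * (t ^ j * (s * (t ^ a s)⁻¹) * (t ^ j)⁻¹) * (t ^ i)⁻¹ ∈ Y
      have := hgens s hs (i + j)
      convert this using 1
      rw [zpow_add]; group
    exact this hy
  have hall : ∀ g : G, g * (t ^ a g)⁻¹ ∈ Y := by
    intro g
    have hg : g ∈ Subgroup.closure (S : Set G) := by rw [hS]; trivial
    induction hg using Subgroup.closure_induction with
    | mem s hs => simpa using hgens s hs 0
    | one => simp [ha]
    | mul x y _ _ hx hy =>
      have h := mul_mem hx (hconj (a x) _ hy)
      have hadd : a (x * y) = a x + a y := by simp [ha]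
      rw [hadd, zpow_add]
      convert h using 1
      group
    | inv x _ hx =>
      have h := hconj (-(a x)) _ (inv_mem hx)
      have hneg : a x⁻¹ = -(a x) := by simp [ha]
      rw [hneg]
      convert h using 1
      group
  have hYker : Y = φ.ker := by
    apply le_antisymm
    · rw [hY, Subgroup.closure_le]
      intro x hx
      rw [hZ] at hx
      simp only [Set.mem_iUnion] at hx
      obtain ⟨s, hs, j, _, rfl⟩ := hx
      change φ _ = 1
      simp only [map_mul, map_inv, haφ]
      simp
    · intro g hg
      have h := hall g
      have : a g = 0 := by
        have : φ g = 1 := hg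
        simp [ha, this]
      simpa [this] using h
  rw [← hYker, Group.fg_iff_subgroup_fg]
  exact (Subgroup.fg_iff _).2 ⟨Z, rfl, hZfin⟩

/-! ### Automorphisms of abelian groups inside a group of polynomial growth -/

/-- An injective endomorphism of a lattice all of whose complex eigenvalues lie in the closed unit
disc has a nonzero periodic vector, by Kronecker's theorem on algebraic integers. -/
lemma exists_periodic_of_eigenvalues {Q : Type*} [AddCommGroup Q] [Module.Free ℤ Q]
    [Module.Finite ℤ Q] [Nontrivial Q] (T : Q →ₗ[ℤ] Q) (hT : Function.Injective T)
    (heig : ∀ (φ : Q →+ ℂ) (μ : ℂ), φ ≠ 0 → (∀ q, φ (T q) = μ * φ q) → ‖μ‖ ≤ 1) :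
    ∃ q : Q, q ≠ 0 ∧ ∃ p : ℕ, 0 < p ∧ (T ^ p) q = q := by
  classical
  set b := Module.Free.chooseBasis ℤ Q
  set M := LinearMap.toMatrix b b T with hM
  set f := Int.castRingHom ℂ
  set N := M.map f with hN
  have hPN : N.charpoly = M.charpoly.map f := by rw [hN, Matrix.charpoly_map]
  -- every complex root of the characteristic polynomial has a left eigenvector
  have hroot : ∀ μ : ℂ, N.charpoly.IsRoot μ → ∃ v, v ≠ 0 ∧ Matrix.vecMul v N = μ • v := by
    intro μ hμ
    rw [Polynomial.IsRoot, Matrix.eval_charpoly] at hμ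
    obtain ⟨v, hv, hv'⟩ := Matrix.exists_vecMul_eq_zero_iff.2 hμ
    refine ⟨v, hv, ?_⟩
    rw [Matrix.vecMul_sub, sub_eq_zero] at hv'
    rw [← hv']
    ext i
    simp [Matrix.scalar_apply, Matrix.vecMul_diagonal, mul_comm]
  have hnorm : ∀ μ : ℂ, N.charpoly.IsRoot μ → ‖μ‖ ≤ 1 := by
    intro μ hμ
    obtain ⟨v, hv, hv'⟩ := hroot μ hμ
    let φ : Q →+ ℂ :=
      { toFun := fun q => v ⬝ᵥ (fun i => ((b.repr q i : ℤ) : ℂ))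
        map_zero' := by simp [dotProduct]
        map_add' := by
          intro x y
          rw [← dotProduct_add]
          congr 1
          ext i
          simp }
    refine heig φ μ ?_ ?_
    · intro h0
      apply hv
      ext i
      have := DFunLike.congr_fun h0 (b i)
      simpa [φ, dotProduct, Finsupp.single_apply] using this
    · intro q
      have h1 : (fun i => ((b.repr (T q) i : ℤ) : ℂ)) =
          N.mulVec (fun i => ((b.repr q i : ℤ) : ℂ)) := by
        ext i
        have := congrFun (LinearMap.toMatrix_mulVec_repr b b T q) i
        rw [← this]
        simp [Matrix.mulVec, dotProduct, hN, f, hM]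
      change v ⬝ᵥ (fun i => ((b.repr (T q) i : ℤ) : ℂ)) = μ * (v ⬝ᵥ _)
      rw [h1, Matrix.dotProduct_mulVec, hv', smul_dotProduct, smul_eq_mul]
  have hmonic : N.charpoly.Monic := N.charpoly_monic
  have hdeg : N.charpoly.degree ≠ 0 := by
    rw [Matrix.charpoly_degree_eq_dim]
    have : Nonempty (Module.Free.ChooseBasisIndex ℤ Q) := b.index_nonempty
    simp
  obtain ⟨μ, hμ⟩ := IsAlgClosed.exists_root N.charpoly hdeg
  have hμ0 : μ ≠ 0 := by
    rintro rfl
    rw [Polynomial.IsRoot, Matrix.eval_charpoly] at hμ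
    have hdet : M.det = 0 := by
      have h1 : N.det = 0 := by
        have : (-N).det = 0 := by simpa using hμ
        rw [Matrix.det_neg] at this
        simpa using this
      have h2 : f M.det = 0 := by rw [RingHom.map_det]; exact h1
      exact Int.cast_injective (α := ℂ) (by simpa [f] using h2)
    obtain ⟨w, hw, hw'⟩ := Matrix.exists_mulVec_eq_zero_iff.2 hdet
    have h3 : T (b.equivFun.symm w) = 0 := by
      apply b.repr.injective
      ext i
      rw [← LinearMap.toMatrix_mulVec_repr b b T]
      have : (fun i => b.repr (b.equivFun.symm w) i) = w := by
        ext i; exact congrFun (b.equivFun.apply_symm_apply w) i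
      change (M.mulVec (fun i => b.repr (b.equivFun.symm w) i)) i = _
      rw [this, hw']; simp
    have h4 : b.equivFun.symm w = 0 := hT (by rw [h3, map_zero])
    exact hw ((LinearEquiv.map_eq_zero_iff _).1 h4)
  have hmahler : (M.charpoly.map f).mahlerMeasure = 1 := by
    rw [← hPN, Polynomial.mahlerMeasure_eq_leadingCoeff_mul_prod_roots, hmonic.leadingCoeff]
    have : (N.charpoly.roots.map fun a => max 1 ‖a‖) = N.charpoly.roots.map fun _ => 1 := by
      apply Multiset.map_congr rfl
      intro a ha
      exact max_eq_left (hnorm a (Polynomial.isRoot_of_mem_roots ha))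
    rw [this]; simp
  obtain ⟨p, hp, hμp⟩ := Polynomial.pow_eq_one_of_mahlerMeasure_eq_one hmahler hμ0 (by
    rw [Polynomial.mem_aroots', Polynomial.aeval_def, ← Polynomial.eval_map]
    refine ⟨?_, ?_⟩
    · exact (hPN ▸ hmonic.ne_zero)
    · have := hμ; rw [hPN] at this; exact this)
  obtain ⟨v, hv, hv'⟩ := hroot μ hμ
  have hpow : ∀ k : ℕ, Matrix.vecMul v (N ^ k) = μ ^ k • v := by
    intro k
    induction k with
    | zero => simp
    | succ k ih => rw [pow_succ, ← Matrix.vecMul_vecMul, ih, Matrix.smul_vecMul, hv', smul_smul,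
        pow_succ]
  have hdet : (M ^ p - 1).det = 0 := by
    have h1 : (N ^ p - 1).det = 0 := by
      apply Matrix.exists_vecMul_eq_zero_iff.1
      exact ⟨v, hv, by rw [Matrix.vecMul_sub, hpow, hμp]; simp⟩
    have h2 : f (M ^ p - 1).det = 0 := by
      rw [RingHom.map_det]
      rw [map_sub, map_pow, map_one]; exact h1
    exact Int.cast_injective (α := ℂ) (by simpa [f] using h2)
  obtain ⟨w, hw, hw'⟩ := Matrix.exists_mulVec_eq_zero_iff.2 hdet
  refine ⟨b.equivFun.symm w, fun h => hw ((LinearEquiv.map_eq_zero_iff _).1 h), p, hp, ?_⟩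
  rw [Matrix.sub_mulVec, sub_eq_zero, Matrix.one_mulVec] at hw'
  have hMp : LinearMap.toMatrix b b (T ^ p) = M ^ p := by
    rw [hM]; exact (LinearMap.toMatrix_pow b T p).symm
  apply b.repr.injective
  ext i
  rw [← LinearMap.toMatrix_mulVec_repr b b (T ^ p), hMp]
  have h5 : (fun i => b.repr (b.equivFun.symm w) i) = w := by
    ext i; exact congrFun (b.equivFun.apply_symm_apply w) i
  change ((M ^ p).mulVec (fun i => b.repr (b.equivFun.symm w) i)) i = _
  rw [h5, hw', ← congrFun h5 i]

/-- If `t` scales an additive character `Ψ` of `A` by `μ` with `‖μ‖ > 1`, the products in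
`subProducts` (for a power of `t`) are separated by `Ψ`, contradicting polynomial growth. -/
lemma PolyGrowth.norm_le_one {d : ℕ} {G : Type*} [Group G] (hG : PolyGrowth d G)
    (A : Subgroup G) (t : G) (ht : ∀ a ∈ A, t * a * t⁻¹ ∈ A) (Ψ : G → ℂ)
    (hadd : ∀ a ∈ A, ∀ b ∈ A, Ψ (a * b) = Ψ a + Ψ b) (μ : ℂ)
    (hμ : ∀ a ∈ A, Ψ (t * a * t⁻¹) = μ * Ψ a) {a : G} (ha : a ∈ A) (hΨa : Ψ a ≠ 0) :
    ‖μ‖ ≤ 1 := by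
  by_contra! hcon
  obtain ⟨e, he⟩ := pow_unbounded_of_one_lt 2 hcon
  have hconj : ∀ j : ℕ, t ^ j * a * (t ^ j)⁻¹ ∈ A ∧ Ψ (t ^ j * a * (t ^ j)⁻¹) = μ ^ j * Ψ a := by
    intro j
    induction j with
    | zero => simpa using ha
    | succ j ih =>
      have h1 : t ^ (j + 1) * a * (t ^ (j + 1))⁻¹ = t * (t ^ j * a * (t ^ j)⁻¹) * t⁻¹ := by
        rw [pow_succ']; group
      rw [h1]
      exact ⟨ht _ ih.1, by rw [hμ _ ih.1, ih.2, pow_succ']; ring⟩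
  have hx : ∀ m : ℕ, (t ^ e) ^ m * a * ((t ^ e) ^ m)⁻¹ ∈ A ∧
      Ψ ((t ^ e) ^ m * a * ((t ^ e) ^ m)⁻¹) = (μ ^ e) ^ m * Ψ a := by
    intro m
    rw [← pow_mul, ← pow_mul]; exact hconj _
  have hmem : ∀ m, ∀ p ∈ subProducts (t ^ e) a m, p ∈ A := by
    intro m
    induction m with
    | zero => simp [subProducts, one_mem]
    | succ m ih =>
      rintro _ (hp | ⟨q, hq, rfl⟩)
      · exact ih _ hp
      · exact mul_mem (ih _ hq) (hx m).1
  set L := ‖μ‖ ^ e with hL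
  have hpos : 0 < ‖Ψ a‖ := norm_pos_iff.2 hΨa
  have hbound : ∀ m, ∀ p ∈ subProducts (t ^ e) a m, ∀ q ∈ subProducts (t ^ e) a m,
      ‖Ψ p - Ψ q‖ ≤ (L ^ m - 1) * ‖Ψ a‖ := by
    intro m
    induction m with
    | zero => simp [subProducts]
    | succ m ih =>
      have hxm : ‖(μ ^ e) ^ m * Ψ a‖ = L ^ m * ‖Ψ a‖ := by simp [hL]
      have hLm : 0 < L ^ m := by positivity
      have hLs : L ^ m - 1 + L ^ m ≤ L ^ (m + 1) - 1 := by rw [pow_succ]; nlinarith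
      have key : ∀ p ∈ subProducts (t ^ e) a m, ∀ q ∈ subProducts (t ^ e) a m, ∀ c : ℂ,
          ‖c‖ ≤ L ^ m * ‖Ψ a‖ → ‖Ψ p - Ψ q + c‖ ≤ (L ^ (m + 1) - 1) * ‖Ψ a‖ := by
        intro p hp q hq c hc
        have h1 := norm_add_le (Ψ p - Ψ q) c
        have h2 := ih p hp q hq
        nlinarith
      rintro _ (hp | ⟨p, hp, rfl⟩) _ (hq | ⟨q, hq, rfl⟩)
      · have := key _ hp _ hq 0 (by simp; positivity)
        simpa using this
      · have := key _ hp _ hq (-((μ ^ e) ^ m * Ψ a)) (by rw [norm_neg, hxm])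
        rw [hadd _ (hmem m _ hq) _ (hx m).1, (hx m).2]
        convert this using 2; ring
      · have := key _ hp _ hq ((μ ^ e) ^ m * Ψ a) (by rw [hxm])
        rw [hadd _ (hmem m _ hp) _ (hx m).1, (hx m).2]
        convert this using 2; ring
      · have := key _ hp _ hq 0 (by simp; positivity)
        rw [hadd _ (hmem m _ hp) _ (hx m).1, hadd _ (hmem m _ hq) _ (hx m).1]
        convert this using 2; ring
  obtain ⟨m, p, hp, q, hq, hpq⟩ := hG.exists_subProducts (t ^ e) a
  have h1 := hbound m p hp q hq
  rw [hpq, hadd _ (hmem m _ hq) _ (hx m).1, (hx m).2, add_sub_cancel_left] at h1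
  have hxm : ‖(μ ^ e) ^ m * Ψ a‖ = L ^ m * ‖Ψ a‖ := by simp [hL]
  rw [hxm] at h1
  nlinarith

/-- In a group of polynomial growth, an infinite finitely generated abelian subgroup mapped into
itself by conjugation by `t` contains an element of infinite order commuting with some positive
power of `t`. -/
lemma PolyGrowth.exists_commute {d : ℕ} {G : Type*} [Group G] (hG : PolyGrowth d G)
    (A : Subgroup G) (hfg : A.FG) (hcomm : ∀ a ∈ A, ∀ b ∈ A, a * b = b * a) (hinf : Infinite A)
    (t : G) (ht : ∀ a ∈ A, t * a * t⁻¹ ∈ A) :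
    ∃ a ∈ A, ¬ IsOfFinOrder a ∧ ∃ p : ℕ, 0 < p ∧ Commute (t ^ p) a := by
  let _ : CommGroup A := { (inferInstance : Group A) with
    mul_comm := fun a b => Subtype.ext (hcomm a a.2 b b.2) }
  have : Group.FG A := (Group.fg_iff_subgroup_fg A).2 hfg
  let τ : A →* A := ((MulAut.conj t).toMonoidHom.comp A.subtype).codRestrict A
    (fun a => by simpa using ht a a.2)
  have hτ : ∀ a : A, ((τ a : A) : G) = t * a * t⁻¹ := fun a => rfl
  have hτinj : Function.Injective τ := by
    intro a b h
    have := congrArg (Subtype.val) h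
    rw [hτ, hτ] at this
    exact Subtype.ext (by simpa using this)
  let M := Additive A
  have : Module.Finite ℤ M := Module.Finite.iff_addGroup_fg.2 inferInstance
  let τ' : M →ₗ[ℤ] M := (MonoidHom.toAdditive τ).toIntLinearMap
  have hτ'inj : Function.Injective τ' := fun a b h => hτinj h
  let D := Submodule.torsion ℤ M
  have hD : D ≤ D.comap τ' := by
    intro x hx
    obtain ⟨c, hc⟩ := (Submodule.mem_torsion_iff x).1 hx
    refine (Submodule.mem_torsion_iff _).2 ⟨c, ?_⟩
    have : τ' (c • x) = 0 := by rw [hc, map_zero]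
    rw [← this]; exact (τ'.map_smul (c : ℤ) x).symm
  let T : (M ⧸ D) →ₗ[ℤ] (M ⧸ D) := D.mapQ D τ' hD
  have hTinj : Function.Injective T := by
    rw [injective_iff_map_eq_zero]
    intro q
    obtain ⟨x, rfl⟩ := D.mkQ_surjective q
    intro h
    have h1 : τ' x ∈ D := by
      rw [← Submodule.Quotient.mk_eq_zero]; exact h
    obtain ⟨c, hc⟩ := (Submodule.mem_torsion_iff _).1 h1
    have h2 : x ∈ D := by
      refine (Submodule.mem_torsion_iff _).2 ⟨c, ?_⟩
      apply hτ'inj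
      rw [map_zero, ← hc]; exact (τ'.map_smul (c : ℤ) x)
    rw [Submodule.mkQ_apply, Submodule.Quotient.mk_eq_zero]; exact h2
  have hof : ∀ a : A, IsOfFinOrder a → Additive.ofMul a ∈ D := by
    intro a ha
    obtain ⟨n, hn, hn'⟩ := isOfFinOrder_iff_pow_eq_one.1 ha
    refine (Submodule.mem_torsion_iff _).2 ⟨⟨n, ?_⟩, ?_⟩
    · exact mem_nonZeroDivisors_of_ne_zero (by positivity)
    · change (n : ℤ) • Additive.ofMul a = 0
      rw [natCast_zsmul, ← ofMul_pow, hn', ofMul_one]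
  have hof' : ∀ x ∈ D, ∃ n : ℕ, 0 < n ∧ n • x = 0 := by
    intro x hx
    obtain ⟨⟨c, hc0⟩, hc⟩ := (Submodule.mem_torsion_iff x).1 hx
    have hc' : c • x = 0 := hc
    have hc1 : c ≠ 0 := nonZeroDivisors.ne_zero hc0
    refine ⟨c.natAbs, Int.natAbs_pos.2 hc1, ?_⟩
    rw [← natCast_zsmul]
    rcases Int.natAbs_eq c with h | h
    · rw [← h]; exact hc'
    · rw [h, neg_smul, neg_eq_zero] at hc'; exact hc'
  have : Nontrivial (M ⧸ D) := by
    rw [Submodule.Quotient.nontrivial_iff]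
    intro htop
    have htors : IsMulTorsion A := by
      intro a
      obtain ⟨n, hn, hn'⟩ := hof' (Additive.ofMul a) (by rw [htop]; trivial)
      exact isOfFinOrder_iff_pow_eq_one.2 ⟨n, hn, hn'⟩
    have := CommGroup.finite_of_fg_isMulTorsion A htors
    exact not_finite A
  obtain ⟨q, hq0, p, hp, hq⟩ := exists_periodic_of_eigenvalues T hTinj (by
    intro φ μ hφ hφT
    classical
    obtain ⟨q, hq⟩ : ∃ q, φ q ≠ 0 := by
      by_contra! h
      exact hφ (AddMonoidHom.ext h)
    obtain ⟨x, rfl⟩ := D.mkQ_surjective q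
    let Ψ : G → ℂ := fun g => if h : g ∈ A then φ (D.mkQ (Additive.ofMul ⟨g, h⟩)) else 0
    have hΨ : ∀ a : A, Ψ a = φ (D.mkQ (Additive.ofMul a)) := by
      intro a; simp [Ψ]
    refine hG.norm_le_one A t ht Ψ ?_ μ ?_ (a := (x.toMul : A)) (x.toMul).2 ?_
    · intro a ha b hb
      have := hΨ (⟨a, ha⟩ * ⟨b, hb⟩)
      have h1 := hΨ ⟨a, ha⟩
      have h2 := hΨ ⟨b, hb⟩
      simp only [ofMul_mul, map_add] at this
      rw [← h1, ← h2] at this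
      exact this
    · intro a ha
      have h1 := hΨ (τ ⟨a, ha⟩)
      have h2 := hΨ ⟨a, ha⟩
      have h3 := hφT (D.mkQ (Additive.ofMul ⟨a, ha⟩))
      rw [← h2] at h3
      rw [← h3]
      exact h1
    · rw [hΨ]; exact hq)
  obtain ⟨x, rfl⟩ := D.mkQ_surjective q
  have hTp : ∀ n : ℕ, (T ^ n) (D.mkQ x) = D.mkQ ((τ' ^ n) x) := by
    intro n
    induction n with
    | zero => simp
    | succ n ih => rw [pow_succ', pow_succ', Module.End.mul_apply, ih]; rfl
  have h1 : (τ' ^ p) x - x ∈ D := by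
    rw [← Submodule.Quotient.mk_eq_zero, Submodule.Quotient.mk_sub, sub_eq_zero]
    rw [hTp] at hq; exact hq
  obtain ⟨n, hn, hnx⟩ := hof' _ h1
  set y : A := (n • x).toMul with hy
  have hyfix : (τ' ^ p) (n • x) = n • x := by
    rw [smul_sub, sub_eq_zero] at hnx
    rw [map_nsmul]; exact hnx
  have hτp : ∀ (k : ℕ) (z : M), (((τ' ^ k) z).toMul : A) = t ^ k * (z.toMul : A) * (t ^ k)⁻¹ := by
    intro k
    induction k with
    | zero => intro z; simp
    | succ k ih =>
      intro z
      rw [pow_succ', Module.End.mul_apply]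
      change t * (((τ' ^ k) z).toMul : A) * t⁻¹ = _
      rw [ih, pow_succ']; group
  refine ⟨y, y.2, ?_, p, hp, ?_⟩
  · intro hfin
    apply hq0
    rw [Submodule.mkQ_apply, Submodule.Quotient.mk_eq_zero]
    have h2 : IsOfFinOrder y := by
      rwa [← Submonoid.isOfFinOrder_coe] at *
    have h3 := hof y h2
    obtain ⟨k, hk, hk'⟩ := hof' _ h3
    refine (Submodule.mem_torsion_iff _).2 ⟨⟨(k * n : ℕ), ?_⟩, ?_⟩
    · exact mem_nonZeroDivisors_of_ne_zero (by positivity)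
    · change ((k * n : ℕ) : ℤ) • x = 0
      rw [natCast_zsmul, mul_smul]; exact hk'
  · have h2 := hτp p (n • x)
    rw [hyfix] at h2
    exact (eq_mul_inv_iff_mul_eq.1 h2).symm

/-! ### Elements with finite-index centralizer -/

/-- A subgroup meeting the kernel of `φ : G → ℤ` in finite index and containing a positive power of
a lift of `1` has finite index. -/
lemma finiteIndex_of_relIndex_ker {G : Type*} [Group G] (φ : G →* Multiplicative ℤ) {t : G}
    (ht : φ t = Multiplicative.ofAdd 1) {C : Subgroup G} (hC : C.relIndex φ.ker ≠ 0)
    {p : ℕ} (hp : 0 < p) (htp : t ^ p ∈ C) : C.FiniteIndex := by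
  have hfin : (C.subgroupOf φ.ker).FiniteIndex := ⟨hC⟩
  have hfq : Finite (φ.ker ⧸ C.subgroupOf φ.ker) := inferInstance
  rw [Subgroup.finiteIndex_iff_finite_quotient]
  let f : Fin p × (φ.ker ⧸ C.subgroupOf φ.ker) → G ⧸ C :=
    fun x => QuotientGroup.mk (t ^ (x.1 : ℕ) * (x.2.out : φ.ker))
  refine Finite.of_surjective f ?_
  intro q
  obtain ⟨g, rfl⟩ := QuotientGroup.mk_surjective q
  set n : ℤ := Multiplicative.toAdd (φ g) with hn
  have hpz : (0 : ℤ) < p := by exact_mod_cast hp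
  have hr0 := Int.emod_nonneg n hpz.ne'
  have hr1 := Int.emod_lt_of_pos n hpz
  have hφt : ∀ j : ℤ, Multiplicative.toAdd (φ (t ^ j)) = j := by
    intro j; rw [map_zpow, ht]; simp
  have hk : (t ^ (n % p))⁻¹ * g * (t ^ ((p : ℤ) * (n / p)))⁻¹ ∈ φ.ker := by
    rw [MonoidHom.mem_ker]
    apply Multiplicative.toAdd.injective
    rw [map_mul φ, map_mul φ, map_inv φ, map_inv φ, toAdd_mul, toAdd_mul, toAdd_inv, toAdd_inv, hφt, hφt,
      ← hn, toAdd_one]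
    have := Int.emod_add_mul_ediv n p
    omega
  set k : φ.ker := ⟨_, hk⟩ with hkdef
  refine ⟨(⟨(n % p).toNat, by omega⟩, QuotientGroup.mk k), ?_⟩
  have hout : k⁻¹ * (QuotientGroup.mk k : φ.ker ⧸ C.subgroupOf φ.ker).out ∈
      C.subgroupOf φ.ker := by
    rw [← QuotientGroup.eq, QuotientGroup.out_eq']
  rw [Subgroup.mem_subgroupOf] at hout
  simp only [f]
  symm
  rw [QuotientGroup.eq]
  have htr : t ^ (n % p).toNat = t ^ (n % p) := by
    rw [← zpow_natCast, Int.toNat_of_nonneg hr0]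
  have hpow : t ^ ((p : ℤ) * (n / p)) ∈ C := by
    rw [zpow_mul, zpow_natCast]; exact C.zpow_mem htp _
  rw [htr]
  have := C.mul_mem (C.inv_mem hpow) hout
  convert this using 1
  simp [hkdef, mul_assoc]

lemma relIndex_centralizer_conj {G : Type*} [Group G] (K : Subgroup G) [K.Normal] (z g : G)
    (h : (Subgroup.centralizer {z}).relIndex K ≠ 0) :
    (Subgroup.centralizer {g * z * g⁻¹}).relIndex K ≠ 0 := by
  have h1 : MulAut.conj g • K = K := Subgroup.Normal.conjAct ‹K.Normal› (ConjAct.toConjAct g)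
  have h2 : MulAut.conj g • (Subgroup.centralizer {z}) =
      Subgroup.centralizer {g * z * g⁻¹} := by
    ext x
    rw [Subgroup.mem_pointwise_smul_iff_inv_smul_mem]
    simp only [Subgroup.mem_centralizer_singleton_iff, MulAut.smul_def, ← map_inv,
      MulAut.conj_apply, inv_inv]
    constructor
    · intro h
      have := congrArg (fun y => g * y * g⁻¹) h
      simpa [mul_assoc] using this
    · intro h
      have := congrArg (fun y => g⁻¹ * y * g) h
      simpa [mul_assoc] using this
  rw [← h2]
  have := Subgroup.relIndex_pointwise_smul (MulAut.conj g) (Subgroup.centralizer {z}) K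
  rw [h1] at this
  rwa [this]

/-- Let `G` have polynomial growth. If the kernel of `φ : G → ℤ` is finite or contains an
element of infinite order whose centralizer has finite index in it, then `G` contains an element of infinite order with
finite-index centralizer. -/
lemma PolyGrowth.exists_centralizer_of_ker {d : ℕ} {G : Type*} [Group G] (hG : PolyGrowth d G)
    (φ : G →* Multiplicative ℤ) {t : G} (ht : φ t = Multiplicative.ofAdd 1)
    (IH : Infinite φ.ker → ∃ z : φ.ker, ¬ IsOfFinOrder z ∧
      (Subgroup.centralizer {z}).FiniteIndex) :
    ∃ z : G, ¬ IsOfFinOrder z ∧ (Subgroup.centralizer {z}).FiniteIndex := by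
  classical
  rcases finite_or_infinite φ.ker with hfin | hinf
  · -- some power of `t` centralizes the finite kernel
    have : Finite (MulAut φ.ker) := Finite.of_injective (fun e : MulAut φ.ker => (e : φ.ker → φ.ker))
      DFunLike.coe_injective
    obtain ⟨p, hp, hpe⟩ := (isOfFinOrder_of_finite (MulAut.conjNormal (H := φ.ker) t)).exists_pow_eq_one
    refine ⟨t ^ p, ?_, ?_⟩
    · intro hfo
      obtain ⟨m, hm, hme⟩ := hfo.exists_pow_eq_one
      have := congrArg φ hme
      rw [← pow_mul, map_pow, ht, map_one φ, ← ofAdd_nsmul] at this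
      have := Multiplicative.ofAdd.injective (this.trans ofAdd_zero.symm)
      simp at this
      omega
    · refine finiteIndex_of_relIndex_ker φ ht (p := 1) ?_ one_pos ?_
      · have hle : φ.ker ≤ Subgroup.centralizer {t ^ p} := by
          intro k hk
          rw [Subgroup.mem_centralizer_singleton_iff]
          have h1 := congrArg (fun e : MulAut φ.ker => ((e ⟨k, hk⟩ : φ.ker) : G)) hpe
          simp only [← map_pow, MulAut.conjNormal_apply, MulAut.one_apply] at h1
          exact (mul_inv_eq_iff_eq_mul.1 h1).symm
        rw [Subgroup.relIndex_eq_one.2 hle]; exact one_ne_zero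
      · rw [pow_one, Subgroup.mem_centralizer_singleton_iff]
        exact (Commute.self_pow t p).eq
  · obtain ⟨z, hz, hzC⟩ := IH hinf
    have hzrel : (Subgroup.centralizer {(z : G)}).relIndex φ.ker ≠ 0 := by
      have : Subgroup.centralizer {z} ≤ (Subgroup.centralizer {(z : G)}).subgroupOf φ.ker := by
        intro x hx
        rw [Subgroup.mem_centralizer_singleton_iff] at hx
        rw [Subgroup.mem_subgroupOf, Subgroup.mem_centralizer_singleton_iff]
        exact congrArg Subtype.val hx
      exact (Subgroup.finiteIndex_of_le this).index_ne_zero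
    obtain ⟨J, hJ⟩ := hG.exists_conj_finite t (z : G)
    set X : Finset G := J.image (fun j => t ^ j * (z : G) * (t ^ j)⁻¹) with hX
    have hXc : (X : Set G) = (fun j : ℤ => t ^ j * (z : G) * (t ^ j)⁻¹) '' (J : Set ℤ) := by
      simp [hX]
    -- the conjugates of `z` under powers of `t` generate a finitely generated, `t`-invariant group
    -- `A0`, whose centralizer `C` meets the kernel in finite index; so `A0 ⊓ C` is abelian and of
    -- finite index in `A0`
    set A0 := Subgroup.closure (X : Set G) with hA0
    rw [← hXc] at hJ
    set C := Subgroup.centralizer (A0 : Set G) with hCdef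
    have hCrel : C.relIndex φ.ker ≠ 0 := by
      have : C = ⨅ j : J, Subgroup.centralizer {t ^ (j : ℤ) * (z : G) * (t ^ (j : ℤ))⁻¹} := by
        rw [hCdef, hA0, Subgroup.centralizer_closure]
        ext x
        simp only [Subgroup.mem_iInf, hXc, Subgroup.mem_centralizer_iff, Set.forall_mem_image,
          Set.mem_singleton_iff, forall_eq, Subtype.forall]
        rfl
      rw [this]
      exact Subgroup.relIndex_iInf_ne_zero fun j => relIndex_centralizer_conj _ _ _ hzrel
    have hA0K : A0 ≤ φ.ker := by
      rw [hA0, Subgroup.closure_le, hXc]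
      rintro _ ⟨j, -, rfl⟩
      exact (inferInstance : φ.ker.Normal).conj_mem _ z.2 _
    have hzA0 : (z : G) ∈ A0 := by simpa using hJ 0
    have htA0 : ∀ (e : ℤ), ∀ a ∈ A0, t ^ e * a * (t ^ e)⁻¹ ∈ A0 := by
      intro e a ha
      induction ha using Subgroup.closure_induction with
      | mem x hx =>
        rw [hXc] at hx
        obtain ⟨j, -, rfl⟩ := hx
        have := hJ (e + j)
        rw [zpow_add] at this
        simpa [mul_assoc] using this
      | one => simp
      | mul x y _ _ hx hy =>
        have := A0.mul_mem hx hy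
        simpa [mul_assoc] using this
      | inv x _ hx =>
        have := A0.inv_mem hx
        simpa [mul_assoc] using this
    have htC : ∀ c ∈ C, t * c * t⁻¹ ∈ C := by
      intro c hc
      rw [hCdef, Subgroup.mem_centralizer_iff] at hc ⊢
      intro a ha
      have h1 := hc _ (htA0 (-1) a ha)
      have := congrArg (fun y => t * y * t⁻¹) h1
      simpa [mul_assoc] using this
    have hCA0 : C.relIndex A0 ≠ 0 := fun h0 => hCrel (Subgroup.relIndex_eq_zero_of_le_right hA0K h0)
    set A := A0 ⊓ C with hA
    have hAfg : A.FG := by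
      have hA0fg : Group.FG A0 := (Group.fg_iff_subgroup_fg A0).2 ⟨X, rfl⟩
      have hfi : (C.subgroupOf A0).FiniteIndex := ⟨hCA0⟩
      have h1 : Group.FG (C.subgroupOf A0) := inferInstance
      have h2 : (C.subgroupOf A0).FG := (Group.fg_iff_subgroup_fg _).1 h1
      have h3 : (C.subgroupOf A0).map A0.subtype = A := by
        rw [Subgroup.subgroupOf_map_subtype, hA, inf_comm]
      rw [← h3]
      obtain ⟨Y, hY⟩ := h2
      exact ⟨Y.image A0.subtype, by rw [Finset.coe_image, ← MonoidHom.map_closure, hY]⟩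
    have hzG : ¬ IsOfFinOrder (z : G) := by
      rwa [Submonoid.isOfFinOrder_coe (H := φ.ker.toSubmonoid)]
    have hAinf : Infinite A := by
      obtain ⟨m, hm, -, hmC⟩ := Subgroup.exists_pow_mem_of_relIndex_ne_zero hCA0 hzA0
      by_contra hcon
      rw [not_infinite_iff_finite] at hcon
      have hzm : (z : G) ^ m ∈ A := ⟨A0.pow_mem hzA0 m, hmC.1⟩
      have h1 : IsOfFinOrder (⟨(z : G) ^ m, hzm⟩ : A) := isOfFinOrder_of_finite _
      rw [← Submonoid.isOfFinOrder_coe (H := A.toSubmonoid)] at h1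
      exact hzG ((isOfFinOrder_pow.1 h1).resolve_right hm.ne')
    obtain ⟨a, haA, hainf, p, hp, hcomm⟩ := hG.exists_commute A hAfg
      (fun a ha b hb => by
        have := Subgroup.mem_centralizer_iff.1 (hCdef ▸ ha.2) b hb.1
        exact this.symm) hAinf t
      (fun a ha => ⟨by simpa using htA0 1 a ha.1, htC a ha.2⟩)
    refine ⟨a, hainf, finiteIndex_of_relIndex_ker φ ht (p := p) ?_ hp ?_⟩
    · refine fun h0 => hCrel (Subgroup.relIndex_eq_zero_of_le_left ?_ h0)
      intro c hc
      rw [Subgroup.mem_centralizer_singleton_iff]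
      exact (Subgroup.mem_centralizer_iff.1 (hCdef ▸ hc) a haA.1).symm
    · rw [Subgroup.mem_centralizer_singleton_iff]
      exact hcomm.eq

lemma exists_centralizer_of_finiteIndex {G : Type*} [Group G] (H : Subgroup G) [hH : H.FiniteIndex]
    (h : ∃ z : H, ¬ IsOfFinOrder z ∧ (Subgroup.centralizer {z}).FiniteIndex) :
    ∃ z : G, ¬ IsOfFinOrder z ∧ (Subgroup.centralizer {z}).FiniteIndex := by
  obtain ⟨z, hz, hC⟩ := h
  refine ⟨z, by rwa [Submonoid.isOfFinOrder_coe (H := H.toSubmonoid)], ?_⟩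
  have h1 : (Subgroup.centralizer {(z : G)}).relIndex H ≠ 0 := by
    have : Subgroup.centralizer {z} ≤ (Subgroup.centralizer {(z : G)}).subgroupOf H := by
      intro x hx
      rw [Subgroup.mem_centralizer_singleton_iff] at hx
      rw [Subgroup.mem_subgroupOf, Subgroup.mem_centralizer_singleton_iff]
      exact congrArg Subtype.val hx
    exact (Subgroup.finiteIndex_of_le this).index_ne_zero
  constructor
  have h2 : H.relIndex ⊤ ≠ 0 := by rw [Subgroup.relIndex_top_right]; exact hH.index_ne_zero
  have := Subgroup.relIndex_ne_zero_trans h1 h2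
  rwa [Subgroup.relIndex_top_right] at this

/-! ### The two inductions on the degree -/

/-- Reduction of the existence of elements with finite-index centralizer to the existence of
virtual surjections onto `ℤ`. -/
lemma exists_centralizer_of_virtual_surjection
    (hsurj : ∀ (d : ℕ) (G : Type u) [Group G] [Group.FG G] [Infinite G], PolyGrowth d G →
      ∃ H : Subgroup G, H.FiniteIndex ∧ ∃ φ : H →* Multiplicative ℤ, Function.Surjective φ)
    (d : ℕ) : ∀ (G : Type u) [Group G] [Group.FG G] [Infinite G], PolyGrowth d G →
      ∃ z : G, ¬ IsOfFinOrder z ∧ (Subgroup.centralizer {z}).FiniteIndex := by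
  induction d with
  | zero =>
    intro G _ _ hinf hG
    exact absurd (hG.finite_of_zero) (not_finite_iff_infinite.2 hinf)
  | succ d ih =>
    intro G _ _ _ hG
    obtain ⟨H, hH, φ, hφ⟩ := hsurj _ G hG
    obtain ⟨t, ht⟩ := hφ (Multiplicative.ofAdd 1)
    have hHG := hG.subgroup H
    have : Group.FG φ.ker := hHG.fg_ker φ ht
    refine exists_centralizer_of_finiteIndex H (hHG.exists_centralizer_of_ker φ ht fun hinf => ?_)
    exact ih φ.ker (hHG.ker φ ht)

/-- If infinite groups of polynomial growth contain elements of infinite order with finite-index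
centralizer, they are virtually nilpotent: dividing the centralizer by the cyclic group generated
by such an element lowers the degree of growth. -/
lemma virtually_nilpotent_of_centralizer
    (hcent : ∀ (d : ℕ) (G : Type u) [Group G] [Group.FG G] [Infinite G], PolyGrowth d G →
      ∃ z : G, ¬ IsOfFinOrder z ∧ (Subgroup.centralizer {z}).FiniteIndex)
    (d : ℕ) : ∀ (G : Type u) [Group G] [Group.FG G], PolyGrowth d G →
      ∃ H : Subgroup G, H.FiniteIndex ∧ Group.IsNilpotent H := by
  induction d with
  | zero =>
    intro G _ _ hG
    have := hG.finite_of_zero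
    exact ⟨⊥, inferInstance, inferInstance⟩
  | succ d ih =>
    intro G _ _ hG
    rcases finite_or_infinite G with hfin | hinf
    · exact ⟨⊥, inferInstance, inferInstance⟩
    obtain ⟨z, hz, hC⟩ := hcent _ G hG
    set C := Subgroup.centralizer {z} with hCdef
    have hzC : z ∈ C := Subgroup.mem_centralizer_singleton_iff.2 rfl
    set w : C := ⟨z, hzC⟩ with hw
    have hwc : w ∈ Subgroup.center C := by
      rw [Subgroup.mem_center_iff]
      intro g
      exact Subtype.ext (Subgroup.mem_centralizer_singleton_iff.1 g.2)
    have hle : Subgroup.zpowers w ≤ Subgroup.center C := Subgroup.zpowers_le.2 hwc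
    have hnorm : (Subgroup.zpowers w).Normal := by
      refine ⟨fun x hx g => ?_⟩
      rw [Subgroup.mem_center_iff.1 (hle hx) g, mul_inv_cancel_right]
      exact hx
    have hw' : ¬ IsOfFinOrder w := by
      rwa [← Submonoid.isOfFinOrder_coe (H := C.toSubmonoid)]
    have hQ := (hG.subgroup C).quotient w hw'
    obtain ⟨P, hP, hPn⟩ := ih (C ⧸ Subgroup.zpowers w) hQ
    set π := QuotientGroup.mk' (Subgroup.zpowers w) with hπ
    have hπs : Function.Surjective π := QuotientGroup.mk'_surjective _
    have hfi : (P.comap π).FiniteIndex := by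
      constructor
      rw [Subgroup.index_comap_of_surjective _ hπs]
      exact hP.index_ne_zero
    have hnil : Group.IsNilpotent (P.comap π) := by
      refine Subgroup.isNilpotent_of_ker_le_center (π.subgroupComap P) ?_
      intro x hx
      have hx1 : π (x : C) = 1 := congrArg Subtype.val (MonoidHom.mem_ker.1 hx)
      have hx2 : (x : C) ∈ Subgroup.zpowers w := (QuotientGroup.eq_one_iff _).1 hx1
      have := Subgroup.mem_center_iff.1 (hle hx2)
      rw [Subgroup.mem_center_iff]
      intro g
      exact Subtype.ext (this g)
    refine ⟨(P.comap π).map C.subtype, ?_, ?_⟩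
    · constructor
      rw [Subgroup.index_map_subtype]
      exact mul_ne_zero hfi.index_ne_zero hC.index_ne_zero
    · exact Group.nilpotent_of_surjective
        ((P.comap π).equivMapOfInjective C.subtype C.subtype_injective).toMonoidHom
        ((P.comap π).equivMapOfInjective C.subtype C.subtype_injective).surjective

/-! ### Surjections onto `ℤ` -/

lemma exists_surjective_of_commGroup (A : Type*) [CommGroup A] [Group.FG A] [Infinite A] :
    ∃ φ : A →* Multiplicative ℤ, Function.Surjective φ := by
  obtain ⟨n, ι, _, p, hp, e, ⟨f⟩⟩ := AddCommGroup.equiv_free_prod_directSum_zmod (Additive A)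
  rcases n with - | n
  · exfalso
    have h1 : ∀ i : ι, NeZero (p i ^ e i) := fun i => ⟨pow_ne_zero _ (hp i).ne_zero⟩
    have h2 : Finite (DirectSum ι fun i => ZMod (p i ^ e i)) :=
      Finite.of_equiv _ DFinsupp.equivFunOnFintype.symm
    have h3 : Finite (Additive A) := Finite.of_equiv _ f.symm.toEquiv
    have h4 : Finite A := Finite.of_equiv _ Additive.toMul
    exact not_finite A
  · let g : Additive A →+ ℤ := (Finsupp.applyAddHom 0).comp ((AddMonoidHom.fst _ _).comp f.toAddMonoidHom)
    refine ⟨AddMonoidHom.toMultiplicativeRight g, ?_⟩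
    intro x
    refine ⟨(f.symm (Finsupp.single 0 x.toAdd, 0)).toMul, ?_⟩
    apply Multiplicative.toAdd.injective
    simp [g]

lemma finite_commutatorSet_of_finite_quotient_center (G : Type*) [Group G]
    [Finite (G ⧸ Subgroup.center G)] : Finite (commutatorSet G) := by
  let f : (G ⧸ Subgroup.center G) × (G ⧸ Subgroup.center G) → G := fun x => ⁅x.1.out, x.2.out⁆
  have hsub : commutatorSet G ⊆ Set.range f := by
    rintro _ ⟨a, b, rfl⟩
    refine ⟨(QuotientGroup.mk a, QuotientGroup.mk b), ?_⟩
    obtain ⟨y, hy⟩ := QuotientGroup.mk_out_eq_mul (Subgroup.center G) a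
    obtain ⟨z, hz⟩ := QuotientGroup.mk_out_eq_mul (Subgroup.center G) b
    simp only [f, hy, hz, commutatorElement_def]
    have hy' := Subgroup.mem_center_iff.1 y.2
    have hz' := Subgroup.mem_center_iff.1 z.2
    calc a * (y : G) * (b * z) * (a * (y : G))⁻¹ * (b * (z : G))⁻¹
        = a * ((y : G) * (b * (z * a⁻¹)) * (y : G)⁻¹) * (z : G)⁻¹ * b⁻¹ := by
          rw [hy' a, mul_inv_rev, mul_inv_rev, ← hy' a]
          simp only [mul_assoc]
      _ = a * b * a⁻¹ * b⁻¹ := by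
          rw [← hy', mul_inv_cancel_right, ← hz']
          simp only [mul_assoc, mul_inv_cancel_left]
  exact (Set.finite_range f).subset hsub

lemma exists_surjective_of_nilpotent (G : Type*) [Group G] [Group.IsNilpotent G] :
    Group.FG G → Infinite G → ∃ φ : G →* Multiplicative ℤ, Function.Surjective φ := by
  refine Group.nilpotent_center_quotient_ind
    (P := fun G _ _ => Group.FG G → Infinite G → ∃ φ : G →* Multiplicative ℤ, Function.Surjective φ)
    G ?_ ?_
  · intro G _ _ _ hinf
    exact absurd hinf (not_infinite_iff_finite.2 inferInstance)
  · intro G _ _ ih hfg hinf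
    rcases finite_or_infinite (G ⧸ Subgroup.center G) with hfin | hinf'
    · have := finite_commutatorSet_of_finite_quotient_center G
      have hcf : Finite (commutator G) := inferInstance
      have hab : Infinite (Abelianization G) := by
        by_contra hcon
        rw [not_infinite_iff_finite] at hcon
        have : Finite (G ⧸ commutator G) := hcon
        have : Finite G := by
          have e := Subgroup.groupEquivQuotientProdSubgroup (s := commutator G)
          exact Finite.of_equiv _ e.symm
        exact not_finite G
      have hfgab : Group.FG (Abelianization G) :=
        Group.fg_of_surjective (f := Abelianization.of) (QuotientGroup.mk_surjective)
      obtain ⟨φ, hφ⟩ := exists_surjective_of_commGroup (Abelianization G)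
      exact ⟨φ.comp Abelianization.of, hφ.comp QuotientGroup.mk_surjective⟩
    · obtain ⟨φ, hφ⟩ := ih inferInstance hinf'
      exact ⟨φ.comp (QuotientGroup.mk' _), hφ.comp (QuotientGroup.mk'_surjective _)⟩

lemma exists_surjective_of_real_hom {H : Type*} [Group H] [Group.FG H]
    (f : H →* Multiplicative ℝ) (hf : f ≠ 1) :
    ∃ φ : H →* Multiplicative ℤ, Function.Surjective φ := by
  have hfg : Group.FG f.range := Group.fg_of_surjective (f := f.rangeRestrict) f.rangeRestrict_surjective
  have hinf : Infinite f.range := by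
    by_contra hcon
    rw [not_infinite_iff_finite] at hcon
    apply hf
    ext x
    have h1 : IsOfFinOrder (f.rangeRestrict x) := isOfFinOrder_of_finite _
    obtain ⟨n, hn, hne⟩ := h1.exists_pow_eq_one
    have h2 : f x ^ n = 1 := congrArg Subtype.val hne
    have h3 := congrArg Multiplicative.toAdd h2
    rw [toAdd_pow, toAdd_one, smul_eq_zero] at h3
    have h4 := h3.resolve_left hn.ne'
    exact h4
  obtain ⟨φ, hφ⟩ := exists_surjective_of_commGroup f.range
  exact ⟨φ.comp f.rangeRestrict, hφ.comp f.rangeRestrict_surjective⟩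

/-! ### Groups with a contracting commutator -/

/-- Simple commutators `[s₁, [s₂, [… , sₖ₊₁]]]` of weight `k + 1` in elements of `S`. -/
def simpleComm {G : Type*} [Group G] (S : Set G) : ℕ → Set G
  | 0 => S
  | k + 1 => {x | ∃ s ∈ S, ∃ w ∈ simpleComm S k, x = ⁅s, w⁆}

lemma image_simpleComm {G H : Type*} [Group G] [Group H] (f : G →* H) (S : Set G) (k : ℕ) :
    simpleComm (f '' S) k = f '' simpleComm S k := by
  induction k with
  | zero => rfl
  | succ k ih =>
    ext x
    simp only [simpleComm, ih, Set.mem_ofPred_eq, Set.mem_image]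
    constructor
    · rintro ⟨_, ⟨s, hs, rfl⟩, _, ⟨w, hw, rfl⟩, rfl⟩
      exact ⟨⁅s, w⁆, ⟨s, hs, w, hw, rfl⟩, map_commutatorElement f s w⟩
    · rintro ⟨_, ⟨s, hs, w, hw, rfl⟩, rfl⟩
      exact ⟨_, ⟨s, hs, rfl⟩, _, ⟨w, hw, rfl⟩, map_commutatorElement f s w⟩

/-- A group is nilpotent once the simple commutators of some weight in a generating set vanish. -/
lemma nilpotent_of_simpleComm (m : ℕ) : ∀ (G : Type u) [Group G] (S : Set G),
    Subgroup.closure S = ⊤ → (∀ w ∈ simpleComm S m, w = 1) → Group.IsNilpotent G := by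
  induction m with
  | zero =>
    intro G _ S hS h
    have h1 : Subgroup.closure S = ⊥ := (Subgroup.closure_eq_bot_iff).2 (fun x hx => h x hx)
    have : Subsingleton G := Subgroup.subsingleton_iff.1 (subsingleton_of_bot_eq_top (h1.symm.trans hS))
    infer_instance
  | succ m ih =>
    intro G _ S hS h
    apply Group.of_quotient_center_nilpotent
    refine ih (G ⧸ Subgroup.center G) (QuotientGroup.mk' (Subgroup.center G) '' S) ?_ ?_
    · rw [← MonoidHom.map_closure, hS, ← MonoidHom.range_eq_map]
      exact MonoidHom.range_eq_top.2 (QuotientGroup.mk'_surjective _)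
    · rw [image_simpleComm]
      rintro _ ⟨w, hw, rfl⟩
      refine (QuotientGroup.eq_one_iff w).2 ?_
      rw [Subgroup.mem_center_iff]
      have hle : (⊤ : Subgroup G) ≤ Subgroup.centralizer {w} := by
        rw [← hS, Subgroup.closure_le]
        intro s hs
        have := h _ ⟨s, hs, w, hw, rfl⟩
        rw [commutatorElement_eq_one_iff_mul_comm] at this
        exact Subgroup.mem_centralizer_singleton_iff.2 this
      intro g
      exact Subgroup.mem_centralizer_singleton_iff.1 (hle (Subgroup.mem_top g))

/-- The properties of the function `g ↦ ‖ρ g - 1‖`, for `ρ` a faithful isometric representation,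
that are needed to bound nilpotency. -/
structure IsDisplacement {G : Type*} [Group G] (N : G → ℝ) : Prop where
  nonneg : ∀ g, 0 ≤ N g
  eq_one : ∀ g, N g = 0 → g = 1
  one : N 1 = 0
  mul : ∀ g h, N (g * h) ≤ N g + N h
  inv : ∀ g, N g⁻¹ = N g
  comm : ∀ g h, N ⁅g, h⁆ ≤ 2 * N g * N h
  pow : ∀ g (n : ℕ), 0 < n → n * N g ≤ 1 / 2 → N g ≤ 2 * N (g ^ n)

lemma IsDisplacement.pow_le {G : Type*} [Group G] {N : G → ℝ} (hN : IsDisplacement N) (g : G)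
    (n : ℕ) : N (g ^ n) ≤ n * N g := by
  induction n with
  | zero => simp [hN.one]
  | succ n ih =>
    rw [pow_succ]
    push_cast
    linarith [hN.mul (g ^ n) g]

lemma simpleComm_subset {G : Type*} [Group G] {S T : Set G} (hST : S ⊆ T) (hone : (1 : G) ∈ T)
    (hsymm : ∀ s ∈ T, s⁻¹ ∈ T) (k : ℕ) : simpleComm S k ⊆ T ^ (4 ^ k) := by
  have hT : T⁻¹ = T := by
    ext x; exact ⟨fun h => by simpa using hsymm _ h, fun h => hsymm _ h⟩
  have hinv : ∀ n x, x ∈ T ^ n → x⁻¹ ∈ T ^ n := by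
    intro n x hx
    rw [← Set.mem_inv, ← inv_pow, hT]; exact hx
  induction k with
  | zero => simpa [simpleComm] using hST
  | succ k ih =>
    rintro _ ⟨s, hs, w, hw, rfl⟩
    have hs1 : s ∈ T ^ 1 := by simpa using hST hs
    have h1 : ⁅s, w⁆ ∈ T ^ (1 + 4 ^ k + 1 + 4 ^ k) := by
      rw [commutatorElement_def, pow_add, pow_add, pow_add]
      exact Set.mul_mem_mul (Set.mul_mem_mul (Set.mul_mem_mul hs1 (ih hw)) (hinv _ _ hs1))
        (hinv _ _ (ih hw))
    refine Set.pow_subset_pow_right hone ?_ h1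
    have := Nat.one_le_pow k 4 (by norm_num)
    rw [pow_succ]; omega

/-- Powers of the successive commutators leading to a nontrivial simple commutator give many
distinct products of bounded length. -/
lemma IsDisplacement.exists_finset {G : Type*} [Group G] {N : G → ℝ} (hN : IsDisplacement N)
    {S T : Set G} (hST : S ⊆ T) (hone : (1 : G) ∈ T)
    (hsymm : ∀ s ∈ T, s⁻¹ ∈ T) {M : ℕ} (hM : 1 ≤ M) {ε : ℝ} (hε : 32 * M * ε ≤ 1)
    (hSε : ∀ s ∈ S, N s ≤ ε) (k : ℕ) : ∀ w ∈ simpleComm S k, w ≠ 1 → ∀ (P : Finset G) (a : ℕ),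
      (∀ x ∈ P, N x ≤ 2 * M * N w) → (P : Set G) ⊆ T ^ a →
      ∃ P' : Finset G, P'.card = M ^ k * P.card ∧ (P' : Set G) ⊆ T ^ (M * 4 ^ k + a) := by
  classical
  have hMr : (1 : ℝ) ≤ M := by exact_mod_cast hM
  have hsmall : ∀ k, ∀ w ∈ simpleComm S k, N w ≤ ε := by
    intro k
    induction k with
    | zero => exact hSε
    | succ k ih =>
      rintro _ ⟨s, hs, w, hw, rfl⟩
      have h1 := hN.comm s w
      have h2 := hSε s hs
      have h3 := ih w hw
      have h4 := hN.nonneg s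
      have h5 := hN.nonneg w
      have h6 : N s * N w ≤ ε * ε := mul_le_mul h2 h3 h5 (h4.trans h2)
      have h7 : 32 * ε ≤ 1 := by
        have : 0 ≤ ε := h4.trans h2
        nlinarith
      nlinarith
  induction k with
  | zero =>
    intro w hw hw1 P a hP hPT
    exact ⟨P, by simp, hPT.trans (Set.pow_subset_pow_right hone (by omega))⟩
  | succ k ih =>
    rintro _ ⟨s, hs, w, hw, rfl⟩ hne P a hP hPT
    have hw1 : w ≠ 1 := by
      rintro rfl
      exact hne (by simp)
    have hNw : 0 < N w := lt_of_le_of_ne (hN.nonneg w) (fun h => hw1 (hN.eq_one w h.symm))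
    have hNs := hSε s hs
    have hNw2 := hsmall k w hw
    have hε0 : 0 < ε := hNw.trans_le hNw2
    have hcomm : N ⁅s, w⁆ ≤ 2 * ε * N w := by
      have h1 := hN.comm s w
      nlinarith
    have hPs : ∀ x ∈ P, N x ≤ N w / 8 := by
      intro x hx
      have h1 := hP x hx
      have h2 : 2 * M * N ⁅s, w⁆ ≤ 2 * M * (2 * ε * N w) := by gcongr
      have h3 : 32 * M * ε * N w ≤ 1 * N w := by gcongr
      linarith
    let P1 : Finset G := (Finset.range M ×ˢ P).image (fun y => w ^ y.1 * y.2)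
    -- the translates `w ^ i * P` are pairwise disjoint
    have key : ∀ i j : ℕ, i < M → j < M → i < j → ∀ x ∈ P, ∀ y ∈ P, w ^ i * x ≠ w ^ j * y := by
      intro i j hi hj hij x hx y hy h
      have h1 : w ^ (j - i) = x * y⁻¹ := by
        have : w ^ j = w ^ i * w ^ (j - i) := by rw [← pow_add]; congr 1; omega
        rw [this, mul_assoc] at h
        rw [mul_left_cancel h]; group
      have h2 := hN.mul x y⁻¹
      rw [← h1, hN.inv] at h2
      have hji : ((j - i : ℕ) : ℝ) ≤ M := by exact_mod_cast (by omega : j - i ≤ M)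
      have h3 := hN.pow w (j - i) (by omega) (by
        have : ((j - i : ℕ) : ℝ) * N w ≤ M * ε := by gcongr
        linarith)
      linarith [hPs x hx, hPs y hy]
    have hcard : P1.card = M * P.card := by
      rw [Finset.card_image_of_injOn, Finset.card_product, Finset.card_range]
      rintro ⟨i, x⟩ hix ⟨j, y⟩ hjy h
      simp only [Finset.coe_product, Set.mem_prod, Finset.mem_coe, Finset.mem_range] at hix hjy
      simp only at h
      rcases lt_trichotomy i j with hij | hij | hij
      · exact absurd h (key i j hix.1 hjy.1 hij x hix.2 y hjy.2)
      · subst hij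
        rw [mul_left_cancel h]
      · exact absurd h.symm (key j i hjy.1 hix.1 hij y hjy.2 x hix.2)
    obtain ⟨P', hP'c, hP'T⟩ := ih w hw hw1 P1 (M * 4 ^ k + a) (by
      intro x hx
      simp only [P1, Finset.mem_image, Finset.mem_product, Finset.mem_range, Prod.exists] at hx
      obtain ⟨i, y, ⟨hi, hy⟩, rfl⟩ := hx
      have h1 := hN.mul (w ^ i) y
      have h2 := hN.pow_le w i
      have h3 : (i : ℝ) * N w ≤ M * N w := by gcongr
      have h4 := hPs y hy
      nlinarith) (by
      intro x hx
      simp only [P1, Finset.coe_image, Set.mem_image, Finset.mem_coe, Finset.mem_product,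
        Finset.mem_range, Prod.exists] at hx
      obtain ⟨i, y, ⟨hi, hy⟩, rfl⟩ := hx
      rw [pow_add]
      refine Set.mul_mem_mul ?_ (hPT hy)
      have h1 : w ^ i ∈ (T ^ (4 ^ k)) ^ i := Set.pow_mem_pow (simpleComm_subset hST hone hsymm k hw)
      rw [← pow_mul] at h1
      refine Set.pow_subset_pow_right hone ?_ h1
      rw [mul_comm]
      exact Nat.mul_le_mul_right _ hi.le)
    refine ⟨P', by rw [hP'c, hcard, pow_succ, mul_assoc], hP'T.trans
      (Set.pow_subset_pow_right hone ?_)⟩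
    rw [pow_succ, ← add_assoc]
    have : M * (4 ^ k * 4) = M * 4 ^ k + M * 4 ^ k + M * 4 ^ k + M * 4 ^ k := by ring
    rw [this]
    omega

/-- A group of growth of degree `d` generated by elements of small displacement is nilpotent: a
nontrivial commutator of weight `m + 1` gives `M ^ m` elements in the ball of radius `M * 4 ^ m`,
which is impossible for `M = 2 * 4 ^ d` and large `m`. -/
lemma IsDisplacement.isNilpotent {G : Type u} [Group G] {N : G → ℝ} (hN : IsDisplacement N)
    {d : ℕ} (hG : PolyGrowth d G) {S : Set G} (hSf : S.Finite) (hS : Subgroup.closure S = ⊤)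
    (hSN : ∀ s ∈ S, N s ≤ (1 / (32 * (2 * 4 ^ d)) : ℝ)) : Group.IsNilpotent G := by
  set T : Set G := insert 1 (S ∪ S⁻¹) with hT
  have hTf : T.Finite := (hSf.union hSf.inv).insert 1
  obtain ⟨C, hC⟩ := hG T hTf
  have hone : (1 : G) ∈ T := Set.mem_insert _ _
  have hsymm : ∀ s ∈ T, s⁻¹ ∈ T := by
    rintro s (rfl | hs | hs)
    · simp [hT]
    · exact Or.inr (Or.inr (by simpa using hs))
    · exact Or.inr (Or.inl hs)
  set M : ℕ := 2 * 4 ^ d with hM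
  have hM1 : 1 ≤ M := by have := Nat.one_le_pow d 4 (by norm_num); omega
  obtain ⟨m, hm⟩ : ∃ m : ℕ, C * M ^ d < 2 ^ m := ⟨C * M ^ d, Nat.lt_two_pow_self⟩
  refine nilpotent_of_simpleComm m G S hS ?_
  intro w hw
  by_contra hne
  obtain ⟨P, hPc, hPT⟩ := hN.exists_finset (T := T)
    (fun s hs => Or.inr (Or.inl hs)) hone hsymm hM1 (ε := 1 / (32 * (2 * 4 ^ d)))
    (by rw [hM]; push_cast; field_simp; exact le_refl _) hSN m w hw hne {1} 0
    (by simp only [Finset.mem_singleton, forall_eq, hN.one]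
        have := hN.nonneg w
        positivity) (by simp)
  rw [Finset.card_singleton, mul_one] at hPc
  have h1 := Set.ncard_le_ncard hPT (finite_set_pow hTf _)
  rw [Set.ncard_coe_finset, hPc, add_zero] at h1
  have h2 := hC (M * 4 ^ m) (Nat.mul_pos hM1 (by positivity))
  have h3 : M ^ m ≤ C * (M * 4 ^ m) ^ d := h1.trans h2
  have h4 : C * (M * 4 ^ m) ^ d = C * M ^ d * (4 ^ d) ^ m := by
    rw [mul_pow, ← pow_mul, ← pow_mul, mul_comm m d]; ring
  rw [h4, hM, mul_pow, ← hM] at h3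
  have h5 : 0 < (4 ^ d) ^ m := by positivity
  exact absurd (Nat.le_of_mul_le_mul_right h3 h5) (by omega)

lemma exists_finite_subset_closure {G : Type*} [Group G] {X : Set G} (hX : (Subgroup.closure X).FG) :
    ∃ Y ⊆ X, Y.Finite ∧ Subgroup.closure Y = Subgroup.closure X := by
  have key : ∀ x ∈ Subgroup.closure X, ∃ Y ⊆ X, Y.Finite ∧ x ∈ Subgroup.closure Y := by
    intro x hx
    induction hx using Subgroup.closure_induction with
    | mem x hx => exact ⟨{x}, by simpa using hx, Set.finite_singleton x,
        Subgroup.subset_closure (Set.mem_singleton x)⟩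
    | one => exact ⟨∅, Set.empty_subset _, Set.finite_empty, Subgroup.one_mem _⟩
    | mul x y _ _ hx hy =>
      obtain ⟨Y, hY, hYf, hxY⟩ := hx
      obtain ⟨Z, hZ, hZf, hyZ⟩ := hy
      exact ⟨Y ∪ Z, Set.union_subset hY hZ, hYf.union hZf, Subgroup.mul_mem _
        (Subgroup.closure_mono Set.subset_union_left hxY)
        (Subgroup.closure_mono Set.subset_union_right hyZ)⟩
    | inv x _ hx =>
      obtain ⟨Y, hY, hYf, hxY⟩ := hx
      exact ⟨Y, hY, hYf, Subgroup.inv_mem _ hxY⟩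
  obtain ⟨F, hF⟩ := hX
  have hFm : ∀ x : F, (x : G) ∈ Subgroup.closure X := fun x => by
    rw [← hF]; exact Subgroup.subset_closure x.2
  choose Y hY hYf hxY using fun x : F => key x (hFm x)
  refine ⟨⋃ x, Y x, Set.iUnion_subset hY, Set.finite_iUnion hYf, le_antisymm
    (Subgroup.closure_mono (Set.iUnion_subset hY)) ?_⟩
  rw [← hF, Subgroup.closure_le]
  intro x hx
  exact Subgroup.closure_mono (Set.subset_iUnion Y ⟨x, hx⟩) (hxY ⟨x, hx⟩)

/-- A totally bounded displacement forces virtual nilpotency: elements close to the identity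
generate a finite-index subgroup. -/
lemma IsDisplacement.virtually_nilpotent {G : Type u} [Group G] [Group.FG G] {N : G → ℝ}
    (hN : IsDisplacement N) {d : ℕ} (hG : PolyGrowth d G)
    (htb : ∀ ε > 0, ∃ F : Set G, F.Finite ∧ ∀ g, ∃ f ∈ F, N (f⁻¹ * g) < ε) :
    ∃ H : Subgroup G, H.FiniteIndex ∧ Group.IsNilpotent H := by
  set ε : ℝ := 1 / (32 * (2 * 4 ^ d)) with hε
  have hε0 : 0 < ε := by positivity
  obtain ⟨F, hFf, hF⟩ := htb ε hε0
  set X : Set G := {g | N g < ε} with hX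
  set H := Subgroup.closure X with hH
  have hHfi : H.FiniteIndex := by
    rw [Subgroup.finiteIndex_iff_finite_quotient]
    have : Finite F := hFf
    refine Finite.of_surjective (fun f : F => (QuotientGroup.mk (f : G) : G ⧸ H)) ?_
    intro q
    obtain ⟨g, rfl⟩ := QuotientGroup.mk_surjective q
    obtain ⟨f, hf, hfg⟩ := hF g
    exact ⟨⟨f, hf⟩, QuotientGroup.eq.2 (Subgroup.subset_closure hfg)⟩
  refine ⟨H, hHfi, ?_⟩
  have hHfg : Group.FG H := inferInstance
  obtain ⟨Y, hYX, hYf, hYH⟩ := exists_finite_subset_closure ((Group.fg_iff_subgroup_fg H).1 hHfg)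
  have hNH : IsDisplacement (fun h : H => N h) :=
    { nonneg := fun g => hN.nonneg g
      eq_one := fun g hg => Subtype.ext (hN.eq_one g hg)
      one := hN.one
      mul := fun g h => hN.mul g h
      inv := fun g => hN.inv g
      comm := fun g h => hN.comm g h
      pow := fun g n => hN.pow g n }
  refine hNH.isNilpotent (hG.subgroup H) (S := ((↑) : H → G) ⁻¹' Y)
    (hYf.preimage Subtype.val_injective.injOn) ?_ ?_
  · have : Subgroup.closure (((↑) : Subgroup.closure Y → G) ⁻¹' Y) = ⊤ :=
      Subgroup.closure_closure_coe_preimage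
    rw [hH, ← hYH]
    exact this
  · intro s hs
    exact (hYX hs).le

/-! ### Isometric finite-dimensional representations -/

section Isometric

variable {V : Type*} [NormedAddCommGroup V] [NormedSpace ℝ V]

/-- A linear isometric automorphism, as an element of the normed algebra of endomorphisms. -/
def isoEnd (γ : V ≃ₗᵢ[ℝ] V) : V →L[ℝ] V := (γ.toContinuousLinearEquiv : V →L[ℝ] V)

lemma isoEnd_mul (γ δ : V ≃ₗᵢ[ℝ] V) : isoEnd (γ * δ) = isoEnd γ * isoEnd δ := rfl

lemma isoEnd_one : isoEnd (1 : V ≃ₗᵢ[ℝ] V) = 1 := rfl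

lemma isoEnd_inv_mul (γ : V ≃ₗᵢ[ℝ] V) : isoEnd γ⁻¹ * isoEnd γ = 1 := by
  rw [← isoEnd_mul, inv_mul_cancel, isoEnd_one]

lemma isoEnd_mul_inv (γ : V ≃ₗᵢ[ℝ] V) : isoEnd γ * isoEnd γ⁻¹ = 1 := by
  rw [← isoEnd_mul, mul_inv_cancel, isoEnd_one]

lemma isoEnd_pow (γ : V ≃ₗᵢ[ℝ] V) (n : ℕ) : isoEnd (γ ^ n) = isoEnd γ ^ n := by
  induction n with
  | zero => simp [isoEnd_one]
  | succ n ih => rw [pow_succ, pow_succ, isoEnd_mul, ih]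

lemma norm_isoEnd_le (γ : V ≃ₗᵢ[ℝ] V) : ‖isoEnd γ‖ ≤ 1 :=
  ContinuousLinearMap.opNorm_le_bound _ zero_le_one fun v => by
    rw [one_mul]; exact (γ.norm_map v).le

lemma norm_isoEnd_mul_le (γ : V ≃ₗᵢ[ℝ] V) (T : V →L[ℝ] V) : ‖isoEnd γ * T‖ ≤ ‖T‖ :=
  (norm_mul_le _ _).trans (by
    have := norm_isoEnd_le γ
    nlinarith [norm_nonneg T])

lemma norm_mul_isoEnd_le (γ : V ≃ₗᵢ[ℝ] V) (T : V →L[ℝ] V) : ‖T * isoEnd γ‖ ≤ ‖T‖ :=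
  (norm_mul_le _ _).trans (by
    have := norm_isoEnd_le γ
    nlinarith [norm_nonneg T])

lemma isDisplacement_isoEnd : IsDisplacement (fun γ : V ≃ₗᵢ[ℝ] V => ‖isoEnd γ - 1‖) := by
  have hmul : ∀ γ δ : V ≃ₗᵢ[ℝ] V, ‖isoEnd (γ * δ) - 1‖ ≤ ‖isoEnd γ - 1‖ + ‖isoEnd δ - 1‖ := by
    intro γ δ
    have : isoEnd (γ * δ) - 1 = isoEnd γ * (isoEnd δ - 1) + (isoEnd γ - 1) := by
      rw [isoEnd_mul]; noncomm_ring
    rw [this]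
    refine (norm_add_le _ _).trans ?_
    linarith [norm_isoEnd_mul_le γ (isoEnd δ - 1)]
  have hinv : ∀ γ : V ≃ₗᵢ[ℝ] V, ‖isoEnd γ⁻¹ - 1‖ ≤ ‖isoEnd γ - 1‖ := by
    intro γ
    have : isoEnd γ⁻¹ - 1 = isoEnd γ⁻¹ * (1 - isoEnd γ) := by
      rw [mul_sub, isoEnd_inv_mul, mul_one]
    rw [this, norm_sub_rev (isoEnd γ)]
    exact norm_isoEnd_mul_le _ _
  have hpow : ∀ (γ : V ≃ₗᵢ[ℝ] V) (n : ℕ), ‖isoEnd γ ^ n - 1‖ ≤ n * ‖isoEnd γ - 1‖ := by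
    intro γ n
    induction n with
    | zero => simp
    | succ n ih =>
      have := hmul (γ ^ n) γ
      rw [← pow_succ, isoEnd_pow, isoEnd_pow] at this
      push_cast
      linarith
  refine ⟨fun γ => norm_nonneg _, ?_, by simp [isoEnd_one], hmul, ?_, ?_, ?_⟩
  · intro γ h
    rw [norm_eq_zero, sub_eq_zero] at h
    ext v
    exact congrArg (fun T : V →L[ℝ] V => T v) h
  · intro γ
    refine le_antisymm (hinv γ) ?_
    simpa using hinv γ⁻¹
  · intro γ δ
    have : isoEnd ⁅γ, δ⁆ - 1 = ((isoEnd γ - 1) * (isoEnd δ - 1) - (isoEnd δ - 1) * (isoEnd γ - 1)) *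
        isoEnd γ⁻¹ * isoEnd δ⁻¹ := by
      have e1 : (isoEnd γ - 1) * (isoEnd δ - 1) - (isoEnd δ - 1) * (isoEnd γ - 1) =
        isoEnd γ * isoEnd δ - isoEnd δ * isoEnd γ := by noncomm_ring
      rw [e1, commutatorElement_def, isoEnd_mul, isoEnd_mul, isoEnd_mul, sub_mul, sub_mul,
        mul_assoc (isoEnd δ), isoEnd_mul_inv, mul_one, isoEnd_mul_inv]
    rw [this]
    refine (norm_mul_isoEnd_le _ _).trans ((norm_mul_isoEnd_le _ _).trans
      ((norm_sub_le _ _).trans ?_))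
    linarith [norm_mul_le (isoEnd γ - 1) (isoEnd δ - 1), norm_mul_le (isoEnd δ - 1) (isoEnd γ - 1)]
  · intro γ n hn hsmall
    rw [isoEnd_pow]
    set x := isoEnd γ with hx
    -- `n (x - 1) = (x ^ n - 1) - ∑ (x ^ i - 1) (x - 1)`
    have h1 : (n : ℝ) • (x - 1) = (x ^ n - 1) - ∑ i ∈ Finset.range n, (x ^ i - 1) * (x - 1) := by
      rw [← Finset.sum_mul, Finset.sum_sub_distrib, sub_mul, geom_sum_mul]
      simp [Nat.cast_smul_eq_nsmul]
    have h2 : ‖∑ i ∈ Finset.range n, (x ^ i - 1) * (x - 1)‖ ≤ n * (1 / 2 * ‖x - 1‖) := by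
      refine (norm_sum_le _ _).trans ?_
      calc ∑ i ∈ Finset.range n, ‖(x ^ i - 1) * (x - 1)‖
          ≤ ∑ i ∈ Finset.range n, (1 / 2 * ‖x - 1‖) := by
            refine Finset.sum_le_sum fun i hi => (norm_mul_le _ _).trans ?_
            gcongr
            refine (hpow γ i).trans (le_trans ?_ hsmall)
            gcongr
            exact (Finset.mem_range.1 hi).le
        _ = _ := by simp
    have h3 : (n : ℝ) * ‖x - 1‖ ≤ ‖x ^ n - 1‖ + n * (1 / 2 * ‖x - 1‖) := by
      calc (n : ℝ) * ‖x - 1‖ = ‖(n : ℝ) • (x - 1)‖ := by rw [norm_smul]; simp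
        _ ≤ _ := by
          rw [h1]
          exact (norm_sub_le _ _).trans (by gcongr)
    have hn1 : (1 : ℝ) ≤ n := by exact_mod_cast hn
    nlinarith [norm_nonneg (x - 1)]

/-- An infinite isometric linear action of a group of polynomial growth yields a virtual
surjection onto `ℤ`. -/
lemma PolyGrowth.exists_surjective_of_isometric [FiniteDimensional ℝ V] {G : Type u} [Group G]
    [Group.FG G] {d : ℕ} (hG : PolyGrowth d G) (ρ : G →* (V ≃ₗᵢ[ℝ] V)) (hinf : Infinite ρ.range) :
    ∃ H : Subgroup G, H.FiniteIndex ∧ ∃ φ : H →* Multiplicative ℤ, Function.Surjective φ := by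
  set Γ := ρ.range with hΓ
  have hsurj := ρ.rangeRestrict_surjective
  have hfg : Group.FG Γ := Group.fg_of_surjective hsurj
  have hgr : PolyGrowth d Γ := hG.of_surjective ρ.rangeRestrict hsurj
  have hNV := isDisplacement_isoEnd (V := V)
  have hN : IsDisplacement (fun γ : Γ => ‖isoEnd (γ : V ≃ₗᵢ[ℝ] V) - 1‖) :=
    { nonneg := fun g => hNV.nonneg g
      eq_one := fun g hg => Subtype.ext (hNV.eq_one g hg)
      one := hNV.one
      mul := fun g h => hNV.mul g h
      inv := fun g => hNV.inv g
      comm := fun g h => hNV.comm g h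
      pow := fun g n => hNV.pow g n }
  obtain ⟨Λ, hΛ, hΛn⟩ := hN.virtually_nilpotent hgr (by
    intro ε hε
    have hprop : ProperSpace (V →L[ℝ] V) := FiniteDimensional.proper_real _
    have htb : TotallyBounded (Set.range fun γ : Γ => isoEnd (γ : V ≃ₗᵢ[ℝ] V)) := by
      refine ((isCompact_closedBall (0 : V →L[ℝ] V) 1).totallyBounded).subset ?_
      rintro _ ⟨γ, rfl⟩
      simpa using norm_isoEnd_le (γ : V ≃ₗᵢ[ℝ] V)
    obtain ⟨t, ht, htf, hcov⟩ := Metric.finite_approx_of_totallyBounded htb ε hε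
    choose! σ hσ using fun T (hT : T ∈ t) => ht hT
    refine ⟨σ '' t, htf.image σ, fun g => ?_⟩
    obtain ⟨T, hT, hgT⟩ := Set.mem_iUnion₂.1 (hcov ⟨g, rfl⟩)
    refine ⟨σ T, ⟨T, hT, rfl⟩, ?_⟩
    have h1 : isoEnd (((σ T)⁻¹ * g : Γ) : V ≃ₗᵢ[ℝ] V) - 1 =
        isoEnd (σ T : V ≃ₗᵢ[ℝ] V)⁻¹ * (isoEnd (g : V ≃ₗᵢ[ℝ] V) - T) := by
      have h0 : isoEnd (σ T : V ≃ₗᵢ[ℝ] V) = T := hσ T hT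
      have h2 : isoEnd (σ T : V ≃ₗᵢ[ℝ] V)⁻¹ * T = 1 := by
        nth_rewrite 2 [← h0]
        exact isoEnd_inv_mul _
      rw [mul_sub, h2]
      rfl
    rw [h1]
    refine (norm_isoEnd_mul_le _ _).trans_lt ?_
    rw [← dist_eq_norm]
    exact hgT)
  have hΛinf : Infinite Λ := by
    by_contra hcon
    rw [not_infinite_iff_finite] at hcon
    have : Finite Γ := by
      have e := Subgroup.groupEquivQuotientProdSubgroup (s := Λ)
      exact Finite.of_equiv _ e.symm
    exact not_finite Γ
  obtain ⟨φ, hφ⟩ := exists_surjective_of_nilpotent Λ inferInstance hΛinf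
  refine ⟨Λ.comap ρ.rangeRestrict, ⟨?_⟩, φ.comp (ρ.rangeRestrict.subgroupComap Λ),
    hφ.comp (MonoidHom.subgroupComap_surjective_of_surjective _ _ hsurj)⟩
  rw [Subgroup.index_comap_of_surjective _ hsurj]
  exact hΛ.index_ne_zero

end Isometric

/-! ### The Laplacian of an orthogonal representation -/

section Laplacian

variable {G : Type*} [Group G] {E : Type*} [NormedAddCommGroup E] [InnerProductSpace ℝ E]

/-- The Laplacian `g ↦ (2|S|)⁻¹ ∑ₛ (g - s g)` of an isometric action; the factor `2` makes it a
contraction. -/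
noncomputable def lapl (S : Finset G) (ρ : G →* (E ≃ₗᵢ[ℝ] E)) : E →ₗ[ℝ] E :=
  (1 / (2 * (S.card : ℝ))) • ∑ s ∈ S, (LinearMap.id - ((ρ s).toLinearEquiv : E →ₗ[ℝ] E))

lemma lapl_apply (S : Finset G) (ρ : G →* (E ≃ₗᵢ[ℝ] E)) (g : E) :
    lapl S ρ g = (1 / (2 * (S.card : ℝ))) • ∑ s ∈ S, (g - ρ s g) := by
  simp [lapl, LinearMap.sum_apply]

lemma inner_lapl_self (S : Finset G) (hS : S.Nonempty) (ρ : G →* (E ≃ₗᵢ[ℝ] E)) (g : E) :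
    4 * (S.card : ℝ) * inner ℝ (lapl S ρ g) g = ∑ s ∈ S, ‖g - ρ s g‖ ^ 2 := by
  have hn : (S.card : ℝ) ≠ 0 := by exact_mod_cast hS.card_ne_zero
  have h1 : ∀ s ∈ S, ‖g - ρ s g‖ ^ 2 = 2 * inner ℝ (g - ρ s g) g := by
    intro s _
    rw [norm_sub_sq_real, inner_sub_left, real_inner_self_eq_norm_sq, (ρ s).norm_map,
      real_inner_comm]
    ring
  rw [Finset.sum_congr rfl h1, lapl_apply, inner_smul_left, sum_inner, ← Finset.mul_sum]
  simp only [conj_trivial]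
  field_simp
  ring

lemma inner_lapl_self_nonneg (S : Finset G) (hS : S.Nonempty) (ρ : G →* (E ≃ₗᵢ[ℝ] E)) (g : E) :
    0 ≤ inner ℝ (lapl S ρ g) g := by
  have hn : 0 < (S.card : ℝ) := by exact_mod_cast hS.card_pos
  have h1 := inner_lapl_self S hS ρ g
  have h2 : 0 ≤ ∑ s ∈ S, ‖g - ρ s g‖ ^ 2 := Finset.sum_nonneg fun _ _ => by positivity
  by_contra! hcon
  nlinarith

lemma inner_lapl_self_le (S : Finset G) (hS : S.Nonempty) (ρ : G →* (E ≃ₗᵢ[ℝ] E)) (g : E) :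
    inner ℝ (lapl S ρ g) g ≤ ‖g‖ ^ 2 := by
  have hn : 0 < (S.card : ℝ) := by exact_mod_cast hS.card_pos
  have h1 := inner_lapl_self S hS ρ g
  have h2 : ∑ s ∈ S, ‖g - ρ s g‖ ^ 2 ≤ ∑ s ∈ S, (2 * ‖g‖) ^ 2 := by
    refine Finset.sum_le_sum fun s _ => ?_
    gcongr
    refine (norm_sub_le _ _).trans ?_
    rw [(ρ s).norm_map]; linarith
  rw [Finset.sum_const, nsmul_eq_mul] at h2
  have h3 : 4 * (S.card : ℝ) * inner ℝ (lapl S ρ g) g ≤ 4 * (S.card : ℝ) * ‖g‖ ^ 2 := by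
    rw [h1]; linarith
  exact le_of_mul_le_mul_left h3 (by positivity)

lemma rho_mul_apply (ρ : G →* (E ≃ₗᵢ[ℝ] E)) (x y : G) (g : E) : ρ (x * y) g = ρ x (ρ y g) := by
  rw [map_mul]; rfl

lemma inner_rho_inv (ρ : G →* (E ≃ₗᵢ[ℝ] E)) (x : G) (g h : E) :
    inner ℝ (ρ x g) h = inner ℝ g (ρ x⁻¹ h) := by
  have h1 : ρ x (ρ x⁻¹ h) = h := by
    have : (ρ x * ρ x⁻¹) h = h := by rw [← map_mul]; simp
    exact this
  conv_lhs => rw [← h1]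
  exact (ρ x).inner_map_map _ _

lemma inner_lapl_comm (S : Finset G) (hsymm : ∀ s ∈ S, s⁻¹ ∈ S)
    (ρ : G →* (E ≃ₗᵢ[ℝ] E)) (g h : E) : inner ℝ (lapl S ρ g) h = inner ℝ g (lapl S ρ h) := by
  rw [lapl_apply, lapl_apply, inner_smul_left, inner_smul_right, sum_inner, inner_sum]
  simp only [conj_trivial, inner_sub_left, inner_sub_right, inner_rho_inv]
  congr 1
  rw [Finset.sum_sub_distrib, Finset.sum_sub_distrib]
  congr 1
  exact Finset.sum_nbij' (fun s => s⁻¹) (fun s => s⁻¹) hsymm hsymm (by simp) (by simp) (by simp)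

/-- One step of the heat flow decreases the energy by at least `‖Δg‖²`. -/
lemma inner_lapl_step (S : Finset G) (hS : S.Nonempty) (hsymm : ∀ s ∈ S, s⁻¹ ∈ S)
    (ρ : G →* (E ≃ₗᵢ[ℝ] E)) (g : E) :
    inner ℝ (lapl S ρ (g - lapl S ρ g)) (g - lapl S ρ g) ≤
      inner ℝ (lapl S ρ g) g - ‖lapl S ρ g‖ ^ 2 := by
  have h1 := inner_lapl_self_le S hS ρ (lapl S ρ g)
  have h2 := inner_lapl_comm S hsymm ρ (lapl S ρ g) g
  rw [map_sub, inner_sub_left, inner_sub_right, inner_sub_right, h2, real_inner_self_eq_norm_sq]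
  linarith

lemma norm_sub_rho_le (S : Finset G) (ρ : G →* (E ≃ₗᵢ[ℝ] E)) {m : ℝ} {g : E}
    (hm : ∀ s ∈ S, ‖g - ρ s g‖ ≤ m) (k : ℕ) :
    ∀ u ∈ (S : Set G) ^ k, ‖g - ρ u g‖ ≤ k * m := by
  induction k with
  | zero => intro u hu; simp at hu; simp [hu]
  | succ k ih =>
    intro u hu
    rw [pow_succ] at hu
    obtain ⟨v, hv, s, hs, rfl⟩ := hu
    have h1 : g - ρ (v * s) g = (g - ρ v g) + ρ v (g - ρ s g) := by
      rw [rho_mul_apply, map_sub]; abel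
    simp only
    rw [h1]
    refine (norm_add_le _ _).trans ?_
    rw [(ρ v).norm_map]
    push_cast
    linarith [ih v hv, hm s hs]

/-- A vector with small Laplacian compared to its energy gives an almost harmonic, `1`-Lipschitz
matrix coefficient which is not close to a constant. -/
lemma exists_almost_harmonic (S : Finset G) (hS : S.Nonempty)
    (ρ : G →* (E ≃ₗᵢ[ℝ] E)) {η : ℝ} (hη : 0 ≤ η) {g : E}
    (hpos : 0 < inner ℝ (lapl S ρ g) g)
    (hg : ‖lapl S ρ g‖ ^ 2 ≤ (η / S.card) ^ 2 * inner ℝ (lapl S ρ g) g) :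
    ∃ u : G → ℝ, u 1 = 0 ∧ (∃ s ∈ S, u s = 1) ∧ (∀ x, ∀ s ∈ S, |u (x * s) - u x| ≤ 1) ∧
      ∀ x, |∑ s ∈ S, (u (x * s) - u x)| ≤ η := by
  have hn : 0 < (S.card : ℝ) := by exact_mod_cast hS.card_pos
  obtain ⟨s₀, hs₀, hmax⟩ := S.exists_max_image (fun s => ‖g - ρ s g‖) hS
  set M := ‖g - ρ s₀ g‖ with hM
  have hE := inner_lapl_self S hS ρ g
  have hEM : inner ℝ (lapl S ρ g) g ≤ M ^ 2 / 4 := by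
    have : ∑ s ∈ S, ‖g - ρ s g‖ ^ 2 ≤ ∑ s ∈ S, M ^ 2 := by
      refine Finset.sum_le_sum fun s hs => ?_
      gcongr
      exact hmax s hs
    rw [← hE, Finset.sum_const, nsmul_eq_mul] at this
    have h2 : (S.card : ℝ) * (4 * inner ℝ (lapl S ρ g) g) ≤ S.card * M ^ 2 := by linarith
    linarith [le_of_mul_le_mul_left h2 hn]
  have hM0 : 0 < M := by
    rcases (norm_nonneg (g - ρ s₀ g)).eq_or_lt with h | h
    · rw [← hM] at h; rw [← h] at hEM; norm_num at hEM; linarith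
    · exact h
  have hlap : ‖lapl S ρ g‖ ≤ η / S.card * (M / 2) := by
    apply le_of_sq_le_sq _ (by positivity)
    calc ‖lapl S ρ g‖ ^ 2 ≤ (η / S.card) ^ 2 * (M ^ 2 / 4) := hg.trans (by gcongr)
      _ = _ := by ring
  let h : E := ρ s₀ g - g
  have hh : ‖h‖ = M := by rw [hM, norm_sub_rev]
  have hdiff : ∀ x s, inner ℝ (ρ (x * s) g - g) h / M ^ 2 - inner ℝ (ρ x g - g) h / M ^ 2 =
      - (inner ℝ (ρ x (g - ρ s g)) h / M ^ 2) := by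
    intro x s
    rw [← sub_div, ← inner_sub_left, ← neg_div, ← inner_neg_left, rho_mul_apply, map_sub]
    congr 3; abel
  -- dividing by `M ^ 2` normalises the coefficient to take the value `1` at `s₀`
  refine ⟨fun x => inner ℝ (ρ x g - g) h / M ^ 2, by simp, ⟨s₀, hs₀, ?_⟩, ?_, ?_⟩
  · change inner ℝ h h / M ^ 2 = 1
    rw [real_inner_self_eq_norm_sq, hh]
    field_simp
  · intro x s hs
    simp only
    rw [hdiff, abs_neg, abs_div, abs_of_pos (by positivity : 0 < M ^ 2), div_le_one (by positivity)]
    refine (abs_real_inner_le_norm _ _).trans ?_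
    rw [(ρ x).norm_map, hh, sq]
    gcongr
    exact hmax s hs
  · intro x
    simp only [hdiff]
    rw [Finset.sum_neg_distrib, abs_neg, ← Finset.sum_div, ← sum_inner, ← map_sum]
    have h1 : ∑ s ∈ S, (g - ρ s g) = (2 * (S.card : ℝ)) • lapl S ρ g := by
      rw [lapl_apply, smul_smul]; field_simp; simp
    rw [h1, abs_div, abs_of_pos (by positivity : 0 < M ^ 2), div_le_iff₀ (by positivity)]
    refine (abs_real_inner_le_norm _ _).trans ?_
    rw [(ρ x).norm_map, hh, norm_smul, Real.norm_of_nonneg (by positivity)]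
    calc 2 * (S.card : ℝ) * ‖lapl S ρ g‖ * M ≤ 2 * S.card * (η / S.card * (M / 2)) * M := by gcongr
      _ = η * M ^ 2 := by field_simp

end Laplacian

/-! ### The regular representation and the heat flow -/

/-- The left translate `y ↦ f (x⁻¹ y)` of a square-summable function. -/
noncomputable def lpTranslate {G : Type*} [Group G] (x : G) (f : lp (fun _ : G => ℝ) 2) :
    lp (fun _ : G => ℝ) 2 :=
  ⟨fun y => f (x⁻¹ * y), by
    have h := lp.memℓp f
    have h2 : Memℓp (fun y => f (x⁻¹ * y)) 2 := by
      rw [memℓp_gen_iff (by norm_num)] at h ⊢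
      exact (Equiv.mulLeft x⁻¹).summable_iff.2 h
    exact h2⟩

lemma lpTranslate_apply {G : Type*} [Group G] (x : G) (f : lp (fun _ : G => ℝ) 2) (y : G) :
    lpTranslate x f y = f (x⁻¹ * y) := rfl

/-- The left regular representation on square-summable real functions. -/
noncomputable def regularRep (G : Type*) [Group G] :
    G →* (lp (fun _ : G => ℝ) 2 ≃ₗᵢ[ℝ] lp (fun _ : G => ℝ) 2) where
  toFun x :=
    { toFun := lpTranslate x
      invFun := lpTranslate x⁻¹
      map_add' := fun f g => by ext y; simp [lpTranslate_apply]
      map_smul' := fun c f => by ext y; simp [lpTranslate_apply]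
      left_inv := fun f => by ext y; simp [lpTranslate_apply]
      right_inv := fun f => by ext y; simp [lpTranslate_apply]
      norm_map' := fun f => by
        have h : inner ℝ (lpTranslate x f) (lpTranslate x f) = inner ℝ f f := by
          rw [lp.inner_eq_tsum, lp.inner_eq_tsum]
          exact (Equiv.mulLeft x⁻¹).tsum_eq (fun y => inner ℝ (f y) (f y))
        rw [real_inner_self_eq_norm_sq, real_inner_self_eq_norm_sq] at h
        exact (sq_eq_sq₀ (norm_nonneg _) (norm_nonneg _)).1 h }
  map_one' := by
    ext f y
    change f ((1 : G)⁻¹ * y) = f y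
    simp
  map_mul' x y := by
    ext f z
    change f ((x * y)⁻¹ * z) = f (y⁻¹ * (x⁻¹ * z))
    rw [mul_inv_rev, mul_assoc]

lemma regularRep_apply {G : Type*} [Group G] (x : G) (f : lp (fun _ : G => ℝ) 2) (y : G) :
    regularRep G x f y = f (x⁻¹ * y) := rfl

section Heat

variable {G : Type*} [Group G] (S : Finset G)

open Classical in
/-- The heat flow `(1 - Δ) ^ k δ₁` started at the identity. -/
noncomputable def heat : ℕ → lp (fun _ : G => ℝ) 2
  | 0 => lp.single 2 1 1
  | k + 1 => heat k - lapl S (regularRep G) (heat k)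

lemma heat_succ_apply (hS : S.Nonempty) (k : ℕ) (y : G) : heat S (k + 1) y =
    1 / 2 * heat S k y + (1 / (2 * (S.card : ℝ))) * ∑ s ∈ S, heat S k (s⁻¹ * y) := by
  have hn : (S.card : ℝ) ≠ 0 := by exact_mod_cast hS.card_ne_zero
  have h1 : heat S (k + 1) = heat S k - (1 / (2 * (S.card : ℝ))) • ∑ s ∈ S,
      (heat S k - regularRep G s (heat S k)) := by
    rw [heat, lapl_apply]
  have h2 : (∑ s ∈ S, (heat S k - regularRep G s (heat S k)) : lp (fun _ : G => ℝ) 2) y =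
      ∑ s ∈ S, (heat S k y - heat S k (s⁻¹ * y)) := by
    rw [lp.coeFn_sum, Finset.sum_apply]
    rfl
  rw [h1, lp.coeFn_sub, Pi.sub_apply, lp.coeFn_smul, Pi.smul_apply, h2, Finset.sum_sub_distrib,
    Finset.sum_const, nsmul_eq_mul, smul_eq_mul]
  field_simp
  ring

lemma heat_nonneg (hS : S.Nonempty) (k : ℕ) : ∀ y, 0 ≤ heat S k y := by
  classical
  induction k with
  | zero =>
    intro y
    rcases eq_or_ne y 1 with rfl | hy
    · simp [heat]
    · rw [heat, lp.single_apply_ne _ _ _ hy]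
  | succ k ih =>
    intro y
    rw [heat_succ_apply S hS]
    have h1 := ih y
    have h2 : 0 ≤ ∑ s ∈ S, heat S k (s⁻¹ * y) := Finset.sum_nonneg fun s _ => ih _
    positivity

lemma heat_support (hone : (1 : G) ∈ S) (k : ℕ) : ∀ y, y ∉ (S : Set G) ^ k → heat S k y = 0 := by
  classical
  induction k with
  | zero =>
    intro y hy
    rw [heat, lp.single_apply_ne]
    simpa using hy
  | succ k ih =>
    intro y hy
    have hk : ∀ s ∈ S, s⁻¹ * y ∉ (S : Set G) ^ k := by
      intro s hs h
      apply hy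
      rw [pow_succ']
      exact ⟨s, hs, s⁻¹ * y, h, by simp⟩
    have hz : ∑ s ∈ S, heat S k (s⁻¹ * y) = 0 := Finset.sum_eq_zero fun s hs => ih _ (hk s hs)
    rw [heat_succ_apply S ⟨1, hone⟩, ih y (by simpa using hk 1 hone), hz]
    simp

lemma heat_hasSum (hS : S.Nonempty) (k : ℕ) : HasSum (fun y => heat S k y) 1 := by
  classical
  have hn : (S.card : ℝ) ≠ 0 := by exact_mod_cast hS.card_ne_zero
  induction k with
  | zero =>
    have : (1 : ℝ) = heat S 0 1 := by simp [heat]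
    rw [this]
    refine hasSum_single 1 fun y hy => ?_
    rw [heat, lp.single_apply_ne _ _ _ hy]
  | succ k ih =>
    have h1 : HasSum (fun y => ∑ s ∈ S, heat S k (s⁻¹ * y)) (∑ s ∈ S, 1) :=
      hasSum_sum fun s _ => (Equiv.mulLeft s⁻¹).hasSum_iff.2 ih
    have h2 := (ih.mul_left (1 / 2)).add (h1.mul_left (1 / (2 * (S.card : ℝ))))
    have h3 : 1 / 2 * (1 : ℝ) + 1 / (2 * (S.card : ℝ)) * ∑ s ∈ S, 1 = 1 := by
      rw [Finset.sum_const, nsmul_eq_mul]; field_simp; norm_num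
    rw [h3] at h2
    rw [show (fun y => heat S (k + 1) y) = _ from funext fun y => heat_succ_apply S hS k y]
    exact h2

lemma exists_mem_pow_succ_not_mem [Infinite G] (hgen : Subgroup.closure (S : Set G) = ⊤)
    (hsymm : ∀ s ∈ S, s⁻¹ ∈ S) (hone : (1 : G) ∈ S) (k : ℕ) :
    ∃ z ∈ (S : Set G) ^ (k + 1), z ∉ (S : Set G) ^ k := by
  by_contra! hcon
  have h1 : ∀ j, (S : Set G) ^ j ⊆ (S : Set G) ^ k := by
    intro j
    induction j with
    | zero => exact Set.pow_subset_pow_right hone (Nat.zero_le _)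
    | succ j ih =>
      rw [pow_succ]
      refine (Set.mul_subset_mul_right ih).trans ?_
      rw [← pow_succ]
      exact hcon
  have h2 : (Set.univ : Set G).Finite := by
    refine (finite_set_pow S.finite_toSet k).subset fun x _ => ?_
    obtain ⟨j, hj⟩ := exists_subset_pow hgen hsymm hone (Set.finite_singleton x)
    exact h1 j (hj rfl)
  exact Set.infinite_univ h2

/-- Lower bound for the energy of the heat flow in terms of the growth function. -/
lemma heat_energy_lower [Infinite G] (hgen : Subgroup.closure (S : Set G) = ⊤)
    (hsymm : ∀ s ∈ S, s⁻¹ ∈ S) (hone : (1 : G) ∈ S) (k : ℕ) :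
    1 ≤ (((S : Set G) ^ k).ncard : ℝ) ^ 2 * (2 * k + 1) ^ 2 *
      (4 * S.card * inner ℝ (lapl S (regularRep G) (heat S k)) (heat S k)) := by
  classical
  have hS : S.Nonempty := ⟨1, hone⟩
  set ρ := regularRep G
  set g := heat S k with hg
  set e := 4 * (S.card : ℝ) * inner ℝ (lapl S ρ g) g with he
  have hE : e = ∑ s ∈ S, ‖g - ρ s g‖ ^ 2 := inner_lapl_self S hS ρ g
  have he0 : 0 ≤ e := by rw [hE]; exact Finset.sum_nonneg fun _ _ => by positivity
  have hm : ∀ s ∈ S, ‖g - ρ s g‖ ≤ √e := by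
    intro s hs
    apply Real.le_sqrt_of_sq_le
    rw [hE]
    exact Finset.single_le_sum (f := fun s => ‖g - ρ s g‖ ^ 2) (fun _ _ => by positivity) hs
  have hfin := finite_set_pow S.finite_toSet k
  set T : Finset G := hfin.toFinset with hT
  have hTc : ((S : Set G) ^ k).ncard = T.card := Set.ncard_eq_toFinset_card _ hfin
  have hsum : ∑ x ∈ T, g x = 1 := by
    refine (hasSum_sum_of_ne_finset_zero (s := T) fun x hx => ?_).unique (heat_hasSum S hS k)
    exact heat_support S hone k x (by simpa [hT] using hx)
  have hTne : T.Nonempty := by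
    rw [Finset.nonempty_iff_ne_empty]
    intro h
    rw [h] at hsum
    simp at hsum
  have hTpos : 0 < (T.card : ℝ) := by exact_mod_cast hTne.card_pos
  -- the flow has mass at least `1 / |S ^ k|` at some `x`, but none at a point `z` just outside the
  -- ball, so translating by `x * z⁻¹` changes it substantially
  obtain ⟨x, hx, hxg⟩ : ∃ x ∈ T, (1 / T.card : ℝ) ≤ g x := by
    by_contra! hcon
    have := Finset.sum_lt_sum_of_nonempty hTne hcon
    rw [hsum, Finset.sum_const, nsmul_eq_mul] at this
    field_simp at this
    exact lt_irrefl _ this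
  obtain ⟨z, hz, hzk⟩ := exists_mem_pow_succ_not_mem S hgen hsymm hone k
  have hzg : g z = 0 := heat_support S hone k z hzk
  have hxk : x ∈ (S : Set G) ^ k := by simpa [hT] using hx
  have hSinv : (S : Set G)⁻¹ = S := by
    ext x
    exact ⟨fun h => by simpa using hsymm _ h, fun h => hsymm _ h⟩
  have hu : x * z⁻¹ ∈ (S : Set G) ^ (2 * k + 1) := by
    have h1 : z⁻¹ ∈ (S : Set G) ^ (k + 1) := by
      rw [← hSinv, inv_pow]; simpa using hz
    have : 2 * k + 1 = k + (k + 1) := by ring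
    rw [this, pow_add]
    exact Set.mul_mem_mul hxk h1
  have h2 := norm_sub_rho_le S ρ hm (2 * k + 1) _ hu
  have h3 := lp.norm_apply_le_norm (by norm_num) (g - ρ (x * z⁻¹) g) x
  have h4 : (g - ρ (x * z⁻¹) g) x = g x := by
    rw [lp.coeFn_sub, Pi.sub_apply]
    have : (ρ (x * z⁻¹) g) x = g z := by
      rw [show (ρ (x * z⁻¹) g) x = g ((x * z⁻¹)⁻¹ * x) from rfl]
      group
    rw [this, hzg, sub_zero]
  rw [h4] at h3
  have h5 : 1 / (T.card : ℝ) ≤ (2 * k + 1) * √e := by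
    have := h3.trans h2
    push_cast at this
    exact hxg.trans ((le_abs_self _).trans this)
  rw [div_le_iff₀ hTpos] at h5
  rw [hTc]
  calc (1 : ℝ) = 1 ^ 2 := by norm_num
    _ ≤ ((2 * k + 1) * √e * T.card) ^ 2 := by gcongr
    _ = (T.card : ℝ) ^ 2 * (2 * k + 1) ^ 2 * e := by
      rw [mul_pow, mul_pow, Real.sq_sqrt he0]; ring

/-- Polynomial growth makes the Laplacian of the heat flow small compared to the energy at
some time. -/
lemma exists_heat_small [Infinite G] {d : ℕ} (hG : PolyGrowth d G)
    (hgen : Subgroup.closure (S : Set G) = ⊤)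
    (hsymm : ∀ s ∈ S, s⁻¹ ∈ S) (hone : (1 : G) ∈ S) {ε : ℝ} (hε : 0 < ε) (hε1 : ε < 1) :
    ∃ k, ‖lapl S (regularRep G) (heat S k)‖ ^ 2 <
      ε * inner ℝ (lapl S (regularRep G) (heat S k)) (heat S k) := by
  classical
  have hS : S.Nonempty := ⟨1, hone⟩
  by_contra! hcon
  set ρ := regularRep G
  -- otherwise the energy decays exponentially
  have hdec : ∀ k, inner ℝ (lapl S ρ (heat S k)) (heat S k) ≤ (1 - ε) ^ k := by
    intro k
    induction k with
    | zero =>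
      refine (inner_lapl_self_le S hS ρ _).trans ?_
      rw [heat, lp.norm_single (by norm_num)]
      simp
    | succ k ih =>
      have h1 := inner_lapl_step S hS hsymm ρ (heat S k)
      have h2 := hcon k
      have h3 : inner ℝ (lapl S ρ (heat S (k + 1))) (heat S (k + 1)) ≤
          (1 - ε) * inner ℝ (lapl S ρ (heat S k)) (heat S k) := by
        rw [heat]
        linarith
      rw [pow_succ']
      exact h3.trans (mul_le_mul_of_nonneg_left ih (by linarith))
  obtain ⟨C, hC⟩ := hG S S.finite_toSet
  have hlim := (tendsto_pow_const_mul_const_pow_of_abs_lt_one (2 * d + 2) (r := 1 - ε)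
    (by rw [abs_lt]; constructor <;> linarith)).const_mul ((C : ℝ) ^ 2 * 9 * (4 * S.card))
  rw [mul_zero] at hlim
  obtain ⟨k, hk, hk1⟩ := ((hlim.eventually (gt_mem_nhds (zero_lt_one))).and
    (Filter.eventually_ge_atTop 1)).exists
  have h1 := heat_energy_lower S hgen hsymm hone k
  have h2 : (((S : Set G) ^ k).ncard : ℝ) ≤ C * (k : ℝ) ^ d := by exact_mod_cast hC k hk1
  have h3 : (1 : ℝ) ≤ k := by exact_mod_cast hk1
  have h4 := inner_lapl_self_nonneg S hS ρ (heat S k)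
  have h5 : (((S : Set G) ^ k).ncard : ℝ) ^ 2 * (2 * k + 1) ^ 2 *
      (4 * S.card * inner ℝ (lapl S ρ (heat S k)) (heat S k)) ≤
      (C * (k : ℝ) ^ d) ^ 2 * (3 * k) ^ 2 * (4 * S.card * (1 - ε) ^ k) := by
    gcongr
    · linarith
    · exact hdec k
  have h6 : (C * (k : ℝ) ^ d) ^ 2 * (3 * k) ^ 2 * (4 * S.card * (1 - ε) ^ k) =
      (C : ℝ) ^ 2 * 9 * (4 * S.card) * ((k : ℝ) ^ (2 * d + 2) * (1 - ε) ^ k) := by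
    rw [pow_add, pow_mul']; ring
  linarith

/-- A nonconstant Lipschitz harmonic function on an infinite group of polynomial growth. -/
lemma exists_harmonic [Infinite G] {d : ℕ} (hG : PolyGrowth d G)
    (hgen : Subgroup.closure (S : Set G) = ⊤)
    (hsymm : ∀ s ∈ S, s⁻¹ ∈ S) (hone : (1 : G) ∈ S) :
    ∃ f : G → ℝ, f 1 = 0 ∧ (∃ x, f x ≠ 0) ∧ (∀ x, ∀ s ∈ S, |f (x * s) - f x| ≤ 1) ∧
      ∀ x, ∑ s ∈ S, (f (x * s) - f x) = 0 := by
  classical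
  have hS : S.Nonempty := ⟨1, hone⟩
  have hn : 0 < (S.card : ℝ) := by exact_mod_cast hS.card_pos
  have hn1 : 1 ≤ (S.card : ℝ) := by exact_mod_cast hS.card_pos
  have hstep : ∀ i : ℕ, ∃ u : G → ℝ, u 1 = 0 ∧ (∃ s ∈ S, u s = 1) ∧
      (∀ x, ∀ s ∈ S, |u (x * s) - u x| ≤ 1) ∧
      ∀ x, |∑ s ∈ S, (u (x * s) - u x)| ≤ 1 / ((i : ℝ) + 2) := by
    intro i
    have hi : (0 : ℝ) < 1 / ((i : ℝ) + 2) := by positivity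
    have hi1 : 1 / ((i : ℝ) + 2) < 1 := by
      rw [div_lt_one (by positivity)]; linarith [(Nat.cast_nonneg i : (0 : ℝ) ≤ i)]
    have hq : 1 / ((i : ℝ) + 2) / S.card < 1 := by
      rw [div_lt_one hn]; linarith
    obtain ⟨k, hk⟩ := exists_heat_small S hG hgen hsymm hone
      (ε := (1 / ((i : ℝ) + 2) / S.card) ^ 2) (by positivity)
      (by
        have : (0 : ℝ) < 1 / ((i : ℝ) + 2) / S.card := by positivity
        nlinarith)
    refine exists_almost_harmonic S hS (regularRep G) hi.le ?_ hk.le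
    by_contra! hle
    have h1 : (0 : ℝ) ≤ ‖lapl S (regularRep G) (heat S k)‖ ^ 2 := by positivity
    have h2 : (0 : ℝ) ≤ (1 / ((i : ℝ) + 2) / S.card) ^ 2 := by positivity
    nlinarith
  choose u hu1 hus hul huh using hstep
  have hbd : ∀ x : G, ∃ B : ℝ, ∀ i, u i x ∈ Set.Icc (-B) B := by
    intro x
    obtain ⟨k, hk⟩ := exists_subset_pow hgen hsymm hone (Set.finite_singleton x)
    have hmem : x ∈ (S : Set G) ^ k := hk rfl
    refine ⟨k, fun i => ?_⟩
    rw [Set.mem_Icc, ← abs_le]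
    clear hk
    induction k generalizing x with
    | zero =>
      have : x = 1 := by simpa using hmem
      simp [this, hu1]
    | succ k ih =>
      rw [pow_succ] at hmem
      obtain ⟨y, hy, s, hs, rfl⟩ := hmem
      have h1 := ih y hy
      have h2 := hul i y s hs
      have h3 := abs_add_le (u i (y * s) - u i y) (u i y)
      rw [sub_add_cancel] at h3
      push_cast
      linarith
  choose B hB using hbd
  -- a pointwise limit along an ultrafilter exists, as the values at each point are bounded
  obtain ⟨f, -, hf⟩ := (isCompact_univ_pi fun x =>
    isCompact_Icc (a := -B x) (b := B x)).ultrafilter_le_nhds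
    (Ultrafilter.map u (Filter.hyperfilter ℕ)) (by
      rw [Filter.le_principal_iff]
      exact Filter.mem_map.2 (Filter.univ_mem' fun i x _ => hB x i))
  have hlim : ∀ x, Filter.Tendsto (fun i => u i x) (Filter.hyperfilter ℕ : Filter ℕ) (nhds (f x)) :=
    tendsto_pi_nhds.1 hf
  have hf1 : f 1 = 0 := tendsto_nhds_unique (hlim 1) (by simp [hu1])
  refine ⟨f, hf1, ?_, ?_, ?_⟩
  · by_contra! h0
    have h1 : Filter.Tendsto (fun i => ∑ s ∈ S, |u i s|) (Filter.hyperfilter ℕ : Filter ℕ)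
        (nhds (∑ s ∈ S, |f s|)) := tendsto_finsetSum _ fun s _ => (hlim s).abs
    have h2 : (1 : ℝ) ≤ ∑ s ∈ S, |f s| := by
      refine ge_of_tendsto' h1 fun i => ?_
      obtain ⟨s, hs, hs1⟩ := hus i
      calc (1 : ℝ) = |u i s| := by rw [hs1, abs_one]
        _ ≤ _ := Finset.single_le_sum (f := fun s => |u i s|) (fun _ _ => abs_nonneg _) hs
    simp [h0] at h2
    norm_num at h2
  · intro x s hs
    exact le_of_tendsto' ((hlim (x * s)).sub (hlim x)).abs fun i => hul i x s hs
  · intro x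
    have h1 : Filter.Tendsto (fun i => ∑ s ∈ S, (u i (x * s) - u i x))
        (Filter.hyperfilter ℕ : Filter ℕ) (nhds (∑ s ∈ S, (f (x * s) - f x))) :=
      tendsto_finsetSum _ fun s _ => (hlim _).sub (hlim _)
    have h2 : Filter.Tendsto (fun i : ℕ => 1 / ((i : ℝ) + 2)) (Filter.hyperfilter ℕ : Filter ℕ)
        (nhds 0) := by
      have : Filter.Tendsto (fun i : ℕ => 1 / ((i : ℝ) + 2)) Filter.atTop (nhds 0) := by
        simp only [one_div]
        exact tendsto_inv_atTop_zero.comp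
          (Filter.tendsto_atTop_add_const_right _ _ tendsto_natCast_atTop_atTop)
      exact this.mono_left (Nat.cofinite_eq_atTop ▸ Filter.hyperfilter_le_cofinite)
    have h3 := le_of_tendsto_of_tendsto' h1.abs h2 fun i => huh i x
    exact abs_eq_zero.1 (le_antisymm h3 (abs_nonneg _))

end Heat

/-! ### A determinant inequality for nested quadratic forms -/

open scoped MatrixOrder in
lemma exists_eq_transpose_mul {n : ℕ} {P : Matrix (Fin n) (Fin n) ℝ} (hP : P.PosSemidef) :
    ∃ U : Matrix (Fin n) (Fin n) ℝ, P = U.transpose * U := by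
  obtain ⟨B, hB⟩ := CStarAlgebra.nonneg_iff_eq_star_mul_self.mp hP.nonneg
  exact ⟨B, hB⟩

open Matrix in
/-- If a positive semidefinite form `M` is bounded by the Euclidean form everywhere and by `δ`
times it on the kernel of `K` linear equations, then all but `K` of its eigenvalues are at most
`δ`, which bounds its determinant. -/
lemma det_le_of_le_on_ker_one {N K : ℕ} (M : Matrix (Fin N) (Fin N) ℝ) (hM : M.PosSemidef)
    (hle : ∀ v : Fin N → ℝ, v ⬝ᵥ (M *ᵥ v) ≤ v ⬝ᵥ v)
    {κ : Type*} [Fintype κ] (hκ : Fintype.card κ ≤ K)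
    (L : (Fin N → ℝ) →ₗ[ℝ] (κ → ℝ)) {δ : ℝ} (hδ0 : 0 ≤ δ) (hδ1 : δ ≤ 1)
    (hδ : ∀ v, L v = 0 → v ⬝ᵥ (M *ᵥ v) ≤ δ * (v ⬝ᵥ v)) :
    M.det ≤ δ ^ (N - K) := by
  classical
  have hH := hM.isHermitian
  set lam := hH.eigenvalues with hlam
  set U : Matrix (Fin N) (Fin N) ℝ := hH.eigenvectorUnitary.1 with hU
  have hUU : U.transpose * U = 1 := by
    have := Unitary.coe_star_mul_self hH.eigenvectorUnitary
    simpa [hU, Matrix.star_eq_conjTranspose] using this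
  have hMU : M = U * diagonal lam * U.transpose := by
    have := hH.spectral_theorem
    rw [Unitary.conjStarAlgAut_apply] at this
    simpa [hU, Matrix.star_eq_conjTranspose, Function.comp_def] using this
  have hnorm : ∀ c : Fin N → ℝ, (U *ᵥ c) ⬝ᵥ (U *ᵥ c) = ∑ i, c i ^ 2 := by
    intro c
    rw [dotProduct_mulVec, ← mulVec_transpose, mulVec_mulVec, hUU, one_mulVec]
    simp [dotProduct, pow_two]
  have hquad : ∀ c : Fin N → ℝ, (U *ᵥ c) ⬝ᵥ (M *ᵥ (U *ᵥ c)) = ∑ i, lam i * c i ^ 2 := by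
    intro c
    have h1 : M *ᵥ (U *ᵥ c) = U *ᵥ (diagonal lam *ᵥ c) := by
      rw [mulVec_mulVec, mulVec_mulVec, hMU, mul_assoc, mul_assoc, hUU, mul_one]
    rw [h1, dotProduct_mulVec, ← mulVec_transpose, mulVec_mulVec, hUU, one_mulVec]
    simp only [dotProduct, mulVec_diagonal]
    exact Finset.sum_congr rfl fun i _ => by ring
  have hlam0 : ∀ i, 0 ≤ lam i := fun i => hM.eigenvalues_nonneg i
  have hlam1 : ∀ i, lam i ≤ 1 := by
    intro i
    have := hle (U *ᵥ (Pi.single i 1))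
    rw [hnorm, hquad] at this
    simpa [Pi.single_apply, ite_pow] using this
  -- the eigenvectors with eigenvalue exceeding `δ` are few: otherwise the kernel meets their span
  have hcard : (Finset.univ.filter fun i => δ < lam i).card ≤ K := by
    by_contra! hcon
    set I := {i // δ < lam i}
    have hI : Fintype.card I = (Finset.univ.filter fun i => δ < lam i).card :=
      Fintype.card_subtype _
    let ext : (I → ℝ) →ₗ[ℝ] (Fin N → ℝ) := Function.ExtendByZero.linearMap ℝ Subtype.val
    have hext : ∀ (c : I → ℝ) (i : I), ext c i = c i := fun c i =>
      Subtype.val_injective.extend_apply _ _ _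
    have hext0 : ∀ (c : I → ℝ) (i : Fin N), ¬ δ < lam i → ext c i = 0 := fun c i hi =>
      Function.extend_apply' _ _ _ (by rintro ⟨a, rfl⟩; exact hi a.2)
    have hker : LinearMap.ker (L ∘ₗ U.mulVecLin ∘ₗ ext) ≠ ⊥ := by
      apply LinearMap.ker_ne_bot_of_finrank_lt
      simp only [Module.finrank_fintype_fun_eq_card]
      omega
    obtain ⟨c, hc, hc0⟩ := Submodule.exists_mem_ne_zero_of_ne_bot hker
    have h1 := hδ (U *ᵥ ext c) (by simpa using hc)
    rw [hnorm, hquad, Finset.mul_sum] at h1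
    obtain ⟨i, hi⟩ := Function.ne_iff.1 hc0
    refine absurd h1 (not_le.2 (Finset.sum_lt_sum (fun j _ => ?_) ⟨i.1, Finset.mem_univ _, ?_⟩))
    · by_cases hj : δ < lam j
      · gcongr
      · rw [hext0 c j hj]; simp
    · have : 0 < ext c i.1 ^ 2 := by rw [hext]; exact sq_pos_of_ne_zero hi
      exact mul_lt_mul_of_pos_right i.2 this
  have hdet : M.det = ∏ i, lam i := by simpa using hH.det_eq_prod_eigenvalues
  rw [hdet, ← Finset.prod_filter_mul_prod_filter_not Finset.univ (fun i => δ < lam i)]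
  have h1 : ∏ i with δ < lam i, lam i ≤ 1 :=
    Finset.prod_le_one (fun i _ => hlam0 i) fun i _ => hlam1 i
  have h2 : ∏ i with ¬ δ < lam i, lam i ≤ δ ^ (N - K) := by
    have h3 : ∏ i with ¬ δ < lam i, lam i ≤ ∏ i with ¬ δ < lam i, δ :=
      Finset.prod_le_prod (fun i _ => hlam0 i) fun i hi =>
        not_lt.1 (Finset.mem_filter.1 hi).2
    rw [Finset.prod_const] at h3
    refine h3.trans (pow_le_pow_of_le_one hδ0 hδ1 ?_)
    have h4 := Finset.card_filter_add_card_filter_not (s := Finset.univ) (fun i => δ < lam i)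
    rw [Finset.card_univ, Fintype.card_fin] at h4
    omega
  calc _ ≤ 1 * δ ^ (N - K) := by
        gcongr
        exact Finset.prod_nonneg fun i _ => hlam0 i
    _ = _ := one_mul _

open Matrix in
lemma det_le_of_le_on_ker {N K : ℕ} (M P : Matrix (Fin N) (Fin N) ℝ) (hM : M.PosSemidef)
    (hP : P.PosDef) (hle : ∀ v : Fin N → ℝ, v ⬝ᵥ (M *ᵥ v) ≤ v ⬝ᵥ (P *ᵥ v))
    {κ : Type*} [Fintype κ] (hκ : Fintype.card κ ≤ K)
    (L : (Fin N → ℝ) →ₗ[ℝ] (κ → ℝ)) {δ : ℝ} (hδ0 : 0 ≤ δ) (hδ1 : δ ≤ 1)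
    (hδ : ∀ v, L v = 0 → v ⬝ᵥ (M *ᵥ v) ≤ δ * (v ⬝ᵥ (P *ᵥ v))) :
    M.det ≤ δ ^ (N - K) * P.det := by
  obtain ⟨U, hU⟩ := exists_eq_transpose_mul hP.posSemidef
  have hPdet : P.det = U.det * U.det := by rw [hU, det_mul, det_transpose]
  have hU0 : IsUnit U.det := by
    rw [isUnit_iff_ne_zero]
    intro h
    have := hP.det_pos
    rw [hPdet, h] at this
    simp at this
  set W := U⁻¹ with hW
  have hUW : U * W = 1 := mul_nonsing_inv U hU0
  have hWdet : U.det * W.det = 1 := by rw [← det_mul, hUW, det_one]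
  have hquadP : ∀ v, (W *ᵥ v) ⬝ᵥ (P *ᵥ (W *ᵥ v)) = v ⬝ᵥ v := by
    intro v
    have : P *ᵥ (W *ᵥ v) = U.transpose *ᵥ v := by
      rw [hU, mulVec_mulVec, mul_assoc, hUW, mul_one]
    rw [this, dotProduct_mulVec, ← mulVec_transpose, transpose_transpose, mulVec_mulVec, hUW,
      one_mulVec]
  have hquadM : ∀ v, v ⬝ᵥ ((W.transpose * M * W) *ᵥ v) = (W *ᵥ v) ⬝ᵥ (M *ᵥ (W *ᵥ v)) := by
    intro v
    rw [← mulVec_mulVec, ← mulVec_mulVec, dotProduct_mulVec, ← mulVec_transpose,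
      transpose_transpose]
  have hM' : (W.transpose * M * W).PosSemidef := by
    simpa using hM.conjTranspose_mul_mul_same W
  have hmain := det_le_of_le_on_ker_one (W.transpose * M * W) hM'
    (fun v => by rw [hquadM, ← hquadP v]; exact hle _) hκ (L ∘ₗ W.mulVecLin) hδ0 hδ1
    (fun v hv => by rw [hquadM, ← hquadP v]; exact hδ _ (by simpa using hv))
  rw [det_mul, det_mul, det_transpose] at hmain
  have hPpos := hP.det_pos
  calc M.det = (W.det * M.det * W.det) * P.det := by
        rw [hPdet]
        linear_combination (-(1 + U.det * W.det) * M.det) * hWdet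
    _ ≤ _ := by gcongr

/-! ### Caccioppoli and Poincaré inequalities on balls -/

section Balls

variable {G : Type*} [Group G] (S : Finset G)

/-- The energy density `∑ₛ (f (y s) - f y)²` of `f` at `y`. -/
noncomputable def energy (f : G → ℝ) (y : G) : ℝ := ∑ s ∈ S, (f (y * s) - f y) ^ 2

lemma energy_nonneg (f : G → ℝ) (y : G) : 0 ≤ energy S f y :=
  Finset.sum_nonneg fun _ _ => sq_nonneg _

variable [DecidableEq G]

lemma sum_comp_le {α β : Type*} [DecidableEq β] {A : Finset α} {B : Finset β} (φ : α → β)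
    (hφ : Function.Injective φ) (hAB : ∀ a ∈ A, φ a ∈ B) {F : β → ℝ} (hF : ∀ b, 0 ≤ F b) :
    ∑ a ∈ A, F (φ a) ≤ ∑ b ∈ B, F b := by
  rw [← Finset.sum_image (f := F) fun a _ b _ h => hφ h]
  exact Finset.sum_le_sum_of_subset_of_nonneg (Finset.image_subset_iff.2 hAB) fun b _ _ => hF b

lemma mem_pow_add {a b : ℕ} {x y : G} (hx : x ∈ S ^ a) (hy : y ∈ S ^ b) : x * y ∈ S ^ (a + b) := by
  rw [pow_add]; exact Finset.mul_mem_mul hx hy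

lemma inv_mem_pow (hsymm : ∀ s ∈ S, s⁻¹ ∈ S) {a : ℕ} {x : G} (hx : x ∈ S ^ a) :
    x⁻¹ ∈ S ^ a := by
  have hS : S⁻¹ = S := by
    ext x
    rw [Finset.mem_inv']
    exact ⟨fun h => by simpa using hsymm _ h, fun h => hsymm _ h⟩
  rw [← hS, inv_pow]
  simpa using hx

/-- A cutoff function equal to `1` on the ball of radius `R`, vanishing outside the ball of radius
`2R` and with gradient at most `1 / R`. -/
lemma exists_cutoff (hsymm : ∀ s ∈ S, s⁻¹ ∈ S) (hone : (1 : G) ∈ S) {R : ℕ} (hR : 1 ≤ R) :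
    ∃ φ : G → ℝ, (∀ x ∈ S ^ R, φ x = 1) ∧ (∀ x, x ∉ S ^ (2 * R) → φ x = 0) ∧
      ∀ x, ∀ s ∈ S, (R : ℝ) ^ 2 * (φ (x * s) - φ x) ^ 2 ≤ 1 := by
  have hR0 : (R : ℝ) ≠ 0 := by positivity
  let c : G → ℕ := fun x => ((Finset.Ico R (2 * R)).filter fun k => x ∈ S ^ k).card
  have hc : ∀ x, ∀ s ∈ S, c x ≤ c (x * s) + 1 := by
    intro x s hs
    have h1 : ((Finset.Ico R (2 * R)).filter fun k => x ∈ S ^ k).image (· + 1) ⊆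
        insert (2 * R) ((Finset.Ico R (2 * R)).filter fun k => x * s ∈ S ^ k) := by
      intro k hk
      obtain ⟨j, hj, rfl⟩ := Finset.mem_image.1 hk
      rw [Finset.mem_filter, Finset.mem_Ico] at hj
      have h2 : x * s ∈ S ^ (j + 1) := mem_pow_add S hj.2 (by simpa using hs)
      rw [Finset.mem_insert, Finset.mem_filter, Finset.mem_Ico]
      by_cases h3 : j + 1 = 2 * R
      · exact Or.inl h3
      · exact Or.inr ⟨by omega, h2⟩
    have h2 := Finset.card_le_card h1
    rw [Finset.card_image_of_injective _ (add_left_injective 1)] at h2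
    exact h2.trans (Finset.card_insert_le _ _)
  refine ⟨fun x => c x / R, fun x hx => ?_, fun x hx => ?_, fun x s hs => ?_⟩
  · have h1 : c x = R := by
      have : (Finset.Ico R (2 * R)).filter (fun k => x ∈ S ^ k) = Finset.Ico R (2 * R) :=
        Finset.filter_true_of_mem fun k hk =>
          Finset.pow_subset_pow_right hone (Finset.mem_Ico.1 hk).1 hx
      simp only [c, this, Nat.card_Ico]
      omega
    simp only [h1]
    exact div_self hR0
  · have h1 : c x = 0 := by
      rw [Finset.card_eq_zero]
      refine Finset.filter_false_of_mem fun k hk h => hx ?_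
      exact Finset.pow_subset_pow_right hone (Finset.mem_Ico.1 hk).2.le h
    simp [h1]
  · have h1 : (c x : ℝ) ≤ c (x * s) + 1 := by exact_mod_cast hc x s hs
    have h2 : (c (x * s) : ℝ) ≤ c x + 1 := by
      have := hc (x * s) s⁻¹ (hsymm s hs)
      rw [mul_inv_cancel_right] at this
      exact_mod_cast this
    have h3 : (R : ℝ) ^ 2 * ((c (x * s) : ℝ) / R - c x / R) ^ 2 = ((c (x * s) : ℝ) - c x) ^ 2 := by
      field_simp
    rw [h3, sq_le_one_iff_abs_le_one, abs_le]
    constructor <;> linarith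

/-- The Caccioppoli inequality: the energy of a harmonic function on a ball is controlled by its
`ℓ²` norm on a larger one. -/
lemma caccioppoli (hsymm : ∀ s ∈ S, s⁻¹ ∈ S) (hone : (1 : G) ∈ S) {f : G → ℝ}
    (hf : ∀ x, ∑ s ∈ S, (f (x * s) - f x) = 0) {R : ℕ} (hR : 1 ≤ R) :
    (R : ℝ) ^ 2 * ∑ x ∈ S ^ R, energy S f x ≤ 8 * S.card * ∑ x ∈ S ^ (3 * R), f x ^ 2 := by
  obtain ⟨φ, hφ1, hφ0, hφ⟩ := exists_cutoff S hsymm hone hR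
  set B := S ^ (3 * R) with hB
  set T := (B ×ˢ S).filter fun p => p.1 * p.2 ∈ B with hT
  have hsym : ∀ F : G → G → ℝ, ∑ p ∈ T, F p.1 (p.1 * p.2) = ∑ p ∈ T, F (p.1 * p.2) p.1 := by
    intro F
    have hi : ∀ p ∈ T, (p.1 * p.2, p.2⁻¹) ∈ T := by
      intro p hp
      simp only [hT, Finset.mem_filter, Finset.mem_product] at hp ⊢
      exact ⟨⟨hp.2, hsymm _ hp.1.2⟩, by simpa using hp.1.1⟩
    exact Finset.sum_nbij' (fun p => (p.1 * p.2, p.2⁻¹)) (fun p => (p.1 * p.2, p.2⁻¹)) hi hi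
      (by simp) (by simp) (by simp)
  have hzero : ∑ p ∈ T, φ p.1 ^ 2 * f p.1 * (f (p.1 * p.2) - f p.1) = 0 := by
    have h1 : ∑ p ∈ T, φ p.1 ^ 2 * f p.1 * (f (p.1 * p.2) - f p.1) =
        ∑ p ∈ B ×ˢ S, φ p.1 ^ 2 * f p.1 * (f (p.1 * p.2) - f p.1) := by
      refine Finset.sum_subset (Finset.filter_subset _ _) fun p hp hpT => ?_
      have h2 : p.1 ∉ S ^ (2 * R) := by
        intro h
        apply hpT
        rw [hT, Finset.mem_filter]
        refine ⟨hp, ?_⟩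
        have h3 : p.1 * p.2 ∈ S ^ (2 * R + 1) :=
          mem_pow_add S h (by simpa using (Finset.mem_product.1 hp).2)
        exact Finset.pow_subset_pow_right hone (by omega) h3
      rw [hφ0 _ h2]
      simp
    rw [h1, Finset.sum_product]
    refine Finset.sum_eq_zero fun x _ => ?_
    simp only [← Finset.mul_sum, hf, mul_zero]
  have hzero' : ∑ p ∈ T, φ (p.1 * p.2) ^ 2 * f (p.1 * p.2) * (f p.1 - f (p.1 * p.2)) = 0 := by
    rw [← hsym fun x y => φ x ^ 2 * f x * (f y - f x)]
    exact hzero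
  have hpt : ∀ p ∈ T, (R : ℝ) ^ 2 * (φ p.1 ^ 2 * (f (p.1 * p.2) - f p.1) ^ 2) ≤
      4 * (f p.1 ^ 2 + f (p.1 * p.2) ^ 2) -
      4 * R ^ 2 * (φ p.1 ^ 2 * f p.1 * (f (p.1 * p.2) - f p.1) +
        φ (p.1 * p.2) ^ 2 * f (p.1 * p.2) * (f p.1 - f (p.1 * p.2))) := by
    intro p hp
    have hs := hφ p.1 p.2 (Finset.mem_product.1 (Finset.mem_filter.1 hp).1).2
    generalize f p.1 = a, f (p.1 * p.2) = b, φ p.1 = u, φ (p.1 * p.2) = v at *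
    have h1 : (u ^ 2 + v ^ 2) * (b - a) ^ 2 - 4 * (v - u) ^ 2 * (a ^ 2 + b ^ 2) ≤
        4 * ((b - a) * (v ^ 2 * b - u ^ 2 * a)) := by
      nlinarith [sq_nonneg ((v + u) * (b - a) + 2 * (v - u) * (a + b)),
        sq_nonneg ((v - u) * (b - a))]
    have h2 : (R : ℝ) ^ 2 * (u ^ 2 * (b - a) ^ 2) ≤ (R : ℝ) ^ 2 *
        (4 * (v - u) ^ 2 * (a ^ 2 + b ^ 2) + 4 * ((b - a) * (v ^ 2 * b - u ^ 2 * a))) := by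
      gcongr
      nlinarith [sq_nonneg (v * (b - a))]
    have h3 : (R : ℝ) ^ 2 * (v - u) ^ 2 * (a ^ 2 + b ^ 2) ≤ 1 * (a ^ 2 + b ^ 2) := by gcongr
    nlinarith
  have h1 : (R : ℝ) ^ 2 * ∑ x ∈ S ^ R, energy S f x ≤
      ∑ p ∈ T, (R : ℝ) ^ 2 * (φ p.1 ^ 2 * (f (p.1 * p.2) - f p.1) ^ 2) := by
    rw [← Finset.mul_sum]
    gcongr
    have h2 : ∑ x ∈ S ^ R, energy S f x =
        ∑ p ∈ (S ^ R) ×ˢ S, φ p.1 ^ 2 * (f (p.1 * p.2) - f p.1) ^ 2 := by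
      rw [Finset.sum_product]
      refine Finset.sum_congr rfl fun x hx => ?_
      rw [energy]
      simp [hφ1 x hx]
    rw [h2]
    refine Finset.sum_le_sum_of_subset_of_nonneg (fun p hp => ?_) fun _ _ _ => by positivity
    rw [Finset.mem_product] at hp
    rw [hT, Finset.mem_filter, Finset.mem_product]
    have h3 : p.1 * p.2 ∈ S ^ (R + 1) := mem_pow_add S hp.1 (by simpa using hp.2)
    exact ⟨⟨Finset.pow_subset_pow_right hone (by omega) hp.1, hp.2⟩,
      Finset.pow_subset_pow_right hone (by omega) h3⟩
  have h2 := Finset.sum_le_sum hpt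
  simp only [Finset.sum_sub_distrib, ← Finset.mul_sum, Finset.sum_add_distrib, hzero,
    hzero'] at h1 h2
  have h3 : ∑ p ∈ T, f (p.1 * p.2) ^ 2 = ∑ p ∈ T, f p.1 ^ 2 := hsym fun x y => f y ^ 2
  have h4 : ∑ p ∈ T, f p.1 ^ 2 ≤ S.card * ∑ x ∈ B, f x ^ 2 := by
    calc ∑ p ∈ T, f p.1 ^ 2 ≤ ∑ p ∈ B ×ˢ S, f p.1 ^ 2 :=
          Finset.sum_le_sum_of_subset_of_nonneg (Finset.filter_subset _ _) fun _ _ _ => sq_nonneg _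
      _ = _ := by
        rw [Finset.sum_product, Finset.mul_sum]
        simp
  rw [h3] at h2
  linarith

lemma sum_shift_le (hone : (1 : G) ∈ S) (f : G → ℝ) (r k : ℕ) : ∀ g ∈ S ^ k,
    ∑ y ∈ S ^ r, (f (y * g) - f y) ^ 2 ≤ (k : ℝ) ^ 2 * ∑ z ∈ S ^ (r + k), energy S f z := by
  induction k with
  | zero =>
    intro g hg
    have : g = 1 := by simpa using hg
    simp [this]
  | succ k ih =>
    intro g hg
    rw [pow_succ] at hg
    obtain ⟨g, hgk, s, hs, rfl⟩ := Finset.mem_mul.1 hg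
    set E := ∑ z ∈ S ^ (r + (k + 1)), energy S f z with hE
    have hE0 : 0 ≤ E := Finset.sum_nonneg fun _ _ => energy_nonneg S f _
    have hEmono : ∑ z ∈ S ^ (r + k), energy S f z ≤ E :=
      Finset.sum_le_sum_of_subset_of_nonneg (Finset.pow_subset_pow_right hone (by omega))
        fun _ _ _ => energy_nonneg S f _
    have h1 : ∑ y ∈ S ^ r, (f (y * g) - f y) ^ 2 ≤ (k : ℝ) ^ 2 * E :=
      (ih g hgk).trans (by gcongr)
    have h2 : ∑ y ∈ S ^ r, (f (y * g * s) - f (y * g)) ^ 2 ≤ E := by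
      refine le_trans ?_ hEmono
      refine le_trans (Finset.sum_le_sum fun y _ => ?_) (sum_comp_le (fun y => y * g)
        (mul_left_injective g) (fun y hy => mem_pow_add S hy hgk) (energy_nonneg S f))
      exact Finset.single_le_sum (f := fun s => (f (y * g * s) - f (y * g)) ^ 2)
        (fun _ _ => sq_nonneg _) hs
    rcases Nat.eq_zero_or_pos k with rfl | hk
    · have : g = 1 := by simpa using hgk
      subst this
      simpa using h2
    · have hk' : (0 : ℝ) < k := by exact_mod_cast hk
      have h3 : ∀ y, (k : ℝ) * (f (y * (g * s)) - f y) ^ 2 ≤ (k + 1) * (f (y * g) - f y) ^ 2 +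
          k * (k + 1) * (f (y * g * s) - f (y * g)) ^ 2 := by
        intro y
        rw [← mul_assoc]
        generalize f (y * g * s) = c, f (y * g) = b, f y = a
        nlinarith [sq_nonneg ((b - a) - k * (c - b))]
      have h4 := Finset.sum_le_sum fun y (_ : y ∈ S ^ r) => h3 y
      rw [← Finset.mul_sum, Finset.sum_add_distrib, ← Finset.mul_sum, ← Finset.mul_sum] at h4
      have h5 : (k : ℝ) * ∑ y ∈ S ^ r, (f (y * (g * s)) - f y) ^ 2 ≤
          k * ((k + 1) ^ 2 * E) := by
        refine h4.trans ?_
        calc _ ≤ ((k : ℝ) + 1) * ((k : ℝ) ^ 2 * E) + k * (k + 1) * E := by gcongr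
          _ = _ := by ring
      push_cast
      exact le_of_mul_le_mul_left h5 hk'

/-- A Poincaré inequality for functions of mean zero on a ball. -/
lemma poincare (hsymm : ∀ s ∈ S, s⁻¹ ∈ S) (hone : (1 : G) ∈ S) (f : G → ℝ) (m : ℕ)
    (h0 : ∑ y ∈ S ^ m, f y = 0) :
    ((S ^ m).card : ℝ) * ∑ y ∈ S ^ m, f y ^ 2 ≤
      2 * (S ^ (2 * m)).card * (m : ℝ) ^ 2 * ∑ z ∈ S ^ (3 * m), energy S f z := by
  have h1 : ∑ y ∈ S ^ m, ∑ z ∈ S ^ m, (f z - f y) ^ 2 =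
      2 * (((S ^ m).card : ℝ) * ∑ y ∈ S ^ m, f y ^ 2) := by
    have : ∀ y, ∑ z ∈ S ^ m, (f z - f y) ^ 2 =
        ∑ z ∈ S ^ m, f z ^ 2 + ((S ^ m).card : ℝ) * f y ^ 2 := by
      intro y
      have h2 : ∀ z, (f z - f y) ^ 2 = f z ^ 2 - (2 * f y) * f z + f y ^ 2 := fun z => by ring
      simp only [h2, Finset.sum_add_distrib, Finset.sum_sub_distrib, ← Finset.mul_sum, h0]
      simp
    simp only [this, Finset.sum_add_distrib, ← Finset.mul_sum]
    simp
    ring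
  have h2 : ∑ y ∈ S ^ m, ∑ z ∈ S ^ m, (f z - f y) ^ 2 ≤
      ∑ y ∈ S ^ m, ∑ g ∈ S ^ (2 * m), (f (y * g) - f y) ^ 2 := by
    refine Finset.sum_le_sum fun y hy => ?_
    have := sum_comp_le (A := S ^ m) (B := S ^ (2 * m)) (fun z => y⁻¹ * z)
      (mul_right_injective y⁻¹) (fun z hz => by
        rw [two_mul]; exact mem_pow_add S (inv_mem_pow S hsymm hy) hz)
      (F := fun g => (f (y * g) - f y) ^ 2) (fun _ => sq_nonneg _)
    simpa using this
  rw [Finset.sum_comm (s := S ^ m) (t := S ^ (2 * m))] at h2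
  have h3 : ∑ g ∈ S ^ (2 * m), ∑ y ∈ S ^ m, (f (y * g) - f y) ^ 2 ≤
      ∑ g ∈ S ^ (2 * m), ((2 * m : ℕ) : ℝ) ^ 2 * ∑ z ∈ S ^ (3 * m), energy S f z := by
    refine Finset.sum_le_sum fun g hg => ?_
    have := sum_shift_le S hone f m (2 * m) g hg
    rwa [show m + 2 * m = 3 * m by ring] at this
  rw [Finset.sum_const, nsmul_eq_mul] at h3
  push_cast at h3
  linarith

/-- A maximal separated set in a ball: its points are few, the balls around them cover and have
bounded overlap. -/
lemma exists_net (hsymm : ∀ s ∈ S, s⁻¹ ∈ S) (hone : (1 : G) ∈ S) (R r : ℕ) :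
    ∃ X : Finset G, X.card * (S ^ r).card ≤ (S ^ (R + r)).card ∧
      (∀ y ∈ S ^ R, ∃ x ∈ X, x⁻¹ * y ∈ S ^ (2 * r)) ∧
      ∀ z k, (X.filter fun x => x⁻¹ * z ∈ S ^ k).card * (S ^ r).card ≤ (S ^ (k + r)).card := by
  let sep : Finset G → Prop := fun X => ∀ x ∈ X, ∀ y ∈ X, x ≠ y → x⁻¹ * y ∉ S ^ (2 * r)
  obtain ⟨X, hX⟩ := ((S ^ R).powerset.filter sep).exists_maximal
    ⟨∅, by simp [sep]⟩
  have hXm := hX.prop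
  rw [Finset.mem_filter, Finset.mem_powerset] at hXm
  obtain ⟨hXR, hsep⟩ := hXm
  have hcount : ∀ Y ⊆ X, ∀ (h : G) (k : ℕ), (∀ x ∈ Y, h * x ∈ S ^ k) →
      Y.card * (S ^ r).card ≤ (S ^ (k + r)).card := by
    intro Y hY h k hk
    rw [← Finset.card_product]
    refine Finset.card_le_card_of_injOn (fun p => h * p.1 * p.2) (fun p hp => ?_) ?_
    · have := Finset.mem_product.1 hp
      exact mem_pow_add S (hk _ this.1) this.2
    · rintro ⟨x, u⟩ hp ⟨y, v⟩ hq hpq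
      have hp' := Finset.mem_product.1 hp
      have hq' := Finset.mem_product.1 hq
      simp only [mul_assoc, mul_right_inj] at hpq hp' hq'
      have hxy : x = y := by
        by_contra hne
        refine hsep x (hY hp'.1) y (hY hq'.1) hne ?_
        have : x⁻¹ * y = u * v⁻¹ := by
          rw [inv_mul_eq_iff_eq_mul, ← mul_assoc, hpq, mul_assoc, mul_inv_cancel, mul_one]
        rw [this, two_mul]
        exact mem_pow_add S hp'.2 (inv_mem_pow S hsymm hq'.2)
      subst hxy
      simpa using hpq
  refine ⟨X, hcount X subset_rfl 1 R fun x hx => by simpa using hXR hx, fun y hy => ?_,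
    fun z k => hcount _ (Finset.filter_subset _ _) z⁻¹ k fun x hx => ?_⟩
  · by_contra! hcon
    have h1 : (1 : G) ∈ S ^ (2 * r) :=
      Finset.pow_subset_pow_right hone (Nat.zero_le _) (by simp)
    have hyX : y ∉ X := fun h => hcon y h (by simpa using h1)
    have hmem : insert y X ∈ (S ^ R).powerset.filter sep := by
      rw [Finset.mem_filter, Finset.mem_powerset]
      refine ⟨Finset.insert_subset hy hXR, ?_⟩
      intro a ha b hb hab
      rcases Finset.mem_insert.1 ha with rfl | haX
      · rcases Finset.mem_insert.1 hb with rfl | hbX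
        · exact absurd rfl hab
        · intro h
          have := inv_mem_pow S hsymm h
          rw [mul_inv_rev, inv_inv] at this
          exact hcon b hbX this
      · rcases Finset.mem_insert.1 hb with rfl | hbX
        · exact hcon a haX
        · exact hsep a haX b hbX hab
    exact hyX (hX.le_of_ge hmem (Finset.subset_insert _ _) (Finset.mem_insert_self _ _))
  · have := inv_mem_pow S hsymm (Finset.mem_filter.1 hx).2
    rwa [mul_inv_rev, inv_inv] at this

/-- A harmonic function whose means over the `2r`-balls of a net vanish is small on the `R`-ball
relative to the `8R`-ball, by a factor of order `(r / R)²`. -/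
lemma harmonic_decay (hsymm : ∀ s ∈ S, s⁻¹ ∈ S) (hone : (1 : G) ∈ S) {f : G → ℝ}
    (hf : ∀ x, ∑ s ∈ S, (f (x * s) - f x) = 0) {R r : ℕ} (hr : 1 ≤ r) (hrR : 8 * r ≤ R)
    {D : ℝ} (hD : ((S ^ (8 * r)).card : ℝ) ≤ D * (S ^ r).card) {X : Finset G}
    (hcov : ∀ y ∈ S ^ R, ∃ x ∈ X, x⁻¹ * y ∈ S ^ (2 * r))
    (hover : ∀ z k, (X.filter fun x => x⁻¹ * z ∈ S ^ k).card * (S ^ r).card ≤ (S ^ (k + r)).card)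
    (hmean : ∀ x ∈ X, ∑ u ∈ S ^ (2 * r), f (x * u) = 0) :
    (R : ℝ) ^ 2 * ∑ y ∈ S ^ R, f y ^ 2 ≤
      16 * D ^ 2 * S.card * (r : ℝ) ^ 2 * ∑ y ∈ S ^ (8 * R), f y ^ 2 := by
  have hpos : ∀ k, 0 < ((S ^ k).card : ℝ) := fun k => by
    have h1 : (1 : G) ∈ S ^ k :=
      Finset.pow_subset_pow_right hone (Nat.zero_le _) (by simp)
    exact_mod_cast Finset.card_pos.2 ⟨1, h1⟩
  have hmono : ∀ {a b : ℕ}, a ≤ b → ((S ^ a).card : ℝ) ≤ (S ^ b).card := fun hab => by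
    exact_mod_cast Finset.card_le_card (Finset.pow_subset_pow_right hone hab)
  have hD0 : 0 ≤ D := by
    by_contra! h
    have h1 := mul_neg_of_neg_of_pos h (hpos r)
    linarith [hpos (8 * r)]
  set X' := X.filter fun x => x ∈ S ^ (R + 2 * r) with hX'
  have h1 : ∑ y ∈ S ^ R, f y ^ 2 ≤ ∑ x ∈ X', ∑ u ∈ S ^ (2 * r), f (x * u) ^ 2 := by
    calc ∑ y ∈ S ^ R, f y ^ 2
        ≤ ∑ y ∈ S ^ R, ∑ x ∈ X', if x⁻¹ * y ∈ S ^ (2 * r) then f y ^ 2 else 0 := by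
          refine Finset.sum_le_sum fun y hy => ?_
          obtain ⟨x, hx, hxy⟩ := hcov y hy
          have hxX : x ∈ X' := by
            rw [hX', Finset.mem_filter]
            refine ⟨hx, ?_⟩
            have := mem_pow_add S hy (inv_mem_pow S hsymm hxy)
            rwa [mul_inv_rev, inv_inv, mul_inv_cancel_left] at this
          calc f y ^ 2 = if x⁻¹ * y ∈ S ^ (2 * r) then f y ^ 2 else 0 := by rw [if_pos hxy]
            _ ≤ _ := Finset.single_le_sum
              (f := fun x => if x⁻¹ * y ∈ S ^ (2 * r) then f y ^ 2 else 0)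
              (fun x _ => by positivity) hxX
      _ = ∑ x ∈ X', ∑ y ∈ S ^ R, if x⁻¹ * y ∈ S ^ (2 * r) then f y ^ 2 else 0 :=
          Finset.sum_comm
      _ ≤ _ := by
          refine Finset.sum_le_sum fun x _ => ?_
          rw [← Finset.sum_filter]
          have := sum_comp_le (A := (S ^ R).filter fun y => x⁻¹ * y ∈ S ^ (2 * r))
            (B := S ^ (2 * r)) (fun y => x⁻¹ * y) (mul_right_injective x⁻¹)
            (fun y hy => (Finset.mem_filter.1 hy).2) (F := fun u => f (x * u) ^ 2)
            (fun _ => sq_nonneg _)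
          simpa using this
  have h2 : ∀ x ∈ X', ∑ u ∈ S ^ (2 * r), f (x * u) ^ 2 ≤
      8 * D * (r : ℝ) ^ 2 * ∑ u ∈ S ^ (6 * r), energy S f (x * u) := by
    intro x hx
    have h3 := poincare S hsymm hone (fun u => f (x * u)) (2 * r)
      (hmean x (Finset.mem_filter.1 hx).1)
    have h4 : ∀ u, energy S (fun u => f (x * u)) u = energy S f (x * u) := fun u => by
      simp [energy, mul_assoc]
    simp only [h4, show 2 * (2 * r) = 4 * r by ring, show 3 * (2 * r) = 6 * r by ring] at h3
    have hE : 0 ≤ ∑ u ∈ S ^ (6 * r), energy S f (x * u) :=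
      Finset.sum_nonneg fun _ _ => energy_nonneg S f _
    have h5 : ((S ^ (4 * r)).card : ℝ) ≤ D * (S ^ (2 * r)).card :=
      (hmono (by omega)).trans (hD.trans
        (mul_le_mul_of_nonneg_left (hmono (by omega)) hD0))
    refine le_of_mul_le_mul_left (h3.trans ?_) (hpos (2 * r))
    calc _ ≤ 2 * (D * (S ^ (2 * r)).card) * ((2 * r : ℕ) : ℝ) ^ 2 *
          ∑ u ∈ S ^ (6 * r), energy S f (x * u) := by gcongr
      _ = _ := by push_cast; ring
  have h3 : ∑ x ∈ X', ∑ u ∈ S ^ (6 * r), energy S f (x * u) ≤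
      D * ∑ z ∈ S ^ (2 * R), energy S f z := by
    calc ∑ x ∈ X', ∑ u ∈ S ^ (6 * r), energy S f (x * u)
        ≤ ∑ x ∈ X', ∑ z ∈ S ^ (2 * R), if x⁻¹ * z ∈ S ^ (6 * r) then energy S f z else 0 := by
          refine Finset.sum_le_sum fun x hx => ?_
          rw [← Finset.sum_filter]
          refine sum_comp_le (fun u => x * u) (mul_right_injective x) (fun u hu => ?_)
            (energy_nonneg S f)
          rw [Finset.mem_filter, inv_mul_cancel_left]
          refine ⟨Finset.pow_subset_pow_right hone (by omega)
            (mem_pow_add S (Finset.mem_filter.1 hx).2 hu), hu⟩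
      _ = ∑ z ∈ S ^ (2 * R), ∑ x ∈ X', if x⁻¹ * z ∈ S ^ (6 * r) then energy S f z else 0 :=
          Finset.sum_comm
      _ ≤ ∑ z ∈ S ^ (2 * R), D * energy S f z := by
          refine Finset.sum_le_sum fun z _ => ?_
          rw [← Finset.sum_filter, Finset.sum_const, nsmul_eq_mul]
          refine mul_le_mul_of_nonneg_right ?_ (energy_nonneg S f z)
          have h4 : ((X'.filter fun x => x⁻¹ * z ∈ S ^ (6 * r)).card : ℝ) ≤
              ((X.filter fun x => x⁻¹ * z ∈ S ^ (6 * r)).card : ℝ) := by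
            exact_mod_cast Finset.card_le_card
              (Finset.filter_subset_filter _ (Finset.filter_subset _ _))
          have h5 : ((X.filter fun x => x⁻¹ * z ∈ S ^ (6 * r)).card : ℝ) * (S ^ r).card ≤
              (S ^ (6 * r + r)).card := by exact_mod_cast hover z (6 * r)
          have h6 : ((X.filter fun x => x⁻¹ * z ∈ S ^ (6 * r)).card : ℝ) * (S ^ r).card ≤
              D * (S ^ r).card := h5.trans ((hmono (by omega)).trans hD)
          exact h4.trans (le_of_mul_le_mul_right h6 (hpos r))
      _ = _ := by rw [Finset.mul_sum]
  have h4 := caccioppoli S hsymm hone hf (R := 2 * R) (by omega)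
  have h5 : ∑ y ∈ S ^ (3 * (2 * R)), f y ^ 2 ≤ ∑ y ∈ S ^ (8 * R), f y ^ 2 :=
    Finset.sum_le_sum_of_subset_of_nonneg (Finset.pow_subset_pow_right hone (by omega))
      fun _ _ _ => sq_nonneg _
  set E := ∑ z ∈ S ^ (2 * R), energy S f z
  set Q := ∑ y ∈ S ^ (8 * R), f y ^ 2
  have h6 : ∑ y ∈ S ^ R, f y ^ 2 ≤ 8 * D * (r : ℝ) ^ 2 * (D * E) := by
    refine h1.trans ((Finset.sum_le_sum h2).trans ?_)
    rw [← Finset.mul_sum]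
    gcongr
  have h7 : (R : ℝ) ^ 2 * E ≤ 2 * S.card * Q := by
    have : (8 : ℝ) * S.card * ∑ y ∈ S ^ (3 * (2 * R)), f y ^ 2 ≤ 8 * S.card * Q := by gcongr
    push_cast at h4
    linarith
  calc (R : ℝ) ^ 2 * ∑ y ∈ S ^ R, f y ^ 2 ≤ (R : ℝ) ^ 2 * (8 * D * (r : ℝ) ^ 2 * (D * E)) := by
        gcongr
    _ = 8 * D ^ 2 * (r : ℝ) ^ 2 * ((R : ℝ) ^ 2 * E) := by ring
    _ ≤ 8 * D ^ 2 * (r : ℝ) ^ 2 * (2 * S.card * Q) := by gcongr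
    _ = _ := by ring

end Balls

/-! ### Finite dimensionality of spaces of harmonic functions of linear growth -/

/-- Selection of a scale after which both the volume `b` and the determinant `q` grow at most as
fast as predicted by the polynomial bound on their product. -/
lemma exists_scale {N E : ℕ} (hN : 1 ≤ N) (b q : ℕ → ℝ) (i₀ : ℕ) {C : ℝ}
    (hb : ∀ i, 0 < b i) (hbm : ∀ i j, b i ≤ b (i + j)) (hq : ∀ i, i₀ ≤ i → 0 < q i)
    (hqm : ∀ i, i₀ ≤ i → ∀ j, q i ≤ q (i + j))
    (hbd : ∀ i, b i ^ N * q i ≤ C * (8 ^ (E * i)) ^ N) :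
    ∃ i, i₀ ≤ i ∧ ∀ j, b (i + j) ≤ 8 ^ ((E + 1) * j) * b i ∧
      q (i + j) ≤ (8 ^ ((E + 1) * j)) ^ N * q i := by
  set h : ℕ → ℝ := fun i => b i ^ N * q i
  -- `u` tends to `0`, so it attains its maximum over `i ≥ i₀`, and any maximiser will do
  set u : ℕ → ℝ := fun i => h i / (8 ^ ((E + 1) * i)) ^ N with hu
  have hC : 0 ≤ C := by
    have h1 := hbd i₀
    have h2 : 0 < b i₀ ^ N * q i₀ := mul_pos (pow_pos (hb _) _) (hq _ le_rfl)
    by_contra! hneg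
    have : C * (8 ^ (E * i₀)) ^ N < 0 := mul_neg_of_neg_of_pos hneg (by positivity)
    linarith
  have hule : ∀ i, u i ≤ C * (1 / 8 : ℝ) ^ i := by
    intro i
    rw [hu]
    simp only
    rw [div_le_iff₀ (by positivity)]
    refine (hbd i).trans ?_
    have h1 : ((8 : ℝ) ^ ((E + 1) * i)) ^ N = (8 ^ (E * i)) ^ N * (8 ^ i) ^ N := by
      rw [← mul_pow, ← pow_add]; congr 2; ring
    have h2 : (8 : ℝ) ^ i ≤ (8 ^ i) ^ N := le_self_pow₀ (one_le_pow₀ (by norm_num)) (by omega)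
    have h3 : (1 / 8 : ℝ) ^ i * 8 ^ i = 1 := by rw [← mul_pow]; norm_num
    calc C * (8 ^ (E * i)) ^ N = C * (8 ^ (E * i)) ^ N * ((1 / 8 : ℝ) ^ i * 8 ^ i) := by
          rw [h3, mul_one]
      _ ≤ C * (8 ^ (E * i)) ^ N * ((1 / 8 : ℝ) ^ i * (8 ^ i) ^ N) := by gcongr
      _ = _ := by rw [h1]; ring
  have hu0 : 0 < u i₀ := div_pos (mul_pos (pow_pos (hb _) _) (hq _ le_rfl)) (by positivity)
  have hlim : Filter.Tendsto (fun i : ℕ => C * (1 / 8 : ℝ) ^ i) Filter.atTop (nhds 0) := by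
    have := (tendsto_pow_atTop_nhds_zero_of_lt_one (r := (1 / 8 : ℝ)) (by norm_num)
      (by norm_num)).const_mul C
    rwa [mul_zero] at this
  obtain ⟨n, hn⟩ := Filter.eventually_atTop.1 (hlim.eventually (gt_mem_nhds hu0))
  obtain ⟨i, hi, himax⟩ := Finset.exists_max_image (Finset.Icc i₀ (max n i₀)) u
    ⟨i₀, by simp⟩
  have hi0 : i₀ ≤ i := (Finset.mem_Icc.1 hi).1
  have hmax : ∀ j, u (i + j) ≤ u i := by
    intro j
    by_cases hj : i + j ≤ max n i₀
    · exact himax _ (Finset.mem_Icc.2 ⟨by omega, hj⟩)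
    · have h1 := hn (i + j) (by omega)
      exact ((hule _).trans h1.le).trans (himax i₀ (by simp))
  refine ⟨i, hi0, fun j => ?_⟩
  have hmain : b (i + j) ^ N * q (i + j) ≤ (8 ^ ((E + 1) * j)) ^ N * (b i ^ N * q i) := by
    have h1 := hmax j
    simp only [hu, h] at h1
    rw [div_le_div_iff₀ (by positivity) (by positivity), mul_add (E + 1), pow_add, mul_pow] at h1
    have h2 : (0 : ℝ) < (8 ^ ((E + 1) * i)) ^ N := by positivity
    refine le_of_mul_le_mul_right (h1.trans_eq ?_) h2
    ring
  have hqi := hq i hi0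
  have hbi := hb i
  constructor
  · have h1 : b (i + j) ^ N * q i ≤ (8 ^ ((E + 1) * j) * b i) ^ N * q i := by
      calc b (i + j) ^ N * q i ≤ b (i + j) ^ N * q (i + j) := by
            have := hb (i + j)
            gcongr
            exact hqm i hi0 j
        _ ≤ _ := hmain
        _ = _ := by ring
    exact le_of_pow_le_pow_left₀ (by omega) (by positivity) (le_of_mul_le_mul_right h1 hqi)
  · have h1 : b i ^ N * q (i + j) ≤ b i ^ N * ((8 ^ ((E + 1) * j)) ^ N * q i) := by
      calc b i ^ N * q (i + j) ≤ b (i + j) ^ N * q (i + j) := by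
            have := hq (i + j) (by omega)
            gcongr
            exact hbm i j
        _ ≤ _ := hmain
        _ = _ := by ring
    exact le_of_mul_le_mul_left h1 (by positivity)

section Gram

variable {G : Type*} [Group G] [DecidableEq G] (S : Finset G)

open Matrix

/-- The Gram matrix of a finite family of functions for the `ℓ²` form on the ball of radius `R`. -/
noncomputable def ballGram {N : ℕ} (f : Fin N → G → ℝ) (R : ℕ) : Matrix (Fin N) (Fin N) ℝ :=
  Matrix.of fun i j => ∑ y ∈ S ^ R, f i y * f j y

lemma ballGram_quad {N : ℕ} (f : Fin N → G → ℝ) (R : ℕ) (v : Fin N → ℝ) :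
    v ⬝ᵥ (ballGram S f R *ᵥ v) = ∑ y ∈ S ^ R, (∑ i, v i * f i y) ^ 2 := by
  have h1 : ∀ y, (∑ i, v i * f i y) ^ 2 = ∑ i, ∑ j, v i * ((f i y * f j y) * v j) := by
    intro y
    rw [pow_two, Finset.sum_mul_sum]
    exact Finset.sum_congr rfl fun i _ => Finset.sum_congr rfl fun j _ => by ring
  simp only [h1, dotProduct, mulVec, ballGram, of_apply, Finset.mul_sum, Finset.sum_mul]
  rw [Finset.sum_comm]
  conv_rhs => rw [Finset.sum_comm]
  rw [Finset.sum_comm]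
  refine Finset.sum_congr rfl fun i _ => ?_
  rw [Finset.sum_comm]

lemma ballGram_isHermitian {N : ℕ} (f : Fin N → G → ℝ) (R : ℕ) : (ballGram S f R).IsHermitian := by
  ext i j
  simp [ballGram, mul_comm]

lemma ballGram_posSemidef {N : ℕ} (f : Fin N → G → ℝ) (R : ℕ) : (ballGram S f R).PosSemidef := by
  refine .of_dotProduct_mulVec_nonneg (ballGram_isHermitian S f R) fun v => ?_
  rw [star_trivial, ballGram_quad]
  exact Finset.sum_nonneg fun _ _ => sq_nonneg _

lemma ballGram_le (hone : (1 : G) ∈ S) {N : ℕ} (f : Fin N → G → ℝ) {R R' : ℕ} (hR : R ≤ R')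
    (v : Fin N → ℝ) : v ⬝ᵥ (ballGram S f R *ᵥ v) ≤ v ⬝ᵥ (ballGram S f R' *ᵥ v) := by
  rw [ballGram_quad, ballGram_quad]
  exact Finset.sum_le_sum_of_subset_of_nonneg (Finset.pow_subset_pow_right hone hR)
    fun _ _ _ => sq_nonneg _

/-- The kernels of the Gram forms decrease to zero, hence vanish for large radii. -/
lemma exists_ballGram_posDef (hgen : Subgroup.closure (S : Set G) = ⊤)
    (hsymm : ∀ s ∈ S, s⁻¹ ∈ S) (hone : (1 : G) ∈ S) {N : ℕ} (f : Fin N → G → ℝ)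
    (hf : LinearIndependent ℝ f) : ∃ n, ∀ m, n ≤ m → (ballGram S f m).PosDef := by
  let ev : ℕ → Submodule ℝ (Fin N → ℝ) := fun R =>
    { carrier := {v | ∀ y ∈ S ^ R, ∑ i, v i * f i y = 0}
      add_mem' := fun {a b} ha hb y hy => by
        simp [add_mul, Finset.sum_add_distrib, ha y hy, hb y hy]
      zero_mem' := fun y _ => by simp
      smul_mem' := fun c a ha y hy => by
        simp [mul_assoc, ← Finset.mul_sum, ha y hy] }
  have hev : ∀ R v, v ∈ ev R ↔ ∀ y ∈ S ^ R, ∑ i, v i * f i y = 0 := fun R v => Iff.rfl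
  have hanti : ∀ a b, a ≤ b → ev b ≤ ev a := fun a b hab v hv y hy =>
    hv y (Finset.pow_subset_pow_right hone hab hy)
  obtain ⟨n, hn⟩ := IsArtinian.monotone_stabilizes
    (⟨fun R => OrderDual.toDual (ev R), fun a b hab => hanti a b hab⟩ :
      ℕ →o (Submodule ℝ (Fin N → ℝ))ᵒᵈ)
  have hn' : ∀ m, n ≤ m → ev n = ev m := fun m hm => hn m hm
  have hzero : ∀ v ∈ ev n, v = 0 := by
    intro v hv
    have hall : ∀ y, ∑ i, v i * f i y = 0 := by
      intro y
      obtain ⟨k, hk⟩ := exists_subset_pow hgen hsymm hone (Set.finite_singleton y)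
      have hy : y ∈ S ^ (max n k) := by
        refine Finset.pow_subset_pow_right hone (le_max_right n k) ?_
        have : y ∈ (S : Set G) ^ k := hk rfl
        rwa [← Finset.coe_pow] at this
      have hv' := hv
      rw [hn' _ (le_max_left n k)] at hv'
      exact hv' y hy
    have := Fintype.linearIndependent_iff.1 hf v (by
      ext y
      simpa using hall y)
    exact funext this
  refine ⟨n, fun m hm => .of_dotProduct_mulVec_pos (ballGram_isHermitian S f m) fun v hv => ?_⟩
  rw [star_trivial, ballGram_quad]
  refine lt_of_le_of_ne (Finset.sum_nonneg fun _ _ => sq_nonneg _) fun h => hv ?_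
  apply hzero
  rw [hn' m hm]
  intro y hy
  have := (Finset.sum_eq_zero_iff_of_nonneg fun y _ => sq_nonneg _).1 h.symm y hy
  exact pow_eq_zero_iff (two_ne_zero) |>.1 this

lemma ballGram_det_le {N : ℕ} (f : Fin N → G → ℝ) (R : ℕ) {A : ℝ}
    (hA : ∀ i, ∀ y ∈ S ^ R, |f i y| ≤ A) :
    (ballGram S f R).det ≤ N.factorial * ((S ^ R).card * A ^ 2) ^ N := by
  have h1 : ∀ i j, AbsoluteValue.abs (ballGram S f R i j) ≤ (S ^ R).card * A ^ 2 := by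
    intro i j
    rw [ballGram, of_apply, AbsoluteValue.abs_apply]
    refine (Finset.abs_sum_le_sum_abs _ _).trans ?_
    rw [← nsmul_eq_mul]
    refine Finset.sum_le_card_nsmul _ _ _ fun y hy => ?_
    rw [abs_mul, pow_two]
    exact mul_le_mul (hA i y hy) (hA j y hy) (abs_nonneg _) ((abs_nonneg _).trans (hA i y hy))
  have h2 := det_le h1
  rw [AbsoluteValue.abs_apply, Fintype.card_fin, nsmul_eq_mul] at h2
  exact (le_abs_self _).trans h2

/-- Kleiner's theorem: on a group of polynomial growth, spaces of harmonic functions of at most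
linear growth have bounded dimension. -/
lemma exists_dim_bound {d C : ℕ} (hgrowth : ∀ n, 1 ≤ n → (S ^ n).card ≤ C * n ^ d)
    (hgen : Subgroup.closure (S : Set G) = ⊤)
    (hsymm : ∀ s ∈ S, s⁻¹ ∈ S) (hone : (1 : G) ∈ S) :
    ∃ N : ℕ, ∀ f : Fin N → G → ℝ, LinearIndependent ℝ f →
      (∀ i x, ∑ s ∈ S, (f i (x * s) - f i x) = 0) →
      ¬ ∃ A : ℝ, ∀ i (R : ℕ), 1 ≤ R → ∀ y ∈ S ^ R, |f i y| ≤ A * R := by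
  set E := 2 * d + 2 with hE
  set D := E + 1 with hD
  -- `8 ^ D` bounds the growth of volume, and of the determinant per dimension, from the scale `8 ^ i`
  -- chosen below to the next one; `J` is the number of scales between the net and the balls on which
  -- the Gram forms are compared, large enough for a decay by `64 ^ (2 * D + 1)` per scale
  obtain ⟨J, hJ, hJ1⟩ : ∃ J : ℕ, (16 * (8 ^ D) ^ 2 * S.card * 64 ^ (2 * D + 1) : ℝ) ≤ 64 ^ J ∧
      1 ≤ J := by
    have := tendsto_pow_atTop_atTop_of_one_lt (r := (64 : ℝ)) (by norm_num)
    exact ((this.eventually_ge_atTop _).and (Filter.eventually_ge_atTop 1)).exists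
  -- a bound for the number of points of the net
  set K := 8 ^ (D * (2 * J)) with hK
  have hK1 : 1 ≤ K := Nat.one_le_pow _ _ (by norm_num)
  refine ⟨2 * K, fun f hli hharm => ?_⟩
  rintro ⟨A, hA⟩
  obtain ⟨i₀, hi₀⟩ := exists_ballGram_posDef S hgen hsymm hone f hli
  set b : ℕ → ℝ := fun i => ((S ^ (8 ^ i)).card : ℝ) with hbdef
  set q : ℕ → ℝ := fun i => (ballGram S f (8 ^ i)).det with hqdef
  have hmono : ∀ {a c : ℕ}, a ≤ c → ((S ^ a).card : ℝ) ≤ (S ^ c).card := fun hab => by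
    exact_mod_cast Finset.card_le_card (Finset.pow_subset_pow_right hone hab)
  have hpowle : ∀ i j : ℕ, 8 ^ i ≤ 8 ^ (i + j) := fun i j =>
    Nat.pow_le_pow_right (by norm_num) (by omega)
  have hPD : ∀ i, i₀ ≤ i → (ballGram S f (8 ^ i)).PosDef := fun i hi =>
    hi₀ _ (hi.trans (Nat.lt_pow_self (by norm_num)).le)
  have hbpos : ∀ i, 0 < b i := fun i => by
    have h1 : (1 : G) ∈ S ^ (8 ^ i) :=
      Finset.pow_subset_pow_right hone (Nat.zero_le _) (by simp)
    exact Nat.cast_pos.2 (Finset.card_pos.2 ⟨1, h1⟩)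
  have hqm : ∀ i, i₀ ≤ i → ∀ j, q i ≤ q (i + j) := by
    intro i hi j
    have := det_le_of_le_on_ker (K := 0) (ballGram S f (8 ^ i)) (ballGram S f (8 ^ (i + j)))
      (ballGram_posSemidef S f _) (hPD _ (by omega)) (ballGram_le S hone f (hpowle i j))
      (κ := Fin 0) (by simp) 0 zero_le_one le_rfl
      (fun v _ => by rw [one_mul]; exact ballGram_le S hone f (hpowle i j) v)
    simpa using this
  obtain ⟨i, hi, hij⟩ := exists_scale (N := 2 * K) (E := E) (by omega) b q i₀
    (C := (2 * K).factorial * ((C : ℝ) ^ 2 * A ^ 2) ^ (2 * K)) hbpos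
    (fun i j => hmono (hpowle i j)) (fun i hi => (hPD i hi).det_pos) hqm (by
      intro i
      have h1 : b i ≤ C * (8 ^ i) ^ d := by
        simp only [hbdef]
        exact_mod_cast hgrowth (8 ^ i) (Nat.one_le_pow _ _ (by norm_num))
      have h2 := ballGram_det_le S f (8 ^ i) (A := A * 8 ^ i) (fun j y hy => by
        exact_mod_cast hA j (8 ^ i) (Nat.one_le_pow _ _ (by norm_num)) y hy)
      have hb0 := (hbpos i).le
      calc b i ^ (2 * K) * q i
          ≤ b i ^ (2 * K) * ((2 * K).factorial * (b i * (A * 8 ^ i) ^ 2) ^ (2 * K)) := by gcongr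
        _ = (2 * K).factorial * (b i ^ 2 * (A * 8 ^ i) ^ 2) ^ (2 * K) := by ring
        _ ≤ (2 * K).factorial * ((C * (8 ^ i) ^ d) ^ 2 * (A * 8 ^ i) ^ 2) ^ (2 * K) := by gcongr
        _ = _ := by
          have : (8 : ℝ) ^ (E * i) = ((8 ^ i) ^ d) ^ 2 * (8 ^ i) ^ 2 := by
            rw [hE]; ring
          rw [this, mul_assoc, ← mul_pow]
          congr 2
          ring)
  obtain ⟨X, hXc, hcov, hover⟩ := exists_net S hsymm hone (8 ^ (i + (2 * J - 1))) (8 ^ i)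
  have hXK : X.card ≤ K := by
    have h1 : (X.card : ℝ) * b i ≤ K * b i := by
      calc (X.card : ℝ) * b i ≤ ((S ^ (8 ^ (i + (2 * J - 1)) + 8 ^ i)).card : ℝ) := by
            simp only [hbdef]
            exact_mod_cast hXc
        _ ≤ b (i + 2 * J) := hmono (by
            have h2 : 8 ^ (i + 2 * J) = 8 * 8 ^ (i + (2 * J - 1)) := by
              rw [← pow_succ']; congr 1; omega
            have := hpowle i (2 * J - 1)
            omega)
        _ ≤ _ := by
          rw [hK]
          push_cast
          exact (hij (2 * J)).1
    exact_mod_cast le_of_mul_le_mul_right h1 (hbpos i)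
  -- the means over the balls of the net
  let L : (Fin (2 * K) → ℝ) →ₗ[ℝ] (X → ℝ) :=
    { toFun := fun v x => ∑ u ∈ S ^ (2 * 8 ^ i), ∑ j, v j * f j (x * u)
      map_add' := fun v w => by
        ext x; simp [add_mul, Finset.sum_add_distrib]
      map_smul' := fun c v => by
        ext x; simp [mul_assoc, Finset.mul_sum] }
  set η : ℝ := 1 / 64 ^ (2 * D + 1) with hη
  have hη0 : 0 ≤ η := by positivity
  have hη1 : η ≤ 1 := by
    rw [hη, div_le_one (by positivity)]
    exact one_le_pow₀ (by norm_num)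
  have hdecay : ∀ v, L v = 0 → ∀ k ≤ J, v ⬝ᵥ (ballGram S f (8 ^ (i + J)) *ᵥ v) ≤
      η ^ k * (v ⬝ᵥ (ballGram S f (8 ^ (i + J + k)) *ᵥ v)) := by
    intro v hv k
    induction k with
    | zero => intro _; simp
    | succ k ih =>
      intro hk
      refine (ih (by omega)).trans ?_
      rw [pow_succ, mul_assoc]
      refine mul_le_mul_of_nonneg_left ?_ (by positivity)
      rw [ballGram_quad, ballGram_quad]
      set F : G → ℝ := fun y => ∑ j, v j * f j y with hF
      have hFh : ∀ x, ∑ s ∈ S, (F (x * s) - F x) = 0 := by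
        intro x
        simp only [hF, ← Finset.sum_sub_distrib, ← mul_sub]
        rw [Finset.sum_comm]
        simp [← Finset.mul_sum, hharm]
      have h1 := harmonic_decay S hsymm hone hFh (R := 8 ^ (i + J + k)) (r := 8 ^ i) (D := 8 ^ D)
        (Nat.one_le_pow _ _ (by norm_num))
        (by rw [← pow_succ']; exact Nat.pow_le_pow_right (by norm_num) (by omega))
        (by
          have := (hij 1).1
          rw [mul_one] at this
          rw [← pow_succ']
          exact this)
        (X := X)
        (fun y hy => hcov y (Finset.pow_subset_pow_right hone
          (Nat.pow_le_pow_right (by norm_num) (by omega)) hy)) hover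
        (fun x hx => congrFun hv ⟨x, hx⟩)
      rw [← pow_succ'] at h1
      set Q := ∑ y ∈ S ^ 8 ^ (i + J + k), F y ^ 2
      have hQ0 : 0 ≤ Q := Finset.sum_nonneg fun _ _ => sq_nonneg _
      set Q' := ∑ y ∈ S ^ 8 ^ (i + J + (k + 1)), F y ^ 2
      have hQ'0 : 0 ≤ Q' := Finset.sum_nonneg fun _ _ => sq_nonneg _
      have h1' : (((8 ^ (i + J + k) : ℕ) : ℝ)) ^ 2 * Q ≤
        16 * (8 ^ D) ^ 2 * S.card * ((8 ^ i : ℕ) : ℝ) ^ 2 * Q' := h1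
      have h2 : (((8 ^ (i + J + k) : ℕ) : ℝ)) ^ 2 = ((8 ^ i : ℕ) : ℝ) ^ 2 * (64 ^ J * 64 ^ k) := by
        have h64 : ∀ n : ℕ, (64 : ℝ) ^ n = (8 ^ n) ^ 2 := fun n => by
          rw [← pow_mul, mul_comm, pow_mul]; norm_num
        push_cast
        rw [pow_add, pow_add, h64, h64]
        ring
      have h3 : (64 : ℝ) ^ J * Q ≤ 16 * (8 ^ D) ^ 2 * S.card * Q' := by
        have h4 : (0 : ℝ) < ((8 ^ i : ℕ) : ℝ) ^ 2 := by positivity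
        have h5 : (1 : ℝ) ≤ 64 ^ k := one_le_pow₀ (by norm_num)
        have h6 : ((8 ^ i : ℕ) : ℝ) ^ 2 * (64 ^ J * 64 ^ k * Q) ≤
            ((8 ^ i : ℕ) : ℝ) ^ 2 * (16 * (8 ^ D) ^ 2 * S.card * Q') := by
          rw [h2] at h1'
          linarith
        have h7 := le_of_mul_le_mul_left h6 h4
        refine le_trans ?_ h7
        gcongr
        exact le_mul_of_one_le_right (by positivity) h5
      have h8 : 64 ^ (2 * D + 1) * (64 ^ J * Q) ≤ 64 ^ J * Q' := by
        calc (64 : ℝ) ^ (2 * D + 1) * (64 ^ J * Q)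
            ≤ 64 ^ (2 * D + 1) * (16 * (8 ^ D) ^ 2 * S.card * Q') := by gcongr
          _ = (16 * (8 ^ D) ^ 2 * S.card * 64 ^ (2 * D + 1)) * Q' := by ring
          _ ≤ _ := by gcongr
      rw [hη, div_mul_eq_mul_div, one_mul, le_div_iff₀ (by positivity)]
      have h9 : (0 : ℝ) < 64 ^ J := by positivity
      refine le_of_mul_le_mul_left ?_ h9
      linarith
  have hdet := det_le_of_le_on_ker (K := K) (ballGram S f (8 ^ (i + J))) (ballGram S f (8 ^ (i + 2 * J)))
    (ballGram_posSemidef S f _) (hPD _ (by omega))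
    (ballGram_le S hone f (Nat.pow_le_pow_right (by norm_num) (by omega)))
    (κ := X) (by simpa using hXK) L (δ := η ^ J) (by positivity) (pow_le_one₀ hη0 hη1)
    (fun v hv => by
      have := hdecay v hv J le_rfl
      rwa [show i + J + J = i + 2 * J by ring] at this)
  have hqi := (hPD i hi).det_pos
  -- the determinant increases too fast between the scales `i + J` and `i + 2 * J`
  have hfin : q i ≤ (η ^ J) ^ K * ((8 ^ (D * (2 * J))) ^ (2 * K) * q i) := by
    refine (hqm i hi J).trans (hdet.trans ?_)
    rw [show 2 * K - K = K by omega]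
    refine mul_le_mul_of_nonneg_left ?_ (by positivity)
    exact (hij (2 * J)).2
  have hlt : (η ^ J) ^ K * (8 ^ (D * (2 * J))) ^ (2 * K) < 1 := by
    have h1 : (η ^ J) ^ K * ((8 : ℝ) ^ (D * (2 * J))) ^ (2 * K) = (1 / 64) ^ (J * K) := by
      have h2 : ((8 : ℝ) ^ (D * (2 * J))) ^ (2 * K) = (64 ^ (2 * D)) ^ (J * K) := by
        rw [show (64 : ℝ) = 8 ^ 2 by norm_num, ← pow_mul, ← pow_mul, ← pow_mul]
        congr 1
        ring
      rw [h2, ← pow_mul, ← mul_pow, hη, pow_succ]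
      congr 1
      field_simp
    rw [h1]
    exact pow_lt_one₀ (by norm_num) (by norm_num) (by positivity)
  have : q i < q i := by
    calc q i ≤ (η ^ J) ^ K * (8 ^ (D * (2 * J))) ^ (2 * K) * q i := by linarith
      _ < 1 * q i := mul_lt_mul_of_pos_right hlt hqi
      _ = q i := one_mul _
  exact lt_irrefl _ this

end Gram

/-! ### The action on Lipschitz harmonic functions -/

section Action

variable {G : Type*} [Group G] (S : Finset G)

/-- The space of Lipschitz harmonic functions on `G` vanishing at the identity. -/
def harmonicSpace : Submodule ℝ (G → ℝ) where
  carrier := {f | f 1 = 0 ∧ (∃ l : ℝ, ∀ x, ∀ s ∈ S, |f (x * s) - f x| ≤ l) ∧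
    ∀ x, ∑ s ∈ S, (f (x * s) - f x) = 0}
  add_mem' := by
    rintro f g ⟨hf1, ⟨l, hl⟩, hf⟩ ⟨hg1, ⟨m, hm⟩, hg⟩
    refine ⟨by simp [hf1, hg1], ⟨l + m, fun x s hs => ?_⟩, fun x => ?_⟩
    · rw [Pi.add_apply, Pi.add_apply, add_sub_add_comm]
      exact (abs_add_le _ _).trans (add_le_add (hl x s hs) (hm x s hs))
    · simp only [Pi.add_apply, add_sub_add_comm]
      rw [Finset.sum_add_distrib, hf, hg, add_zero]
  zero_mem' := ⟨rfl, ⟨0, fun x s _ => by simp⟩, fun x => by simp⟩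
  smul_mem' := by
    rintro c f ⟨hf1, ⟨l, hl⟩, hf⟩
    refine ⟨by simp [hf1], ⟨|c| * l, fun x s hs => ?_⟩, fun x => ?_⟩
    · rw [Pi.smul_apply, Pi.smul_apply, ← smul_sub, smul_eq_mul, abs_mul]
      exact mul_le_mul_of_nonneg_left (hl x s hs) (abs_nonneg _)
    · simp only [Pi.smul_apply, ← smul_sub]
      rw [← Finset.smul_sum, hf, smul_zero]

variable {S}

lemma mem_harmonicSpace {f : G → ℝ} : f ∈ harmonicSpace S ↔ f 1 = 0 ∧
    (∃ l : ℝ, ∀ x, ∀ s ∈ S, |f (x * s) - f x| ≤ l) ∧ ∀ x, ∑ s ∈ S, (f (x * s) - f x) = 0 :=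
  Iff.rfl

lemma lipschitz_bound [DecidableEq G] {f : G → ℝ} (hf1 : f 1 = 0) {l : ℝ}
    (hl : ∀ x, ∀ s ∈ S, |f (x * s) - f x| ≤ l) (R : ℕ) : ∀ y ∈ S ^ R, |f y| ≤ l * R := by
  induction R with
  | zero =>
    intro y hy
    have : y = 1 := by simpa using hy
    simp [this, hf1]
  | succ k ih =>
    intro y hy
    rw [pow_succ] at hy
    obtain ⟨z, hz, s, hs, rfl⟩ := Finset.mem_mul.1 hy
    have h1 := ih z hz
    have h2 := hl z s hs
    have h3 := abs_add_le (f (z * s) - f z) (f z)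
    rw [sub_add_cancel] at h3
    push_cast
    linarith

lemma finiteDimensional_harmonicSpace {d : ℕ} (hG : PolyGrowth d G)
    (hgen : Subgroup.closure (S : Set G) = ⊤)
    (hsymm : ∀ s ∈ S, s⁻¹ ∈ S) (hone : (1 : G) ∈ S) :
    FiniteDimensional ℝ (harmonicSpace S) := by
  classical
  obtain ⟨C, hC⟩ := hG S S.finite_toSet
  obtain ⟨N, hN⟩ := exists_dim_bound S (d := d) (C := C) (fun n hn => by
    have := hC n hn
    rwa [← Finset.coe_pow, Set.ncard_coe_finset] at this) hgen hsymm hone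
  by_contra hcon
  have hrank : (N : Cardinal) ≤ Module.rank ℝ (harmonicSpace S) := by
    refine (Cardinal.natCast_lt_aleph0 (n := N)).le.trans ?_
    by_contra! h
    exact hcon (Module.rank_lt_aleph0_iff.1 h)
  obtain ⟨v, hv⟩ := Module.le_rank_iff.1 hrank
  choose l hl using fun i => (v i).2.2.1
  refine hN (fun i => (v i : G → ℝ)) ?_ (fun i => (v i).2.2.2) ⟨∑ i, l i, fun i R hR y hy => ?_⟩
  · exact hv.map' (harmonicSpace S).subtype (Submodule.ker_subtype _)
  · have hl0 : ∀ i, 0 ≤ l i := fun i => (abs_nonneg _).trans (hl i 1 1 hone)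
    refine (lipschitz_bound (v i).2.1 (hl i) R y hy).trans ?_
    gcongr
    exact Finset.single_le_sum (f := l) (fun i _ => hl0 i) (Finset.mem_univ i)

/-- The gradient `(x, s) ↦ f (x s) - f x` of a Lipschitz harmonic function. -/
noncomputable def gradMap (S : Finset G) :
    harmonicSpace S →ₗ[ℝ] lp (fun _ : G × S => ℝ) ⊤ where
  toFun f := ⟨fun p => f.1 (p.1 * p.2) - f.1 p.1, by
    obtain ⟨l, hl⟩ := f.2.2.1
    have h : Memℓp (fun p : G × S => f.1 (p.1 * p.2) - f.1 p.1) ⊤ := by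
      refine memℓp_infty ⟨l, ?_⟩
      rintro _ ⟨p, rfl⟩
      exact hl p.1 p.2 p.2.2
    exact h⟩
  map_add' f g := by
    ext p
    change (f.1 + g.1) _ - (f.1 + g.1) _ = (f.1 _ - f.1 _) + (g.1 _ - g.1 _)
    simp only [Pi.add_apply]
    ring
  map_smul' c f := by
    ext p
    change (c • f.1) _ - (c • f.1) _ = c * (f.1 _ - f.1 _)
    simp only [Pi.smul_apply, smul_eq_mul]
    ring

lemma gradMap_apply (f : harmonicSpace S) (p : G × S) :
    gradMap S f p = f.1 (p.1 * p.2) - f.1 p.1 := rfl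

lemma gradMap_injective (hgen : Subgroup.closure (S : Set G) = ⊤)
    (hsymm : ∀ s ∈ S, s⁻¹ ∈ S) (hone : (1 : G) ∈ S) : Function.Injective (gradMap S) := by
  classical
  refine (injective_iff_map_eq_zero _).2 fun f hf => ?_
  ext y
  obtain ⟨k, hk⟩ := exists_subset_pow hgen hsymm hone (Set.finite_singleton y)
  have hy : y ∈ (S : Set G) ^ k := hk rfl
  rw [← Finset.coe_pow] at hy
  have h1 := lipschitz_bound (S := S) (f := f.1) f.2.1 (l := 0) (fun x s hs => by
    rw [← gradMap_apply f (x, ⟨s, hs⟩), hf]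
    simp) k y hy
  simpa using h1

/-- The translation `x ↦ f (g⁻¹ x) - f g⁻¹` of a harmonic function, normalised to vanish at the
identity. -/
def harmonicTranslate (g : G) (f : harmonicSpace S) : harmonicSpace S :=
  ⟨fun x => f.1 (g⁻¹ * x) - f.1 g⁻¹, by
    obtain ⟨hf1, ⟨l, hl⟩, hf⟩ := f.2
    refine ⟨by simp, ⟨l, fun x s hs => ?_⟩, fun x => ?_⟩
    · rw [sub_sub_sub_cancel_right, ← mul_assoc]
      exact hl _ s hs
    · simp only [sub_sub_sub_cancel_right, ← mul_assoc]
      exact hf _⟩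

lemma harmonicTranslate_apply (g : G) (f : harmonicSpace S) (x : G) :
    (harmonicTranslate g f).1 x = f.1 (g⁻¹ * x) - f.1 g⁻¹ := rfl

lemma harmonicTranslate_mul (g h : G) (f : harmonicSpace S) :
    harmonicTranslate (g * h) f = harmonicTranslate g (harmonicTranslate h f) := by
  ext x
  simp only [harmonicTranslate_apply, mul_inv_rev, mul_assoc]
  ring

lemma harmonicTranslate_one (f : harmonicSpace S) : harmonicTranslate 1 f = f := by
  ext x
  simp [harmonicTranslate_apply, f.2.1]

lemma norm_gradMap_translate (g : G) (f : harmonicSpace S) :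
    ‖gradMap S (harmonicTranslate g f)‖ = ‖gradMap S f‖ := by
  rw [lp.norm_eq_ciSup, lp.norm_eq_ciSup]
  refine Equiv.iSup_congr ((Equiv.mulLeft g⁻¹).prodCongr (Equiv.refl S)) fun p => ?_
  rw [gradMap_apply, gradMap_apply]
  simp [harmonicTranslate_apply, mul_assoc]

/-- The maximum principle: a harmonic function with finite range vanishing at `1` is zero. -/
lemma eq_zero_of_finite_range (hgen : Subgroup.closure (S : Set G) = ⊤)
    (hsymm : ∀ s ∈ S, s⁻¹ ∈ S) (hone : (1 : G) ∈ S) {f : G → ℝ} (hf1 : f 1 = 0)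
    (hf : ∀ x, ∑ s ∈ S, (f (x * s) - f x) = 0) (hfin : (Set.range f).Finite) (x : G) :
    f x = 0 := by
  classical
  obtain ⟨_, ⟨x₀, rfl⟩, hx₀⟩ := Set.exists_max_image _ id hfin (Set.range_nonempty f)
  have hmax : ∀ y, f y ≤ f x₀ := fun y => hx₀ _ ⟨y, rfl⟩
  have hstep : ∀ y, f y = f x₀ → ∀ s ∈ S, f (y * s) = f x₀ := by
    intro y hy s hs
    have h1 := (Finset.sum_eq_zero_iff_of_nonpos fun s _ => by
      rw [hy]; exact sub_nonpos.2 (hmax _)).1 (hf y) s hs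
    linarith
  have hall : ∀ k, ∀ z ∈ S ^ k, f (x₀ * z) = f x₀ := by
    intro k
    induction k with
    | zero => intro z hz; have : z = 1 := by simpa using hz
              simp [this]
    | succ k ih =>
      intro z hz
      rw [pow_succ] at hz
      obtain ⟨w, hw, s, hs, rfl⟩ := Finset.mem_mul.1 hz
      rw [← mul_assoc]
      exact hstep _ (ih w hw) s hs
  have hconst : ∀ y, f y = f x₀ := by
    intro y
    obtain ⟨k, hk⟩ := exists_subset_pow hgen hsymm hone (Set.finite_singleton (x₀⁻¹ * y))
    have hy : x₀⁻¹ * y ∈ (S : Set G) ^ k := hk rfl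
    rw [← Finset.coe_pow] at hy
    simpa using hall k _ hy
  rw [hconst x, ← hconst 1, hf1]

end Action

lemma exists_symmetric_generators (G : Type*) [Group G] [Group.FG G] :
    ∃ S : Finset G, Subgroup.closure (S : Set G) = ⊤ ∧ (∀ s ∈ S, s⁻¹ ∈ S) ∧ (1 : G) ∈ S := by
  classical
  obtain ⟨T, hT⟩ := Group.fg_def.1 (inferInstance : Group.FG G)
  refine ⟨insert 1 (T ∪ T⁻¹), ?_, ?_, by simp⟩
  · rw [eq_top_iff, ← hT]
    exact Subgroup.closure_mono fun x hx => by simp [show x ∈ T from hx]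
  · intro s hs
    simp only [Finset.mem_insert, Finset.mem_union, Finset.mem_inv'] at hs ⊢
    rcases hs with rfl | h | h
    · simp
    · simp [h]
    · simp [h]

/-- An infinite finitely generated group of polynomial growth virtually surjects onto `ℤ`. -/
theorem PolyGrowth.exists_virtual_surjection (d : ℕ) (G : Type u) [Group G] [Group.FG G]
    [Infinite G] (hG : PolyGrowth d G) : ∃ H : Subgroup G, H.FiniteIndex ∧
      ∃ φ : H →* Multiplicative ℤ, Function.Surjective φ := by
  classical
  obtain ⟨S, hgen, hsymm, hone⟩ := exists_symmetric_generators G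
  have hfd := finiteDimensional_harmonicSpace hG hgen hsymm hone
  let inst1 : NormedAddCommGroup (harmonicSpace S) :=
    NormedAddCommGroup.induced _ _ (gradMap S) (gradMap_injective hgen hsymm hone)
  let inst2 : NormedSpace ℝ (harmonicSpace S) := NormedSpace.induced ℝ _ _ (gradMap S)
  let ρ : G →* (harmonicSpace S ≃ₗᵢ[ℝ] harmonicSpace S) :=
    { toFun := fun g =>
        { toFun := harmonicTranslate g
          invFun := harmonicTranslate g⁻¹
          map_add' := fun f h => by
            ext x
            simp [harmonicTranslate_apply]
            ring
          map_smul' := fun c f => by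
            ext x
            simp [harmonicTranslate_apply]
            ring
          left_inv := fun f => by
            rw [← harmonicTranslate_mul, inv_mul_cancel, harmonicTranslate_one]
          right_inv := fun f => by
            rw [← harmonicTranslate_mul, mul_inv_cancel, harmonicTranslate_one]
          norm_map' := norm_gradMap_translate g }
      map_one' := by
        ext f : 1
        exact harmonicTranslate_one f
      map_mul' := fun g h => by
        ext f : 1
        exact harmonicTranslate_mul g h f }
  have hρ : ∀ g f, ρ g f = harmonicTranslate g f := fun _ _ => rfl
  rcases finite_or_infinite ρ.range with hfin | hinf
  -- on the kernel of the action a harmonic function is additive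
  · obtain ⟨f, hf1, ⟨x, hx⟩, hfl, hfh⟩ := exists_harmonic S hG hgen hsymm hone
    have hadd : ∀ h ∈ ρ.ker, ∀ x, f (h * x) = f h + f x := by
      intro h hh x
      have h1 : ρ h⁻¹ ⟨f, hf1, ⟨1, hfl⟩, hfh⟩ = ⟨f, hf1, ⟨1, hfl⟩, hfh⟩ := by
        rw [MonoidHom.mem_ker.1 (inv_mem hh)]
        rfl
      have h2 := congrFun (congrArg Subtype.val h1) x
      rw [hρ, harmonicTranslate_apply, inv_inv] at h2
      simp only at h2
      linarith
    let φ : ρ.ker →* Multiplicative ℝ :=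
      { toFun := fun h => Multiplicative.ofAdd (f h)
        map_one' := by simp [hf1]
        map_mul' := fun a b => by
          rw [← ofAdd_add, Subgroup.coe_mul, hadd _ a.2] }
    refine ⟨ρ.ker, inferInstance, exists_surjective_of_real_hom φ fun hφ => hx ?_⟩
    have h0 : ∀ h ∈ ρ.ker, f h = 0 := fun h hh => by
      have : φ ⟨h, hh⟩ = 1 := by rw [hφ]; rfl
      exact this
    -- a function invariant under the finite-index subgroup `ρ.ker` has finite range
    refine eq_zero_of_finite_range hgen hsymm hone hf1 hfh ?_ x
    refine (Set.finite_range fun q : G ⧸ ρ.ker => f (q.out)⁻¹).subset ?_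
    rintro _ ⟨y, rfl⟩
    refine ⟨((y⁻¹ : G) : G ⧸ ρ.ker), ?_⟩
    obtain ⟨h, hh⟩ := QuotientGroup.mk_out_eq_mul ρ.ker y⁻¹
    simp only
    rw [hh, mul_inv_rev, inv_inv, hadd _ (inv_mem h.2), h0 _ (inv_mem h.2), zero_add]
  · exact hG.exists_surjective_of_isometric ρ hinf

/-- Gromov's polynomial growth theorem: let `G` be a group generated by a finite symmetric
set `S` containing the identity. If the growth function is polynomially bounded, i.e. there
are constants `C > 0` and `d` with `|S^n| ≤ C * n^d` for all `n ≥ 1`, then `G` has a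
nilpotent subgroup of finite index. -/
theorem gromov_polynomial_growth
    (G : Type u) [Group G] [DecidableEq G] (S : Finset G)
    (hgen : Subgroup.closure (S : Set G) = ⊤)
    (hsymm : ∀ s ∈ S, s⁻¹ ∈ S) (hone : (1 : G) ∈ S)
    (C : ℝ) (hC : 0 < C) (d : ℕ)
    (hgrowth : ∀ n : ℕ, 1 ≤ n → ((S ^ n).card : ℝ) ≤ C * (n : ℝ) ^ d) :
    ∃ H : Subgroup G, H.FiniteIndex ∧ Group.IsNilpotent H := by
  have hfg : Group.FG G := Group.fg_def.2 ⟨S, hgen⟩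
  have hG : PolyGrowth d G := polyGrowth_of_generators S.finite_toSet hgen hsymm hone C d
    fun n hn => by
      rw [← Finset.coe_pow, Set.ncard_coe_finset]
      exact hgrowth n hn
  exact virtually_nilpotent_of_centralizer
    (fun e => exists_centralizer_of_virtual_surjection PolyGrowth.exists_virtual_surjection e)
    d G hG
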